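/- arXiv:1011.5479 — 2 statements merged into one kernel-verified Lean document; each statement's English description precedes it below -/
import Mathlib

section
/- Let (λ_j)_{j≥1} and (μ_m)_{m≥1} be sequences of positive real numbers with λ_1 > μ_1 > λ_2 > μ_2 > … > 0 and Σ_{j≥1} λ_j² < ∞. Then the set of all c ∈ h^{1/2} such that the positive singular values of Γ_c are exactly the λ_j, j ≥ 1, each simple, and the positive singular values of Γ̃_c are exactly the μ_m, m ≥ 1, each simple, endowed with the topology induced by the h^{1/2} norm, is homeomorphic to the infinite-dimensional torus 𝕋^ℕ endowed with the product topology, where 𝕋 := ℝ/2πℤ. -/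
open scoped InnerProductSpace ComplexConjugate ENNReal

noncomputable section

/-- The Hilbert space `ℓ²(ℕ, ℂ)`. -/
abbrev L2 : Type := lp (fun _ : ℕ => ℂ) 2

/-- Membership in the space `h^{1/2}`: `c ∈ ℓ²` and `Σ n |c_n|² < ∞`. -/
def InH12 (c : ℕ → ℂ) : Prop :=
  Memℓp c 2 ∧ Summable (fun n : ℕ => (n : ℝ) * ‖c n‖ ^ 2)

/-- `Γ` is the Hankel operator of symbol `c`: `(Γ x)_n = Σ_p c_{n+p} x_p`. -/
def IsHankelOp (c : ℕ → ℂ) (Γ : L2 →L[ℂ] L2) : Prop :=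
  ∀ x : L2, ∀ n : ℕ, (Γ x : ℕ → ℂ) n = ∑' p : ℕ, c (n + p) * (x : ℕ → ℂ) p

/-- The shifted sequence `c̃ : n ↦ c_{n+1}`. -/
def shiftSeq (c : ℕ → ℂ) : ℕ → ℂ := fun n => c (n + 1)

/-- The operator `Γ Γ*`. -/
def opT (Γ : L2 →L[ℂ] L2) : L2 →L[ℂ] L2 :=
  Γ ∘L ContinuousLinearMap.adjoint Γ

/-- `e₀ = (1,0,0,…) ∈ ℓ²`. -/
def e0 : L2 := lp.single 2 0 1

/-- Generic min–max value `a_j` (for `j ≥ 1`) of a bounded operator `T` on a Hilbert space: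
the infimum over subspaces `F` of dimension at most `j-1` of the supremum of `Re ⟨T h, h⟩`
over unit vectors `h` orthogonal to `F`. -/
def minmaxVal {H : Type*} [NormedAddCommGroup H] [InnerProductSpace ℂ H]
    (T : H →L[ℂ] H) (j : ℕ) : ℝ :=
  ⨅ F : {F : Submodule ℂ H // Module.finrank ℂ F ≤ j - 1},
    ⨆ h : {h : H // ‖h‖ = 1 ∧ ∀ y ∈ F.1, ⟪y, h⟫_ℂ = 0},
      (⟪T h.1, h.1⟫_ℂ).re

/-- `λ_j(Γ)²` (for `j ≥ 1`): the `j`-th min–max value of `Γ Γ*`. -/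
def svalSq (Γ : L2 →L[ℂ] L2) (j : ℕ) : ℝ := minmaxVal (opT Γ) j

lemma summable_sq_of_memℓp {f : ℕ → ℂ} (hf : Memℓp f 2) :
    Summable fun n : ℕ => ‖f n‖ ^ 2 := by
  have h := hf.summable (p := 2) (by norm_num)
  have h2 : ((2 : ℝ≥0∞).toReal) = ((2 : ℕ) : ℝ) := by norm_num
  rw [h2] at h
  simpa [Real.rpow_natCast] using h

/-- The weighted sequence `n ↦ √(1+n) · c_n`, whose `ℓ²` norm is the `h^{1/2}` norm of `c`. -/
def wSeq (c : ℕ → ℂ) : ℕ → ℂ := fun n => (Real.sqrt (1 + (n : ℝ)) : ℂ) * c n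

lemma memℓp_wSeq {c : ℕ → ℂ} (hc : InH12 c) : Memℓp (wSeq c) 2 := by
  apply memℓp_gen
  have h2 : ((2 : ℝ≥0∞).toReal) = ((2 : ℕ) : ℝ) := by norm_num
  rw [h2]
  have hs : Summable fun n : ℕ => (1 + (n : ℝ)) * ‖c n‖ ^ 2 := by
    have := (summable_sq_of_memℓp hc.1).add hc.2
    convert this using 2 with n
    ring
  have key : ∀ n : ℕ, ‖wSeq c n‖ ^ ((2 : ℕ) : ℝ) = (1 + (n : ℝ)) * ‖c n‖ ^ 2 := by
    intro n
    rw [Real.rpow_natCast]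
    have h1 : (0 : ℝ) ≤ 1 + (n : ℝ) := by positivity
    simp only [wSeq, norm_mul, Complex.norm_real, Real.norm_eq_abs,
      abs_of_nonneg (Real.sqrt_nonneg _)]
    rw [mul_pow, Real.sq_sqrt h1]
  exact (summable_congr fun n => key n).mpr hs

/-- The space `h^{1/2}` as a type. -/
def H12 : Type := {c : ℕ → ℂ // InH12 c}

/-- The isometric embedding of `h^{1/2}` into `ℓ²` given by `c ↦ (√(1+n) c_n)_n`;
the `h^{1/2}` norm of `c` is the `ℓ²` norm of its image. -/
def H12.toL2 (c : H12) : L2 := ⟨wSeq c.1, memℓp_wSeq c.2⟩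

lemma H12.toL2_injective : Function.Injective H12.toL2 := by
  intro c d h
  apply Subtype.ext
  funext n
  have h' : wSeq c.1 n = wSeq d.1 n := congrFun (congrArg Subtype.val h) n
  have hs : (Real.sqrt (1 + (n : ℝ)) : ℂ) ≠ 0 := by
    simp only [ne_eq, Complex.ofReal_eq_zero]
    positivity
  exact mul_left_cancel₀ hs h'

/-- The metric (hence the topology) on `h^{1/2}` induced by the `h^{1/2}` norm
`(Σ (1+n)|c_n|²)^{1/2}`, obtained from the isometric embedding into `ℓ²`. -/
instance : MetricSpace H12 := MetricSpace.induced H12.toL2 H12.toL2_injective inferInstance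

/-- The positive singular values of `Γ` are exactly the `λ_j`, `j ≥ 1` (indexed here from `0`),
each simple: equivalently, the positive eigenvalues of `Γ Γ*` are exactly the `λ_j²`, each
with a one-dimensional eigenspace. -/
def HasSimpleSValsSeq (Γ : L2 →L[ℂ] L2) (lam : ℕ → ℝ) : Prop :=
  {z : ℂ | z ≠ 0 ∧ Module.End.HasEigenvalue (opT Γ).toLinearMap z}
    = Set.range (fun j : ℕ => ((lam j : ℂ)) ^ 2) ∧
  ∀ j : ℕ,
    Module.finrank ℂ (Module.End.eigenspace (opT Γ).toLinearMap ((lam j : ℂ) ^ 2)) = 1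

/-!
Write `u = Γ e₀`. Since the entries of a Hankel operator are constant along antidiagonals,
`Γ Γ⋆ - Γ̃ Γ̃⋆ = u ⊗ u`, so both spectra determine the traces of all powers of `Γ Γ⋆` and `Γ̃ Γ̃⋆`;
these recursively determine the moments `⟪u, (Γ Γ⋆)ᵏ u⟫`, hence the moduli of the coefficients of
`u` in the eigenbasis of `Γ Γ⋆`. They are the entries of `D v`, where `D = diag (λ_j)` and the
vector `v` is given by a partial fraction decomposition attached to the interlacing sequences, for
which `D (1 - v ⊗ v) D` has the eigenvalues `μ_m ^ 2`, with a real matrix `F` of eigenvectors.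

As `Γ` and `Γ̃` are complex symmetric, there remain only phases `p`, `q` and an isometry `W` with
`Γ = W diag (λ_j p_j) Wᵀ`, `Γ̃ = W (F diag (μ_m q_m) Fᵀ) Wᵀ` and `W (D v) = u`. The shift then
becomes a contraction `A` with `F diag (μ_m q_m) Fᵀ = A diag (λ_j p_j)` and `1 - A⋆ A = w ⊗ w` for
the vector `w = (p_j v_j)_j`, and `c_n = ⟪w, Aⁿ D v⟫` is determined by the phases.

Conversely, for arbitrary phases `A` is a contraction with `Aⁿ → 0` strongly, so that
`W x = (⟪w, Aⁿ x⟫)_n` is an isometry and the formula for `c_n` defines a Hankel operator with the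
prescribed spectra. Its Hilbert–Schmidt norm, the `h^{1/2}` norm of `c`, does not depend on the
phases; so continuity of each `c_n` in the phases gives continuity into `h^{1/2}`, and compactness
of the torus upgrades the continuous bijection to a homeomorphism.
-/

open Filter InnerProductSpace
open scoped Topology

/-! ### Operators on `ℓ²` -/

/-- Bounded operators on `ℓ²(ℕ, ℂ)`. -/
abbrev Op : Type := L2 →L[ℂ] L2

/-- Bounded sequences, the symbols of diagonal operators. -/
abbrev LInf : Type := lp (fun _ : ℕ => ℂ) ∞

/-- The `n`-th vector of the canonical basis of `ℓ²`. -/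
def basisVec (n : ℕ) : L2 := lp.single 2 n 1

lemma basisVec_apply (n m : ℕ) : basisVec n m = if m = n then 1 else 0 := by
  rcases eq_or_ne m n with rfl | h <;> simp [basisVec, *]

lemma inner_basisVec_left (n : ℕ) (x : L2) : ⟪basisVec n, x⟫_ℂ = x n := by
  simp [basisVec, lp.inner_single_left]

lemma inner_basisVec_right (n : ℕ) (x : L2) : ⟪x, basisVec n⟫_ℂ = conj (x n) := by
  rw [← inner_conj_symm, inner_basisVec_left]

lemma norm_basisVec (n : ℕ) : ‖basisVec n‖ = 1 := by
  simp [basisVec, lp.norm_single]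

lemma basisVec_ne_zero (n : ℕ) : basisVec n ≠ 0 :=
  norm_ne_zero_iff.1 (by simp [norm_basisVec])

lemma star_basisVec (n : ℕ) : star (basisVec n) = basisVec n := by
  ext m
  simp [basisVec_apply, apply_ite]

lemma Op.ext_basisVec {X Y : Op} (h : ∀ n, X (basisVec n) = Y (basisVec n)) : X = Y := by
  refine lp.ext_continuousLinearMap (by norm_num) fun n => ?_
  ext1
  exact h n

lemma Op.ext_entries {X Y : Op} (h : ∀ m n, X (basisVec m) n = Y (basisVec m) n) : X = Y :=
  Op.ext_basisVec fun m => lp.ext (funext (h m))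

lemma hasSum_norm_sq (x : L2) : HasSum (fun n => ‖x n‖ ^ 2) (‖x‖ ^ 2) := by
  simpa using lp.hasSum_norm (p := 2) (by norm_num) x

lemma norm_coord_le (x : L2) (n : ℕ) : ‖x n‖ ≤ ‖x‖ := lp.norm_apply_le_norm (by norm_num) x n

lemma memℓp_two_of_norm_sq_le {f : ℕ → ℂ} {g : ℕ → ℝ} (hg : Summable g)
    (h : ∀ n, ‖f n‖ ^ 2 ≤ g n) : Memℓp f 2 := by
  refine memℓp_gen (Summable.of_nonneg_of_le (fun n => by positivity) (fun n => ?_) hg)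
  simpa using h n

lemma inner_eq_tsum_conj_mul (x y : L2) : ⟪x, y⟫_ℂ = ∑' n, conj (x n) * y n := by
  simp [lp.inner_eq_tsum, RCLike.inner_apply, mul_comm]

lemma inner_star_star (x y : L2) : ⟪star x, star y⟫_ℂ = ⟪y, x⟫_ℂ := by
  simp [inner_eq_tsum_conj_mul, mul_comm]

lemma inner_self_eq_ofReal_norm_sq {E : Type*} [NormedAddCommGroup E] [InnerProductSpace ℂ E]
    (x : E) : ⟪x, x⟫_ℂ = ((‖x‖ ^ 2 : ℝ) : ℂ) := by
  rw [inner_self_eq_norm_sq_to_K]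
  simp

lemma norm_sq_mul_le (a : LInf) (x : L2) (n : ℕ) : ‖a n * x n‖ ^ 2 ≤ ‖a‖ ^ 2 * ‖x n‖ ^ 2 := by
  rw [norm_mul, mul_pow]
  gcongr
  exact lp.norm_apply_le_norm (by simp) a n

/-- The pointwise product of a bounded and a square-summable sequence. -/
def mulSeq (a : LInf) (x : L2) : L2 :=
  ⟨fun n => a n * x n,
    memℓp_two_of_norm_sq_le ((hasSum_norm_sq x).summable.mul_left _) (norm_sq_mul_le a x)⟩

lemma mulSeq_apply (a : LInf) (x : L2) (n : ℕ) : mulSeq a x n = a n * x n := rfl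

lemma norm_mulSeq_le (a : LInf) (x : L2) : ‖mulSeq a x‖ ≤ ‖a‖ * ‖x‖ := by
  have bound : HasSum (fun n => ‖a‖ ^ 2 * ‖x n‖ ^ 2) (‖a‖ ^ 2 * ‖x‖ ^ 2) :=
    (hasSum_norm_sq x).mul_left _
  rw [← mul_pow] at bound
  exact le_of_sq_le_sq (hasSum_le (norm_sq_mul_le a x) (hasSum_norm_sq (mulSeq a x)) bound)
    (by positivity)

lemma inner_mulSeq_left (a : LInf) (x y : L2) : ⟪mulSeq a x, y⟫_ℂ = ⟪x, mulSeq (star a) y⟫_ℂ := by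
  simp only [inner_eq_tsum_conj_mul]
  refine tsum_congr fun n => ?_
  simp only [mulSeq_apply, map_mul, lp.star_apply, RCLike.star_def]
  ring

/-- The diagonal operator `x ↦ (a_n x_n)_n`, as a `*`-homomorphism in its symbol `a`. -/
def diagOp : LInf →⋆ₐ[ℂ] Op where
  toFun a := LinearMap.mkContinuous
    { toFun := mulSeq a
      map_add' := fun x y => lp.ext (funext fun n => mul_add (a n) (x n) (y n))
      map_smul' := fun c x => lp.ext (funext fun n => mul_left_comm (a n) c (x n)) }
    ‖a‖ (norm_mulSeq_le a)
  map_one' := ContinuousLinearMap.ext fun x => lp.ext (funext fun n => one_mul (x n))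
  map_mul' a b := ContinuousLinearMap.ext fun x =>
    lp.ext (funext fun n => mul_assoc (a n) (b n) (x n))
  map_zero' := ContinuousLinearMap.ext fun x => lp.ext (funext fun n => zero_mul (x n))
  map_add' a b := ContinuousLinearMap.ext fun x =>
    lp.ext (funext fun n => add_mul (a n) (b n) (x n))
  commutes' c := ContinuousLinearMap.ext fun x => lp.ext (funext fun n => by
    rw [Algebra.algebraMap_eq_smul_one, Algebra.algebraMap_eq_smul_one]
    exact congrArg (· * x n) (mul_one c))
  map_star' a := by
    rw [ContinuousLinearMap.star_eq_adjoint, ContinuousLinearMap.eq_adjoint_iff]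
    intro x y
    change ⟪mulSeq (star a) x, y⟫_ℂ = ⟪x, mulSeq a y⟫_ℂ
    rw [inner_mulSeq_left, star_star]

lemma diagOp_apply (a : LInf) (x : L2) (n : ℕ) : diagOp a x n = a n * x n := rfl

lemma diagOp_basisVec (a : LInf) (n : ℕ) : diagOp a (basisVec n) = a n • basisVec n := by
  ext m
  rcases eq_or_ne m n with rfl | h <;> simp [diagOp_apply, basisVec_apply, *]

lemma diagOp_injective : Function.Injective diagOp := fun a b h => by
  ext n
  simpa [diagOp_apply, basisVec_apply] using congrArg (fun X : Op => X (basisVec n) n) h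

lemma eq_of_mul_diagOp_eq {a : LInf} (ha : ∀ n, a n ≠ 0) {X Y : Op}
    (h : X * diagOp a = Y * diagOp a) : X = Y :=
  Op.ext_basisVec fun n => smul_right_injective L2 (ha n) <| by
    simpa [diagOp_basisVec] using congrArg (fun Z : Op => Z (basisVec n)) h

lemma eq_of_diagOp_mul_eq {a : LInf} (ha : ∀ n, a n ≠ 0) {X Y : Op}
    (h : diagOp a * X = diagOp a * Y) : X = Y := by
  ext x n
  exact mul_left_cancel₀ (ha n) (congrArg (fun Z : Op => Z x n) h)

lemma denseRange_diagOp {a : LInf} (ha : ∀ n, a n ≠ 0) : DenseRange (diagOp a) := by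
  change Dense ((LinearMap.range (diagOp a).toLinearMap : Submodule ℂ L2) : Set L2)
  rw [Submodule.dense_iff_topologicalClosure_eq_top, Submodule.topologicalClosure_eq_top_iff,
    Submodule.eq_bot_iff]
  intro x hx
  ext n
  rw [← inner_basisVec_left]
  refine (Submodule.mem_orthogonal _ _).1 hx _ ⟨(a n)⁻¹ • basisVec n, ?_⟩
  simp [diagOp_basisVec, smul_smul, ha n]

lemma exists_eq_diagOp_of_commute {a : LInf} (ha : Function.Injective a) {X : Op}
    (h : Commute X (diagOp a)) : ∃ x : LInf, X = diagOp x := by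
  have offDiag : ∀ {n m}, m ≠ n → X (basisVec n) m = 0 := fun {n m} hmn => by
    have hnm : a n * X (basisVec n) m = a m * X (basisVec n) m := by
      simpa [diagOp_basisVec, diagOp_apply] using
        congrArg (fun Y : Op => Y (basisVec n) m) h.eq
    by_contra h0
    exact hmn (ha (mul_right_cancel₀ h0 hnm)).symm
  have bounded : Memℓp (fun n => X (basisVec n) n) ∞ := by
    refine memℓp_infty ⟨‖X‖, ?_⟩
    rintro _ ⟨n, rfl⟩
    exact (norm_coord_le _ n).trans ((X.le_opNorm _).trans_eq (by rw [norm_basisVec, mul_one]))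
  refine ⟨⟨_, bounded⟩, Op.ext_entries fun n m => ?_⟩
  rw [diagOp_apply, basisVec_apply]
  rcases eq_or_ne m n with rfl | hmn
  · simp
  · simp [offDiag hmn, hmn]

/-- Entrywise complex conjugation `X ↦ X̄` of operators on `ℓ²`; the transpose of `X` is
`star (conjOp X)`. -/
def conjOp : Op ≃⋆+* Op where
  toFun X := LinearMap.mkContinuous
    { toFun := fun x => star (X (star x))
      map_add' := fun x y => by simp
      map_smul' := fun c x => by simp }
    ‖X‖ fun x => by simpa using X.le_opNorm (star x)
  invFun X := LinearMap.mkContinuous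
    { toFun := fun x => star (X (star x))
      map_add' := fun x y => by simp
      map_smul' := fun c x => by simp }
    ‖X‖ fun x => by simpa using X.le_opNorm (star x)
  left_inv X := by ext1 x; simp
  right_inv X := by ext1 x; simp
  map_mul' X Y := by ext1 x; simp
  map_add' X Y := by ext1 x; simp
  map_star' X := by
    rw [ContinuousLinearMap.star_eq_adjoint, ContinuousLinearMap.star_eq_adjoint,
      ContinuousLinearMap.eq_adjoint_iff]
    intro x y
    change ⟪star ((star X) (star x)), y⟫_ℂ = ⟪x, star (X (star y))⟫_ℂ
    calc ⟪star ((star X) (star x)), y⟫_ℂ = ⟪star y, (star X) (star x)⟫_ℂ := by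
          rw [← inner_star_star, star_star]
      _ = ⟪X (star y), star x⟫_ℂ := ContinuousLinearMap.adjoint_inner_right X _ _
      _ = ⟪x, star (X (star y))⟫_ℂ := by rw [← inner_star_star, star_star]

lemma conjOp_apply (X : Op) (x : L2) : conjOp X x = star (X (star x)) := rfl

lemma conjOp_conjOp (X : Op) : conjOp (conjOp X) = X := conjOp.left_inv X

lemma conjOp_diagOp (a : LInf) : conjOp (diagOp a) = star (diagOp a) := by
  ext x n
  simp [conjOp_apply, ← map_star, diagOp_apply]

lemma tendsto_of_tendsto_coord_of_norm_le {ι : Type*} {l : Filter ι} {g : ι → L2} {y : L2}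
    {a : ℕ → ℝ} (ha : Summable fun n => a n ^ 2) (hg : ∀ i n, ‖g i n‖ ≤ a n)
    (hy : ∀ n, ‖y n‖ ≤ a n) (ht : ∀ n, Tendsto (fun i => g i n) l (𝓝 (y n))) :
    Tendsto g l (𝓝 y) := by
  rw [tendsto_iff_norm_sub_tendsto_zero]
  have coord_le : ∀ i n, ‖(g i - y) n‖ ≤ 2 * a n := fun i n =>
    (norm_sub_le (g i n) (y n)).trans (by linarith [hg i n, hy n])
  have coord_tendsto : ∀ n, Tendsto (fun i => ‖(g i - y) n‖ ^ 2) l (𝓝 0) := fun n => by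
    have h : Tendsto (fun i => ‖g i n - y n‖ ^ 2) l (𝓝 (‖y n - y n‖ ^ 2)) :=
      ((ht n).sub_const _).norm.pow 2
    simpa using h
  have tendsto_tsum : Tendsto (fun i => ∑' n, ‖(g i - y) n‖ ^ 2) l (𝓝 (∑' _ : ℕ, (0 : ℝ))) :=
    tendsto_tsum_of_dominated_convergence (bound := fun n => 4 * a n ^ 2) (ha.mul_left 4)
      coord_tendsto (.of_forall fun i n => by
        rw [Real.norm_of_nonneg (by positivity)]
        calc ‖(g i - y) n‖ ^ 2 ≤ (2 * a n) ^ 2 := by gcongr; exact coord_le i n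
          _ = 4 * a n ^ 2 := by ring)
  simp only [fun i => (hasSum_norm_sq (g i - y)).tsum_eq, tsum_zero] at tendsto_tsum
  simpa using tendsto_tsum.sqrt

lemma continuous_diagOp_apply {X : Type*} [TopologicalSpace X] {a : X → LInf} {C : ℝ}
    (bound : ∀ t, ‖a t‖ ≤ C) (ha : ∀ n, Continuous fun t => a t n) (x : L2) :
    Continuous fun t => diagOp (a t) x := by
  have coord_le : ∀ t n, ‖diagOp (a t) x n‖ ≤ C * ‖x n‖ := fun t n => by
    rw [diagOp_apply, norm_mul]
    gcongr
    exact (lp.norm_apply_le_norm (by simp) (a t) n).trans (bound t)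
  have summable_bound : Summable fun n => (C * ‖x n‖) ^ 2 := by
    simpa only [mul_pow] using (hasSum_norm_sq x).summable.mul_left (C ^ 2)
  refine continuous_iff_continuousAt.2 fun t =>
    tendsto_of_tendsto_coord_of_norm_le summable_bound coord_le (coord_le t) fun n => ?_
  simpa only [diagOp_apply] using ((ha n).tendsto t).mul_const (x n)

lemma isCompact_hilbertCube {a : ℕ → ℝ} (ha : Summable fun n => a n ^ 2) :
    IsCompact {x : L2 | ∀ n, ‖x n‖ ≤ a n} := by
  let Q : Set (ℕ → ℂ) := Set.univ.pi fun n => Metric.closedBall 0 (a n)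
  have isCompact_Q : IsCompact Q := isCompact_univ_pi fun n => isCompact_closedBall _ _
  have norm_le (q : Q) (n : ℕ) : ‖q.1 n‖ ≤ a n := by simpa using q.2 n (Set.mem_univ n)
  let g : Q → L2 := fun q =>
    ⟨q.1, memℓp_two_of_norm_sq_le ha fun n => by gcongr; exact norm_le q n⟩
  have continuous_g : Continuous g := continuous_iff_continuousAt.2 fun q =>
    tendsto_of_tendsto_coord_of_norm_le ha norm_le (norm_le q)
      fun n => ((continuous_apply n).comp continuous_subtype_val).tendsto q
  have : CompactSpace Q := isCompact_iff_compactSpace.1 isCompact_Q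
  convert isCompact_range continuous_g
  ext x
  constructor
  · intro hx
    exact ⟨⟨fun n => x n, fun n _ => by simpa using hx n⟩, rfl⟩
  · rintro ⟨q, rfl⟩ n
    exact norm_le q n

lemma star_apply_basisVec_apply (X : Op) (m n : ℕ) :
    star X (basisVec n) m = conj (X (basisVec m) n) := by
  rw [← inner_basisVec_left, ContinuousLinearMap.star_eq_adjoint,
    ContinuousLinearMap.adjoint_inner_right, inner_basisVec_right]

lemma hasSum_norm_sq_star_apply_basisVec {X : Op} {s : ℝ}
    (h : HasSum (fun n => ‖X (basisVec n)‖ ^ 2) s) :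
    HasSum (fun n => ‖star X (basisVec n)‖ ^ 2) s := by
  let f : ℕ × ℕ → ℝ := fun p => ‖X (basisVec p.1) p.2‖ ^ 2
  have hasSum_row (m : ℕ) : HasSum (fun n => f (m, n)) (‖X (basisVec m)‖ ^ 2) :=
    hasSum_norm_sq (X (basisVec m))
  have hasSum_column (n : ℕ) : HasSum (fun m => f (m, n)) (‖star X (basisVec n)‖ ^ 2) := by
    simpa [f, star_apply_basisVec_apply] using hasSum_norm_sq (star X (basisVec n))
  have summable_f : Summable f := by
    refine (summable_prod_of_nonneg fun p => by positivity).2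
      ⟨fun m => (hasSum_row m).summable, ?_⟩
    simpa only [(hasSum_row _).tsum_eq] using h.summable
  have hasSum_f : HasSum f s := by
    rw [← (summable_f.hasSum.prod_fiberwise hasSum_row).unique h]
    exact summable_f.hasSum
  exact ((Equiv.prodComm ℕ ℕ).hasSum_iff.2 hasSum_f).prod_fiberwise hasSum_column

lemma inner_mul_star_apply (X : Op) (x : L2) :
    ⟪x, (X * star X) x⟫_ℂ = (‖star X x‖ ^ 2 : ℝ) := by
  rw [mul_apply_eq_comp, ← ContinuousLinearMap.adjoint_inner_left,
    ← ContinuousLinearMap.star_eq_adjoint, inner_self_eq_ofReal_norm_sq]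

lemma star_apply_apply_of_isometry {W : Op} (hW : star W * W = 1) (x : L2) :
    star W (W x) = x :=
  congrArg (fun X : Op => X x) hW

lemma norm_apply_of_isometry {W : Op} (hW : star W * W = 1) (x : L2) : ‖W x‖ = ‖x‖ :=
  (ContinuousLinearMap.norm_map_iff_adjoint_comp_self W).2 hW x

lemma exists_isometry_of_orthonormal {e : ℕ → L2} (he : Orthonormal ℂ e) :
    ∃ W : Op, star W * W = 1 ∧ ∀ j, W (basisVec j) = e j := by
  refine ⟨he.orthogonalFamily.linearIsometry.toContinuousLinearMap,
    (ContinuousLinearMap.norm_map_iff_adjoint_comp_self _).1 fun x => by simp, fun j => ?_⟩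
  exact (he.orthogonalFamily.linearIsometry_apply_single (i := j) (1 : ℂ)).trans (by simp)

/-- A strictly decreasing, positive, square-summable sequence: the ordered list of singular values
of a Hilbert–Schmidt operator with simple infinite spectrum. -/
structure SimpleSpectrum (a : ℕ → ℝ) : Prop where
  pos : ∀ n, 0 < a n
  strictAnti : StrictAnti a
  summable_sq : Summable fun n => a n ^ 2

namespace SimpleSpectrum

variable {a : ℕ → ℝ} (ha : SimpleSpectrum a)

include ha

lemma ofReal_ne_zero (n : ℕ) : (a n : ℂ) ≠ 0 := Complex.ofReal_ne_zero.2 (ha.pos n).ne'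

lemma sq_strictAnti : StrictAnti fun n => a n ^ 2 := fun _ n h =>
  pow_lt_pow_left₀ (ha.strictAnti h) (ha.pos n).le two_ne_zero

lemma ofReal_sq_injective : Function.Injective fun n => (a n : ℂ) ^ 2 := fun m n h =>
  ha.sq_strictAnti.injective (Complex.ofReal_injective (by simpa using h))

/-- The sequence `a` as a bounded complex sequence. -/
def symbol : LInf :=
  ⟨fun n => (a n : ℂ), (memℓp_two_of_norm_sq_le ha.summable_sq fun n => by simp).of_exponent_ge
    le_top⟩

lemma symbol_apply (n : ℕ) : ha.symbol n = a n := rfl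

lemma symbol_sq_apply (n : ℕ) : (ha.symbol ^ 2) n = (a n : ℂ) ^ 2 := by
  rw [lp.infty_coeFn_pow, Pi.pow_apply, symbol_apply]

/-- The diagonal operator with entries `a n`. -/
def diag : Op := diagOp ha.symbol

lemma diag_apply (x : L2) (n : ℕ) : ha.diag x n = a n * x n := rfl

lemma diag_basisVec (n : ℕ) : ha.diag (basisVec n) = (a n : ℂ) • basisVec n :=
  diagOp_basisVec _ n

lemma diag_sq : ha.diag ^ 2 = diagOp (ha.symbol ^ 2) := (map_pow _ _ _).symm

lemma diag_sq_apply (x : L2) (n : ℕ) : (ha.diag ^ 2) x n = (a n : ℂ) ^ 2 * x n := by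
  rw [diag_sq, diagOp_apply, symbol_sq_apply]

lemma diag_sq_basisVec (n : ℕ) : (ha.diag ^ 2) (basisVec n) = (a n : ℂ) ^ 2 • basisVec n := by
  rw [diag_sq, diagOp_basisVec, symbol_sq_apply]

lemma star_diag : star ha.diag = ha.diag := by
  have star_symbol : star ha.symbol = ha.symbol := by
    ext n
    simp [symbol_apply, lp.star_apply]
  rw [diag, ← map_star, star_symbol]

lemma conjOp_diag : conjOp ha.diag = ha.diag := (conjOp_diagOp _).trans ha.star_diag

lemma eq_of_mul_diag_eq {X Y : Op} (h : X * ha.diag = Y * ha.diag) : X = Y :=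
  eq_of_mul_diagOp_eq ha.ofReal_ne_zero h

lemma eq_of_diag_mul_eq {X Y : Op} (h : ha.diag * X = ha.diag * Y) : X = Y :=
  eq_of_diagOp_mul_eq ha.ofReal_ne_zero h

lemma denseRange_diag : DenseRange ha.diag := denseRange_diagOp ha.ofReal_ne_zero

lemma exists_eq_diagOp_of_commute {X : Op} (h : Commute X (ha.diag ^ 2)) :
    ∃ x : LInf, X = diagOp x := by
  rw [diag_sq] at h
  exact _root_.exists_eq_diagOp_of_commute
    (by simpa only [funext ha.symbol_sq_apply] using ha.ofReal_sq_injective) h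

lemma hasSum_norm_sq_diag_star_apply {W : Op} (hW : star W * W = 1) :
    HasSum (fun n => ‖ha.diag (star W (basisVec n))‖ ^ 2) (∑' n, a n ^ 2) := by
  have h : HasSum (fun n => ‖(W * ha.diag) (basisVec n)‖ ^ 2) (∑' n, a n ^ 2) := by
    convert ha.summable_sq.hasSum using 2 with n
    rw [mul_apply_eq_comp, norm_apply_of_isometry hW, diag_basisVec, norm_smul, norm_basisVec]
    simp
  simpa [star_diag] using hasSum_norm_sq_star_apply_basisVec h

end SimpleSpectrum

lemma opT_eq (Γ : Op) : opT Γ = Γ * star Γ := rfl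

lemma isSymmetric_opT (Γ : Op) : (opT Γ).toLinearMap.IsSymmetric :=
  ContinuousLinearMap.isSelfAdjoint_iff_isSymmetric.1 (IsSelfAdjoint.mul_star_self Γ)

section Diagonalization

variable {a : ℕ → ℝ} (ha : SimpleSpectrum a) {Γ W : Op}

include ha

lemma diagonalized_apply_basisVec (hW : star W * W = 1) (j : ℕ) :
    (W * ha.diag ^ 2 * star W) (W (basisVec j)) = (a j : ℂ) ^ 2 • W (basisVec j) := by
  simp only [mul_apply_eq_comp, star_apply_apply_of_isometry hW, ha.diag_sq_basisVec, map_smul]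

omit ha in
lemma isometry_basisVec_ne_zero (hW : star W * W = 1) (j : ℕ) : W (basisVec j) ≠ 0 :=
  norm_ne_zero_iff.1 (by simp [norm_apply_of_isometry hW, norm_basisVec])

lemma exists_eq_smul_of_diagonalized_eigenvector (hW : star W * W = 1) {z : ℂ} (hz : z ≠ 0)
    {x : L2} (hx : (W * ha.diag ^ 2 * star W) x = z • x) (hx0 : x ≠ 0) :
    ∃ j, (a j : ℂ) ^ 2 = z ∧ x = star W x j • W (basisVec j) := by
  have mem_range : W ((ha.diag ^ 2) (star W x)) = z • x := hx
  have eigen : (ha.diag ^ 2) (star W x) = z • star W x := by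
    rw [← star_apply_apply_of_isometry hW ((ha.diag ^ 2) _), mem_range, map_smul]
  have x_eq : x = W (star W x) := by
    rw [eigen, map_smul] at mem_range
    exact (smul_right_injective _ hz mem_range).symm
  have coord_eigen (i : ℕ) : (a i : ℂ) ^ 2 * star W x i = z * star W x i := by
    rw [← ha.diag_sq_apply, eigen]
    rfl
  obtain ⟨j, hj⟩ : ∃ j, star W x j ≠ 0 := by
    by_contra! h
    exact hx0 (by rw [x_eq, show star W x = 0 from lp.ext (funext h), map_zero])
  have eq_z : (a j : ℂ) ^ 2 = z := mul_right_cancel₀ hj (coord_eigen j)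
  have star_eq : star W x = star W x j • basisVec j := by
    ext i
    rw [lp.coeFn_smul, Pi.smul_apply, basisVec_apply]
    rcases eq_or_ne i j with rfl | hij
    · simp
    · by_contra hi
      have hi : star W x i ≠ 0 := by simpa [hij] using hi
      exact hij (ha.ofReal_sq_injective ((mul_right_cancel₀ hi (coord_eigen i)).trans eq_z.symm))
  exact ⟨j, eq_z, by rw [← map_smul, ← star_eq, ← x_eq]⟩

lemma hasSimpleSValsSeq_of_diagonalized (hW : star W * W = 1)
    (h : opT Γ = W * ha.diag ^ 2 * star W) : HasSimpleSValsSeq Γ a := by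
  have eigenvector (j : ℕ) : opT Γ (W (basisVec j)) = (a j : ℂ) ^ 2 • W (basisVec j) := by
    rw [h, diagonalized_apply_basisVec ha hW]
  have sq_ne_zero (j : ℕ) : (a j : ℂ) ^ 2 ≠ 0 := pow_ne_zero 2 (ha.ofReal_ne_zero j)
  refine ⟨Set.ext fun z => ⟨?_, ?_⟩, fun j => finrank_eq_one_iff'.2
    ⟨⟨_, Module.End.mem_eigenspace_iff.2 (eigenvector j)⟩, fun h0 =>
      isometry_basisVec_ne_zero hW j (congrArg Subtype.val h0), ?_⟩⟩
  · rintro ⟨hz, hz'⟩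
    obtain ⟨x, hx⟩ := hz'.exists_hasEigenvector
    obtain ⟨j, hj, -⟩ := exists_eq_smul_of_diagonalized_eigenvector ha hW hz
      (h ▸ hx.apply_eq_smul) hx.2
    exact ⟨j, hj⟩
  · rintro ⟨j, rfl⟩
    exact ⟨sq_ne_zero j, Module.End.hasEigenvalue_of_hasEigenvector
      ⟨Module.End.mem_eigenspace_iff.2 (eigenvector j), isometry_basisVec_ne_zero hW j⟩⟩
  · rintro ⟨x, hx⟩
    rcases eq_or_ne x 0 with rfl | hx0
    · exact ⟨0, Subtype.ext (zero_smul _ _)⟩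
    obtain ⟨i, hi, hxi⟩ := exists_eq_smul_of_diagonalized_eigenvector ha hW (sq_ne_zero j)
      (h ▸ Module.End.mem_eigenspace_iff.1 hx) hx0
    obtain rfl := ha.ofReal_sq_injective hi
    exact ⟨_, Subtype.ext hxi.symm⟩

omit ha in
lemma exists_unit_eigenvector (h : HasSimpleSValsSeq Γ a) (j : ℕ) :
    ∃ e : L2, ‖e‖ = 1 ∧
      Module.End.eigenspace (opT Γ).toLinearMap ((a j : ℂ) ^ 2) = Submodule.span ℂ {e} := by
  obtain ⟨⟨v, hv⟩, hv0, hspan⟩ := finrank_eq_one_iff'.1 (h.2 j)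
  have hv0 : v ≠ 0 := fun h0 => hv0 (Subtype.ext h0)
  have norm_ne_zero : (‖v‖ : ℂ)⁻¹ ≠ 0 := by simpa using hv0
  refine ⟨(‖v‖ : ℂ)⁻¹ • v, by simp [norm_smul, hv0], ?_⟩
  rw [Submodule.span_singleton_smul_eq norm_ne_zero.isUnit]
  refine le_antisymm (fun w hw => ?_) ((Submodule.span_singleton_le_iff_mem _ _).2 hv)
  obtain ⟨c, hc⟩ := hspan ⟨w, hw⟩
  exact Submodule.mem_span_singleton.2 ⟨c, congrArg Subtype.val hc⟩

omit ha in
lemma opT_apply_eq_zero_of_orthogonal (hcomp : IsCompactOperator (opT Γ))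
    (h : HasSimpleSValsSeq Γ a) {x : L2}
    (hx : ∀ j, ∀ e ∈ Module.End.eigenspace (opT Γ).toLinearMap ((a j : ℂ) ^ 2), ⟪e, x⟫_ℂ = 0) :
    opT Γ x = 0 := by
  suffices hmem : opT Γ x ∈ (⨆ z, Module.End.eigenspace (opT Γ).toLinearMap z)ᗮ by
    rwa [ContinuousLinearMap.orthogonalComplement_iSup_eigenspaces_eq_bot hcomp
      (isSymmetric_opT Γ), Submodule.mem_bot] at hmem
  rw [← Submodule.iInf_orthogonal, Submodule.mem_iInf]
  refine fun z => (Submodule.mem_orthogonal _ _).2 fun e he => ?_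
  have inner_eq : ⟪e, opT Γ x⟫_ℂ = conj z * ⟪e, x⟫_ℂ := by
    rw [← inner_smul_left, ← Module.End.mem_eigenspace_iff.1 he]
    exact (isSymmetric_opT Γ e x).symm
  rcases eq_or_ne z 0 with rfl | hz
  · simp [inner_eq]
  rcases eq_or_ne e 0 with rfl | he0
  · simp
  have hz' : z ∈ {z : ℂ | z ≠ 0 ∧ Module.End.HasEigenvalue (opT Γ).toLinearMap z} :=
    ⟨hz, Module.End.hasEigenvalue_of_hasEigenvector ⟨he, he0⟩⟩
  rw [h.1] at hz'
  obtain ⟨j, rfl⟩ := hz'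
  rw [inner_eq, hx j e he, mul_zero]

lemma exists_diagonalization (hcomp : IsCompactOperator (opT Γ)) (h : HasSimpleSValsSeq Γ a) :
    ∃ W : Op, star W * W = 1 ∧ opT Γ = W * ha.diag ^ 2 * star W := by
  choose e norm_e eigenspace_eq using exists_unit_eigenvector h
  have mem_eigenspace (j : ℕ) :
      e j ∈ Module.End.eigenspace (opT Γ).toLinearMap ((a j : ℂ) ^ 2) := by
    rw [eigenspace_eq]
    exact Submodule.mem_span_singleton_self _
  have orthonormal_e : Orthonormal ℂ e := ⟨norm_e, fun i j hij =>
    (isSymmetric_opT Γ).orthogonalFamily_eigenspaces (ha.ofReal_sq_injective.ne hij)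
      ⟨e i, mem_eigenspace i⟩ ⟨e j, mem_eigenspace j⟩⟩
  obtain ⟨W, hW, W_basisVec⟩ := exists_isometry_of_orthonormal orthonormal_e
  have intertwines : opT Γ * W = W * ha.diag ^ 2 := Op.ext_basisVec fun j => by
    rw [mul_apply_eq_comp, mul_apply_eq_comp, ha.diag_sq_basisVec, map_smul, W_basisVec]
    exact Module.End.mem_eigenspace_iff.1 (mem_eigenspace j)
  refine ⟨W, hW, ?_⟩
  ext1 x
  rw [← intertwines, mul_apply_eq_comp, mul_apply_eq_comp, ← sub_eq_zero, ← map_sub]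
  refine opT_apply_eq_zero_of_orthogonal hcomp h fun j f hf => ?_
  rw [eigenspace_eq] at hf
  obtain ⟨c, rfl⟩ := Submodule.mem_span_singleton.1 hf
  rw [inner_smul_left, ← W_basisVec, ← ContinuousLinearMap.adjoint_inner_right,
    ← ContinuousLinearMap.star_eq_adjoint, map_sub, star_apply_apply_of_isometry hW, sub_self,
    inner_zero_right, mul_zero]

end Diagonalization

/-- The diagonal unitary operator with entries `p n`. -/
def phaseOp (p : ℕ → Circle) : Op :=
  diagOp ⟨fun n => (p n : ℂ), memℓp_infty ⟨1, by rintro _ ⟨n, rfl⟩; exact (Circle.norm_coe _).le⟩⟩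

lemma phaseOp_apply (p : ℕ → Circle) (x : L2) (n : ℕ) : phaseOp p x n = p n * x n := rfl

lemma star_phaseOp_apply (p : ℕ → Circle) (x : L2) (n : ℕ) :
    star (phaseOp p) x n = conj (p n : ℂ) * x n := by
  rw [phaseOp, ← map_star]
  rfl

lemma star_phaseOp_mul_phaseOp (p : ℕ → Circle) : star (phaseOp p) * phaseOp p = 1 := by
  ext x n
  rw [mul_apply_eq_comp, star_phaseOp_apply, phaseOp_apply, ← mul_assoc, Complex.conj_mul',
    Circle.norm_coe]
  simp

lemma phaseOp_mul_star_phaseOp (p : ℕ → Circle) : phaseOp p * star (phaseOp p) = 1 := by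
  ext x n
  rw [mul_apply_eq_comp, phaseOp_apply, star_phaseOp_apply, ← mul_assoc, Complex.mul_conj',
    Circle.norm_coe]
  simp

lemma conjOp_phaseOp (p : ℕ → Circle) : conjOp (phaseOp p) = star (phaseOp p) := conjOp_diagOp _

lemma phaseOp_surjective (p : ℕ → Circle) : Function.Surjective (phaseOp p) := fun x =>
  ⟨star (phaseOp p) x, congrArg (fun X : Op => X x) (phaseOp_mul_star_phaseOp p)⟩

lemma star_phaseOp (p : ℕ → Circle) : star (phaseOp p) = phaseOp p⁻¹ := by
  ext x n
  rw [star_phaseOp_apply, phaseOp_apply, Pi.inv_apply, Circle.coe_inv_eq_conj]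

namespace SimpleSpectrum

variable {a : ℕ → ℝ} (ha : SimpleSpectrum a) (p : ℕ → Circle)

lemma commute_diag_phaseOp : Commute ha.diag (phaseOp p) := (Commute.all _ _).map diagOp

/-- The operator `diag (a n * p n)`: the symmetric operators with singular values `a n` are the
`W * ha.phasedDiag p * Wᵀ` with `W` isometric. -/
def phasedDiag : Op := ha.diag * phaseOp p

lemma star_phasedDiag : star (ha.phasedDiag p) = ha.diag * star (phaseOp p) := by
  rw [phasedDiag, star_mul, star_phaseOp, ha.star_diag, ha.commute_diag_phaseOp]

lemma conjOp_phasedDiag : conjOp (ha.phasedDiag p) = star (ha.phasedDiag p) := by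
  rw [star_phasedDiag, phasedDiag, map_mul, ha.conjOp_diag, conjOp_phaseOp]

lemma phasedDiag_mul_star_phasedDiag : ha.phasedDiag p * star (ha.phasedDiag p) = ha.diag ^ 2 := by
  rw [phasedDiag, star_mul, mul_assoc, ← mul_assoc (phaseOp p), phaseOp_mul_star_phaseOp, one_mul,
    ha.star_diag, pow_two]

lemma star_phasedDiag_mul_phasedDiag : star (ha.phasedDiag p) * ha.phasedDiag p = ha.diag ^ 2 := by
  rw [phasedDiag, ha.commute_diag_phaseOp, star_mul, mul_assoc, ← mul_assoc (star (phaseOp p)),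
    star_phaseOp_mul_phaseOp, one_mul, ha.star_diag, pow_two]

lemma denseRange_phasedDiag : DenseRange (ha.phasedDiag p) :=
  ha.denseRange_diag.comp (phaseOp_surjective p).denseRange ha.diag.continuous

end SimpleSpectrum

lemma conjOp_isometry {W : Op} (hW : star W * W = 1) : star (conjOp W) * conjOp W = 1 := by
  rw [← map_star, ← map_mul, hW, map_one]

lemma mul_star_mul_of_diagonalized {Γ W Y : Op} (hW : star W * W = 1)
    (h : Γ * star Γ = W * Y * star W) : W * star W * Γ = Γ := by
  have defect : (1 - W * star W) * W = 0 := by rw [sub_mul, mul_assoc, hW]; noncomm_ring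
  have defect_mul : (1 - W * star W) * Γ = 0 := by
    rw [← CStarRing.mul_star_self_eq_zero_iff, star_mul]
    calc (1 - W * star W) * Γ * (star Γ * star (1 - W * star W))
        = (1 - W * star W) * (Γ * star Γ) * star (1 - W * star W) := by noncomm_ring
      _ = (1 - W * star W) * W * Y * star W * star (1 - W * star W) := by rw [h]; noncomm_ring
      _ = 0 := by rw [defect]; noncomm_ring
  rw [sub_mul, one_mul, sub_eq_zero] at defect_mul
  exact defect_mul.symm

lemma exists_eq_phasedDiag_of_mul_star_eq {a : ℕ → ℝ} (ha : SimpleSpectrum a) {X : Op}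
    (hsymm : conjOp X = star X) (h : X * star X = ha.diag ^ 2) :
    ∃ p, X = ha.phasedDiag p := by
  have h' : star X * X = ha.diag ^ 2 := by
    rw [← hsymm, ← conjOp_conjOp (ha.diag ^ 2), map_pow, ha.conjOp_diag, ← h, map_mul, ← hsymm,
      conjOp_conjOp]
  obtain ⟨x, rfl⟩ := ha.exists_eq_diagOp_of_commute (X := X) <| by
    rw [Commute, SemiconjBy, ← h', ← mul_assoc, h', h]
  have norm_x (n : ℕ) : ‖x n‖ = a n := by
    rw [← map_star, ← map_mul, ha.diag_sq] at h
    have hn : x n * conj (x n) = (a n : ℂ) ^ 2 := by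
      rw [← ha.symbol_sq_apply, ← diagOp_injective h]
      rfl
    rw [Complex.mul_conj'] at hn
    exact (pow_left_inj₀ (norm_nonneg _) (ha.pos n).le two_ne_zero).1
      (Complex.ofReal_injective (by push_cast; exact hn))
  have mem_circle (n : ℕ) : x n / a n ∈ Submonoid.unitSphere ℂ := mem_sphere_zero_iff_norm.2 <| by
    rw [norm_div, norm_x, Complex.norm_real, Real.norm_of_nonneg (ha.pos n).le,
      div_self (ha.pos n).ne']
  refine ⟨fun n => ⟨_, mem_circle n⟩, ?_⟩
  ext y n
  change x n * y n = a n * (x n / a n * y n)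
  rw [← mul_assoc, mul_div_cancel₀ _ (ha.ofReal_ne_zero n)]

lemma exists_phasedDiag_of_diagonalized {a : ℕ → ℝ} (ha : SimpleSpectrum a) {Γ W : Op}
    (hW : star W * W = 1) (hsymm : conjOp Γ = star Γ) (h : opT Γ = W * ha.diag ^ 2 * star W) :
    ∃ p, Γ = W * ha.phasedDiag p * star (conjOp W) := by
  have range_left : W * star W * Γ = Γ := mul_star_mul_of_diagonalized hW h
  have range_right : Γ * conjOp W * star (conjOp W) = Γ := by
    have := congrArg (fun X => star (conjOp X)) range_left
    simpa only [map_mul, map_star, star_mul, star_star, hsymm, mul_assoc] using this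
  obtain ⟨p, hp⟩ := exists_eq_phasedDiag_of_mul_star_eq ha (X := star W * Γ * conjOp W)
    (by simp only [map_mul, map_star, star_mul, star_star, conjOp_conjOp, hsymm, mul_assoc])
    (by
      calc star W * Γ * conjOp W * star (star W * Γ * conjOp W)
          = star W * (Γ * conjOp W * star (conjOp W)) * star Γ * W := by
            simp only [star_mul, star_star, mul_assoc]
        _ = star W * opT Γ * W := by rw [range_right, opT_eq]; noncomm_ring
        _ = star W * W * ha.diag ^ 2 * (star W * W) := by rw [h]; noncomm_ring
        _ = ha.diag ^ 2 := by rw [hW, one_mul, mul_one])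
  refine ⟨p, ?_⟩
  calc Γ = W * star W * (Γ * conjOp W * star (conjOp W)) := by rw [range_right, range_left]
    _ = W * (star W * Γ * conjOp W) * star (conjOp W) := by noncomm_ring
    _ = _ := by rw [hp]

/-! ### Interlacing sequences -/

/-- Positive sequences with `x 0 > y 0 > x 1 > y 1 > ⋯`. -/
structure Interlacing (x y : ℕ → ℝ) : Prop where
  lt : ∀ j, y j < x j
  succ_lt : ∀ j, x (j + 1) < y j
  right_pos : ∀ j, 0 < y j

/-- The weights `w_j` in the partial fraction decomposition
`∏_{k<N} (z - y_k) / (z - x_k) = 1 - ∑_{j<N} w_j / (x_j - z)`, extended by zero to `j ≥ N`. -/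
def cauchyWeight (x y : ℕ → ℝ) (N j : ℕ) : ℝ :=
  if j < N then (∏ k ∈ Finset.range N, (x j - y k)) / ∏ k ∈ (Finset.range N).erase j, (x j - x k)
  else 0

section FinitePartialFractions

variable (x y : ℕ → ℝ)

lemma degree_nodal_sub_nodal_lt (N : ℕ) :
    (Lagrange.nodal (Finset.range N) x - Lagrange.nodal (Finset.range N) y).degree
      < (Finset.range N).card := by
  rw [← Lagrange.degree_nodal (s := Finset.range N) (v := x)]
  exact Polynomial.degree_sub_lt_left (by simp only [Lagrange.degree_nodal])
    Lagrange.nodal_ne_zero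
    (by rw [Lagrange.nodal_monic.leadingCoeff, Lagrange.nodal_monic.leadingCoeff])

lemma hasSum_cauchyWeight_mul (f : ℕ → ℝ) (N : ℕ) :
    HasSum (fun j => cauchyWeight x y N j * f j)
      (∑ j ∈ Finset.range N, cauchyWeight x y N j * f j) := by
  refine hasSum_sum_of_ne_finset_zero fun j hj => ?_
  rw [cauchyWeight, if_neg (by simpa using hj), zero_mul]

variable {x}

lemma prod_sub_eq_mul_one_sub_sum_cauchyWeight (hx : Function.Injective x) (N : ℕ) {z : ℝ}
    (hz : ∀ k, z ≠ x k) :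
    ∏ k ∈ Finset.range N, (z - y k) = (∏ k ∈ Finset.range N, (z - x k)) *
      (1 - ∑ j ∈ Finset.range N, cauchyWeight x y N j / (x j - z)) := by
  have interpolation := congrArg (Polynomial.eval z) <| Lagrange.eq_interpolate
    (s := Finset.range N) hx.injOn (degree_nodal_sub_nodal_lt x y N)
  rw [Lagrange.eval_interpolate_not_at_node _ (fun i _ => hz i)] at interpolation
  simp only [Polynomial.eval_sub, Lagrange.eval_nodal] at interpolation
  have term_eq : ∑ i ∈ Finset.range N, Lagrange.nodalWeight (Finset.range N) x i * (z - x i)⁻¹ *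
      (∏ j ∈ Finset.range N, (x i - x j) - ∏ j ∈ Finset.range N, (x i - y j)) =
      ∑ j ∈ Finset.range N, cauchyWeight x y N j / (x j - z) := by
    refine Finset.sum_congr rfl fun i hi => ?_
    rw [Finset.prod_eq_zero hi (sub_self _), Lagrange.nodalWeight, cauchyWeight,
      if_pos (Finset.mem_range.1 hi), Finset.prod_inv_distrib, ← neg_sub (x i) z, inv_neg,
      div_eq_mul_inv, div_eq_mul_inv]
    ring
  rw [term_eq] at interpolation
  linear_combination -interpolation

lemma sum_cauchyWeight (hx : Function.Injective x) (N : ℕ) :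
    ∑ j ∈ Finset.range N, cauchyWeight x y N j = ∑ j ∈ Finset.range N, (x j - y j) := by
  rcases N.eq_zero_or_pos with rfl | hN
  · simp
  have coeff_eq := Lagrange.coeff_eq_sum (s := Finset.range N) hx.injOn
    (degree_nodal_sub_nodal_lt x y N)
  rw [Polynomial.coeff_sub, Lagrange.nodal_eq, Lagrange.nodal_eq,
    Polynomial.prod_X_sub_C_coeff_card_pred _ _ (by simpa using hN),
    Polynomial.prod_X_sub_C_coeff_card_pred _ _ (by simpa using hN)] at coeff_eq
  calc ∑ j ∈ Finset.range N, cauchyWeight x y N j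
      = -(-∑ i ∈ Finset.range N, x i - -∑ i ∈ Finset.range N, y i) := by
        rw [coeff_eq, ← Finset.sum_neg_distrib]
        refine Finset.sum_congr rfl fun i hi => ?_
        simp only [Polynomial.eval_sub, Polynomial.eval_prod, Polynomial.eval_X, Polynomial.eval_C]
        rw [Finset.prod_eq_zero hi (sub_self _), cauchyWeight, if_pos (Finset.mem_range.1 hi)]
        ring
    _ = ∑ j ∈ Finset.range N, (x j - y j) := by rw [Finset.sum_sub_distrib]; ring

lemma hasSum_cauchyWeight (hx : Function.Injective x) (N : ℕ) :
    HasSum (cauchyWeight x y N) (∑ j ∈ Finset.range N, (x j - y j)) := by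
  rw [← sum_cauchyWeight y hx]
  simpa only [Pi.one_apply, mul_one] using hasSum_cauchyWeight_mul x y 1 N

end FinitePartialFractions

namespace Interlacing

variable {x y : ℕ → ℝ} (h : Interlacing x y)

include h

lemma left_strictAnti : StrictAnti x :=
  strictAnti_nat_of_succ_lt fun j => (h.succ_lt j).trans (h.lt j)

lemma right_strictAnti : StrictAnti y :=
  strictAnti_nat_of_succ_lt fun j => (h.lt _).trans (h.succ_lt j)

lemma left_pos (j : ℕ) : 0 < x j := (h.right_pos j).trans (h.lt j)

lemma sq : Interlacing (fun j => x j ^ 2) (fun j => y j ^ 2) where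
  lt j := pow_lt_pow_left₀ (h.lt j) (h.right_pos j).le two_ne_zero
  succ_lt j := pow_lt_pow_left₀ (h.succ_lt j) (h.left_pos _).le two_ne_zero
  right_pos j := pow_pos (h.right_pos j) 2

lemma summable_right (hx : Summable x) : Summable y :=
  hx.of_nonneg_of_le (fun j => (h.right_pos j).le) (fun j => (h.lt j).le)

lemma exists_pos_le_abs_sub (m : ℕ) : ∃ δ > 0, ∀ j, δ ≤ |x j - y m| := by
  refine ⟨min (x m - y m) (y m - x (m + 1)),
    lt_min (sub_pos.2 (h.lt m)) (sub_pos.2 (h.succ_lt m)), fun j => ?_⟩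
  rcases le_or_gt j m with hj | hj
  · refine (min_le_left _ _).trans (le_trans ?_ (le_abs_self _))
    linarith [h.left_strictAnti.antitone hj]
  · refine (min_le_right _ _).trans (le_trans ?_ (neg_le_abs _))
    linarith [h.left_strictAnti.antitone (Nat.succ_le_of_lt hj)]

lemma left_ne_right (j m : ℕ) : x j ≠ y m := by
  obtain ⟨δ, hδ, gap⟩ := h.exists_pos_le_abs_sub m
  exact fun hjm => absurd (gap j) (by simpa [hjm] using hδ)

lemma cauchyWeight_pos {N j : ℕ} (hj : j < N) : 0 < cauchyWeight x y N j := by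
  rw [cauchyWeight, if_pos hj, ← Finset.mul_prod_erase _ _ (Finset.mem_range.2 hj),
    mul_div_assoc, ← Finset.prod_div_distrib]
  refine mul_pos (sub_pos.2 (h.lt j)) (Finset.prod_pos fun k hk => ?_)
  rcases lt_or_gt_of_ne (Finset.mem_erase.1 hk).1 with hkj | hjk
  · have hj' : x j ≤ x (k + 1) := h.left_strictAnti.antitone hkj
    exact div_pos_of_neg_of_neg (by linarith [h.succ_lt k]) (by linarith [h.left_strictAnti hkj])
  · have hx := h.left_strictAnti hjk
    exact div_pos (by linarith [h.lt k]) (by linarith)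

lemma cauchyWeight_nonneg (N j : ℕ) : 0 ≤ cauchyWeight x y N j := by
  by_cases hj : j < N
  · exact (h.cauchyWeight_pos hj).le
  · rw [cauchyWeight, if_neg hj]

lemma monotone_cauchyWeight (j : ℕ) : Monotone fun N => cauchyWeight x y N j := by
  refine monotone_nat_of_le_succ fun N => ?_
  by_cases hj : j < N
  swap
  · rw [cauchyWeight, if_neg hj]
    exact h.cauchyWeight_nonneg _ _
  have erase_succ : (Finset.range (N + 1)).erase j = insert N ((Finset.range N).erase j) := by
    rw [Finset.range_add_one, Finset.erase_insert_of_ne hj.ne']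
  have succ_eq : cauchyWeight x y (N + 1) j =
      cauchyWeight x y N j * ((x j - y N) / (x j - x N)) := by
    rw [cauchyWeight, cauchyWeight, if_pos hj, if_pos (hj.trans N.lt_succ_self), erase_succ,
      Finset.prod_insert (by simp), Finset.prod_range_succ, mul_comm (x j - x N),
      mul_div_mul_comm]
  rw [succ_eq]
  refine le_mul_of_one_le_right (h.cauchyWeight_nonneg N j) ?_
  rw [one_le_div (sub_pos.2 (h.left_strictAnti hj))]
  linarith [h.lt N]

end Interlacing

/-- The weights `w_j` in the partial fraction decomposition
`∏_k (z - y_k) / (z - x_k) = 1 - ∑_j w_j / (x_j - z)` attached to interlacing sequences. -/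
def limitWeight (x y : ℕ → ℝ) (j : ℕ) : ℝ := ⨆ N, cauchyWeight x y N j

namespace Interlacing

variable {x y : ℕ → ℝ} (h : Interlacing x y) (hx : Summable x)

include h hx

lemma summable_sub : Summable fun j => x j - y j := hx.sub (h.summable_right hx)

lemma tsum_cauchyWeight_le (N : ℕ) : ∑' j, cauchyWeight x y N j ≤ ∑' j, (x j - y j) := by
  rw [(hasSum_cauchyWeight y h.left_strictAnti.injective N).tsum_eq]
  exact (h.summable_sub hx).sum_le_tsum _ fun j _ => (sub_pos.2 (h.lt j)).le

lemma sum_cauchyWeight_le (s : Finset ℕ) (N : ℕ) :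
    ∑ j ∈ s, cauchyWeight x y N j ≤ ∑' j, (x j - y j) :=
  ((hasSum_cauchyWeight y h.left_strictAnti.injective N).summable.sum_le_tsum s
    fun j _ => h.cauchyWeight_nonneg N j).trans (h.tsum_cauchyWeight_le hx N)

lemma bddAbove_cauchyWeight (j : ℕ) : BddAbove (Set.range fun N => cauchyWeight x y N j) :=
  ⟨∑' j, (x j - y j), by
    rintro _ ⟨N, rfl⟩
    simpa using h.sum_cauchyWeight_le hx {j} N⟩

lemma tendsto_cauchyWeight (j : ℕ) :
    Tendsto (fun N => cauchyWeight x y N j) atTop (𝓝 (limitWeight x y j)) :=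
  tendsto_atTop_ciSup (h.monotone_cauchyWeight j) (h.bddAbove_cauchyWeight hx j)

lemma cauchyWeight_le_limitWeight (N j : ℕ) : cauchyWeight x y N j ≤ limitWeight x y j :=
  le_ciSup (h.bddAbove_cauchyWeight hx j) N

lemma limitWeight_pos (j : ℕ) : 0 < limitWeight x y j :=
  (h.cauchyWeight_pos j.lt_succ_self).trans_le (h.cauchyWeight_le_limitWeight hx _ j)

lemma summable_limitWeight : Summable (limitWeight x y) :=
  summable_of_sum_le (fun j => (h.limitWeight_pos hx j).le) fun s =>
    le_of_tendsto' (tendsto_finsetSum s fun j _ => h.tendsto_cauchyWeight hx j)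
      (h.sum_cauchyWeight_le hx s)

lemma hasSum_limitWeight_mul {f : ℕ → ℝ} {C l : ℝ} (hf : ∀ j, |f j| ≤ C)
    (hl : Tendsto (fun N => ∑ j ∈ Finset.range N, cauchyWeight x y N j * f j) atTop (𝓝 l)) :
    HasSum (fun j => limitWeight x y j * f j) l := by
  have bound := (h.summable_limitWeight hx).mul_right C
  have summable_mul : Summable fun j => limitWeight x y j * f j :=
    bound.of_norm_bounded fun j => by
      rw [norm_mul, Real.norm_of_nonneg (h.limitWeight_pos hx j).le]
      exact mul_le_mul_of_nonneg_left (hf j) (h.limitWeight_pos hx j).le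
  have limit := tendsto_tsum_of_dominated_convergence bound
    (fun j => (h.tendsto_cauchyWeight hx j).mul_const (f j)) (.of_forall fun N j => by
      rw [norm_mul, Real.norm_of_nonneg (h.cauchyWeight_nonneg N j)]
      exact mul_le_mul (h.cauchyWeight_le_limitWeight hx N j) (hf j) (abs_nonneg _)
        (h.limitWeight_pos hx j).le)
  simp only [(hasSum_cauchyWeight_mul x y f _).tsum_eq] at limit
  rw [tendsto_nhds_unique hl limit]
  exact summable_mul.hasSum

lemma hasSum_limitWeight : HasSum (limitWeight x y) (∑' j, (x j - y j)) := by
  have hl := (h.summable_sub hx).hasSum.tendsto_sum_nat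
  simp only [← sum_cauchyWeight y h.left_strictAnti.injective] at hl
  simpa using h.hasSum_limitWeight_mul hx (f := 1) (C := 1) (by simp) (by simpa using hl)

lemma hasSum_limitWeight_div_sub (m : ℕ) :
    HasSum (fun j => limitWeight x y j / (x j - y m)) 1 := by
  obtain ⟨δ, hδ, gap⟩ := h.exists_pos_le_abs_sub m
  have finite_sum : ∀ N > m, ∑ j ∈ Finset.range N, cauchyWeight x y N j / (x j - y m) = 1 := by
    intro N hN
    have partial_fractions := prod_sub_eq_mul_one_sub_sum_cauchyWeight y
      h.left_strictAnti.injective N fun k => (h.left_ne_right k m).symm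
    rw [Finset.prod_eq_zero (Finset.mem_range.2 hN) (sub_self _), eq_comm, mul_eq_zero,
      Finset.prod_eq_zero_iff] at partial_fractions
    rcases partial_fractions with ⟨k, -, hk⟩ | partial_fractions
    · exact absurd (sub_eq_zero.1 hk).symm (h.left_ne_right k m)
    · exact (sub_eq_zero.1 partial_fractions).symm
  simp only [div_eq_mul_inv] at finite_sum ⊢
  refine h.hasSum_limitWeight_mul hx (C := δ⁻¹) (fun j => ?_) ?_
  · rw [abs_inv]
    exact inv_anti₀ hδ (gap j)
  · exact tendsto_const_nhds.congr'
      ((eventually_gt_atTop m).mono fun N hN => (finite_sum N hN).symm)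

omit hx in
lemma sum_cauchyWeight_div_le_one (N : ℕ) :
    ∑ j ∈ Finset.range N, cauchyWeight x y N j / x j ≤ 1 := by
  have partial_fractions := prod_sub_eq_mul_one_sub_sum_cauchyWeight y h.left_strictAnti.injective N
    fun k => (h.left_pos k).ne
  simp only [zero_sub, sub_zero, Finset.prod_neg, mul_assoc] at partial_fractions
  have prod_y_pos : 0 < ∏ k ∈ Finset.range N, y k := Finset.prod_pos fun k _ => h.right_pos k
  have prod_x_pos : 0 < ∏ k ∈ Finset.range N, x k := Finset.prod_pos fun k _ => h.left_pos k
  rw [mul_left_cancel₀ (by simp) partial_fractions,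
    mul_pos_iff_of_pos_left prod_x_pos] at prod_y_pos
  linarith

lemma sum_limitWeight_div_le_one (s : Finset ℕ) : ∑ j ∈ s, limitWeight x y j / x j ≤ 1 := by
  refine le_of_tendsto'
    (tendsto_finsetSum s fun j _ => (h.tendsto_cauchyWeight hx j).div_const (x j)) fun N => ?_
  have hasSum := hasSum_cauchyWeight_mul x y (fun j => (x j)⁻¹) N
  simp only [← div_eq_mul_inv] at hasSum
  exact (sum_le_hasSum s (fun j _ => div_nonneg (h.cauchyWeight_nonneg N j) (h.left_pos j).le)
    hasSum).trans (h.sum_cauchyWeight_div_le_one N)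

lemma summable_limitWeight_div : Summable fun j => limitWeight x y j / x j :=
  summable_of_sum_le (fun j => div_nonneg (h.limitWeight_pos hx j).le (h.left_pos j).le)
    (h.sum_limitWeight_div_le_one hx)

end Interlacing

lemma norm_sub_inner_smul_sq_le {E : Type*} [NormedAddCommGroup E] [InnerProductSpace ℂ E]
    {v : E} (hv : ‖v‖ ≤ 1) (r : E) :
    ‖r - ⟪v, r⟫_ℂ • v‖ ^ 2 ≤ ‖r‖ ^ 2 - ‖⟪v, r⟫_ℂ‖ ^ 2 := by
  have expand : ‖r - ⟪v, r⟫_ℂ • v‖ ^ 2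
      = ‖r‖ ^ 2 - 2 * ‖⟪v, r⟫_ℂ‖ ^ 2 + ‖⟪v, r⟫_ℂ‖ ^ 2 * ‖v‖ ^ 2 := by
    rw [@norm_sub_sq ℂ, inner_smul_right, norm_smul, ← inner_conj_symm r v, Complex.mul_conj,
      Complex.normSq_eq_norm_sq, mul_pow]
    simp only [RCLike.re_to_complex, Complex.ofReal_re]
  have := mul_le_of_le_one_right (sq_nonneg ‖⟪v, r⟫_ℂ‖) (pow_le_one₀ (n := 2) (norm_nonneg v) hv)
  linarith

lemma one_sub_rankOne_apply (v x : L2) : (1 - rankOne ℂ v v : Op) x = x - ⟪v, x⟫_ℂ • v := rfl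

lemma star_one_sub_rankOne (v : L2) : star (1 - rankOne ℂ v v : Op) = 1 - rankOne ℂ v v := by
  rw [star_sub, star_one, ContinuousLinearMap.star_eq_adjoint, adjoint_rankOne]

lemma re_inner_star_mul_one_sub_rankOne_mul (B : Op) (v x : L2) :
    (⟪x, (star B * (1 - rankOne ℂ v v) * B) x⟫_ℂ).re = ‖B x‖ ^ 2 - ‖⟪v, B x⟫_ℂ‖ ^ 2 := by
  have adjoint_move : ⟪x, (star B * (1 - rankOne ℂ v v) * B) x⟫_ℂ
      = ⟪B x, B x - ⟪v, B x⟫_ℂ • v⟫_ℂ := by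
    rw [mul_assoc, mul_apply_eq_comp, ContinuousLinearMap.star_eq_adjoint,
      ContinuousLinearMap.adjoint_inner_right]
    rfl
  rw [adjoint_move, inner_sub_right, inner_smul_right, ← inner_conj_symm (B x) v, Complex.mul_conj,
    Complex.normSq_eq_norm_sq, inner_self_eq_ofReal_norm_sq, ← Complex.ofReal_sub,
    Complex.ofReal_re]

/-- The compression `star B * (1 - v ⊗ v) * B` is nonnegative, so it vanishes with its trace. -/
lemma one_sub_rankOne_mul_eq_zero {v : L2} (hv : ‖v‖ ≤ 1) {B : Op}
    (h : HasSum (fun n => ‖B (basisVec n)‖ ^ 2 - ‖⟪v, B (basisVec n)⟫_ℂ‖ ^ 2) 0) :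
    (1 - rankOne ℂ v v) * B = 0 := by
  have defect (n : ℕ) := norm_sub_inner_smul_sq_le hv (B (basisVec n))
  have diagonal_eq_zero :=
    (hasSum_zero_iff_of_nonneg fun n => (sq_nonneg _).trans (defect n)).1 h
  refine Op.ext_basisVec fun n => ?_
  have := (defect n).trans_eq (congrFun diagonal_eq_zero n)
  exact norm_eq_zero.1 (pow_eq_zero_iff two_ne_zero |>.1 (this.antisymm (sq_nonneg _)))

/-- The positive operator `star B * (1 - v ⊗ v) * B` is diagonalized by an isometry `F` as soon as
the eigenvalues carried by `F` exhaust its trace. -/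
lemma star_mul_one_sub_rankOne_mul_eq {v : L2} (hv : ‖v‖ ≤ 1) {B F E : Op} (hF : star F * F = 1)
    (intertwines : star B * (1 - rankOne ℂ v v) * B * F = F * E)
    (trace_eq : HasSum (fun n => ‖B (basisVec n)‖ ^ 2 - ‖⟪v, B (basisVec n)⟫_ℂ‖ ^ 2
      - (⟪basisVec n, (F * E * star F) (basisVec n)⟫_ℂ).re) 0) :
    star B * (1 - rankOne ℂ v v) * B = F * E * star F := by
  set T := star B * (1 - rankOne ℂ v v) * B with hT
  set Q : Op := 1 - F * star F with hQ
  have star_T : star T = T := by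
    simp only [hT, star_mul, star_star, star_one_sub_rankOne, mul_assoc]
  have star_Q : star Q = Q := by simp [hQ]
  have T_mul_Q : T * Q = T - F * E * star F := by
    rw [hQ, mul_sub, mul_one, ← mul_assoc, intertwines]
  have star_F_T_Q : star F * (T * Q) = 0 := by
    have : star F * T = star E * star F := by rw [← star_mul, ← intertwines, star_mul, star_T]
    rw [← mul_assoc, this, hQ, mul_sub, mul_one, mul_assoc, ← mul_assoc (star F), hF, one_mul,
      sub_self]
  have Q_T_Q : star (B * Q) * (1 - rankOne ℂ v v) * (B * Q) = T * Q := by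
    calc star (B * Q) * (1 - rankOne ℂ v v) * (B * Q) = Q * (T * Q) := by
          simp only [hT, star_mul, star_Q, mul_assoc]
      _ = T * Q - F * (star F * (T * Q)) := by rw [hQ, sub_mul, one_mul, mul_assoc F]
      _ = T * Q := by rw [star_F_T_Q, mul_zero, sub_zero]
  have vanishes : (1 - rankOne ℂ v v) * (B * Q) = 0 := by
    refine one_sub_rankOne_mul_eq_zero hv ?_
    convert trace_eq using 2 with n
    rw [← re_inner_star_mul_one_sub_rankOne_mul, Q_T_Q, T_mul_Q,
      ← re_inner_star_mul_one_sub_rankOne_mul, ← Complex.sub_re, ← inner_sub_right]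
    rfl
  rw [← sub_eq_zero, ← T_mul_Q, ← Q_T_Q, mul_assoc, vanishes, mul_zero]

lemma exists_isometry_of_eigenvectors {T : Op} (hT : star T = T) {t : ℕ → ℂ}
    (ht : Function.Injective t) {g : ℕ → L2} (g_ne_zero : ∀ m, g m ≠ 0)
    (hg : ∀ m, T (g m) = t m • g m) :
    ∃ F : Op, star F * F = 1 ∧ ∀ m, F (basisVec m) = (‖g m‖ : ℂ)⁻¹ • g m := by
  have symm : T.toLinearMap.IsSymmetric :=
    (ContinuousLinearMap.isSelfAdjoint_iff_isSymmetric (A := T)).1 hT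
  refine exists_isometry_of_orthonormal ⟨fun m => by simp [norm_smul, g_ne_zero m], ?_⟩
  intro m k hmk
  have : ⟪g m, g k⟫_ℂ = 0 := symm.orthogonalFamily_eigenspaces (ht.ne hmk)
    ⟨g m, Module.End.mem_eigenspace_iff.2 (hg m)⟩ ⟨g k, Module.End.mem_eigenspace_iff.2 (hg k)⟩
  simp only [inner_smul_left, inner_smul_right, this, mul_zero]

lemma conjOp_eq_self_of_star_basisVec {X : Op}
    (h : ∀ n, star (X (basisVec n)) = X (basisVec n)) : conjOp X = X :=
  Op.ext_basisVec fun n => by rw [conjOp_apply, star_basisVec, h]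

lemma SimpleSpectrum.inner_mul_diag_sq_mul_star_apply {a : ℕ → ℝ} (ha : SimpleSpectrum a) (W : Op)
    (x : L2) : ⟪x, (W * ha.diag ^ 2 * star W) x⟫_ℂ = (‖ha.diag (star W x)‖ ^ 2 : ℝ) := by
  have factor : W * ha.diag ^ 2 * star W = W * ha.diag * star (W * ha.diag) := by
    simp only [star_mul, ha.star_diag, pow_two, mul_assoc]
  rw [factor, inner_mul_star_apply, star_mul, ha.star_diag]
  rfl

/-- A rank-one perturbation `D (1 - v ⊗ v) D` of `D² = diag (a n ^ 2)`, with `v` positive and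
`‖v‖ ≤ 1`, whose nonzero spectrum is simple and equal to `{b m ^ 2}`. The real isometry `F` has
the normalized eigenvectors as columns. -/
structure SpectralModel {a b : ℕ → ℝ} (ha : SimpleSpectrum a) (hb : SimpleSpectrum b) where
  weight : ℕ → ℝ
  weight_pos : ∀ j, 0 < weight j
  v : L2
  v_apply : ∀ j, v j = weight j
  norm_v_le : ‖v‖ ≤ 1
  F : Op
  star_F_mul_F : star F * F = 1
  conjOp_F : conjOp F = F
  diag_mul_mul_diag : ha.diag * (1 - rankOne ℂ v v) * ha.diag = F * hb.diag ^ 2 * star F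

namespace Interlacing

variable {a b : ℕ → ℝ} (h : Interlacing a b) (hsum : Summable fun j => a j ^ 2)

include h hsum

lemma simpleSpectrum_left : SimpleSpectrum a := ⟨h.left_pos, h.left_strictAnti, hsum⟩

lemma simpleSpectrum_right : SimpleSpectrum b :=
  ⟨h.right_pos, h.right_strictAnti, h.sq.summable_right hsum⟩

/-- The vector with entries `√(w j) / a j`, for the weights `w` of the partial fraction
decomposition attached to the interlacing squares `a j ^ 2` and `b m ^ 2`. -/
def defectVec : L2 :=
  ⟨fun j => (√(limitWeight (a · ^ 2) (b · ^ 2) j / a j ^ 2) : ℝ),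
    memℓp_two_of_norm_sq_le (h.sq.summable_limitWeight_div hsum) fun j => by
      rw [Complex.norm_real, Real.norm_eq_abs, sq_abs, Real.sq_sqrt
        (div_nonneg (h.sq.limitWeight_pos hsum j).le (sq_nonneg _))]⟩

lemma norm_defectVec_apply_sq (j : ℕ) :
    ‖h.defectVec hsum j‖ ^ 2 = limitWeight (a · ^ 2) (b · ^ 2) j / a j ^ 2 := by
  change ‖((√_ : ℝ) : ℂ)‖ ^ 2 = _
  rw [Complex.norm_real, Real.norm_eq_abs, sq_abs, Real.sq_sqrt
    (div_nonneg (h.sq.limitWeight_pos hsum j).le (sq_nonneg _))]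

lemma norm_defectVec_le_one : ‖h.defectVec hsum‖ ≤ 1 := by
  rw [← sq_le_one_iff₀ (norm_nonneg _), ← (hasSum_norm_sq (h.defectVec hsum)).tsum_eq]
  simp only [norm_defectVec_apply_sq]
  exact (h.sq.summable_limitWeight_div hsum).tsum_le_of_sum_le
    (h.sq.sum_limitWeight_div_le_one hsum)

lemma ofReal_mul_norm_defectVec_sq (j : ℕ) :
    ‖(a j : ℂ) * h.defectVec hsum j‖ ^ 2 = limitWeight (a · ^ 2) (b · ^ 2) j := by
  rw [norm_mul, mul_pow, norm_defectVec_apply_sq, Complex.norm_real, Real.norm_eq_abs, sq_abs,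
    mul_div_cancel₀ _ (pow_ne_zero 2 (h.left_pos j).ne')]

omit hsum in
lemma ofReal_sq_sub_ne_zero (j m : ℕ) : (a j : ℂ) ^ 2 - (b m : ℂ) ^ 2 ≠ 0 := by
  exact_mod_cast sub_ne_zero.2 (h.sq.left_ne_right j m)

/-- The eigenvector of `D (1 - v ⊗ v) D` for the eigenvalue `b m ^ 2`, where `v` is the defect
vector, normalized so that `⟪v, D g⟫ = 1`. -/
def modelEigenvector (m : ℕ) : L2 :=
  ⟨fun j => a j * h.defectVec hsum j / ((a j : ℂ) ^ 2 - (b m : ℂ) ^ 2), by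
    obtain ⟨δ, hδ, gap⟩ := h.sq.exists_pos_le_abs_sub m
    refine memℓp_two_of_norm_sq_le ((h.sq.summable_limitWeight hsum).div_const (δ ^ 2)) fun j => ?_
    rw [norm_div, div_pow, ofReal_mul_norm_defectVec_sq]
    gcongr
    · exact (h.sq.limitWeight_pos hsum j).le
    · exact_mod_cast (gap j).trans_eq (Complex.norm_real _).symm⟩

lemma modelEigenvector_apply (m j : ℕ) : h.modelEigenvector hsum m j
    = a j * h.defectVec hsum j / ((a j : ℂ) ^ 2 - (b m : ℂ) ^ 2) := rfl

lemma star_modelEigenvector (m : ℕ) :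
    star (h.modelEigenvector hsum m) = h.modelEigenvector hsum m := by
  ext j
  have conj_v : conj (h.defectVec hsum j) = h.defectVec hsum j := Complex.conj_ofReal _
  change conj (a j * h.defectVec hsum j / ((a j : ℂ) ^ 2 - (b m : ℂ) ^ 2)) = _
  simp only [modelEigenvector_apply, map_div₀, map_mul, map_sub, map_pow, Complex.conj_ofReal,
    conj_v]

lemma inner_defectVec_diag_modelEigenvector (m : ℕ) :
    ⟪h.defectVec hsum, (h.simpleSpectrum_left hsum).diag (h.modelEigenvector hsum m)⟫_ℂ = 1 := by
  rw [inner_eq_tsum_conj_mul]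
  have term (j : ℕ) : conj (h.defectVec hsum j)
        * (h.simpleSpectrum_left hsum).diag (h.modelEigenvector hsum m) j
      = ((limitWeight (a · ^ 2) (b · ^ 2) j / (a j ^ 2 - b m ^ 2) : ℝ) : ℂ) := by
    rw [SimpleSpectrum.diag_apply, modelEigenvector_apply, ← h.ofReal_mul_norm_defectVec_sq hsum]
    push_cast
    rw [← Complex.mul_conj', map_mul, Complex.conj_ofReal]
    ring
  simp only [term, ← Complex.ofReal_tsum]
  rw [(h.sq.hasSum_limitWeight_div_sub hsum m).tsum_eq, Complex.ofReal_one]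

lemma modelEigenvector_ne_zero (m : ℕ) : h.modelEigenvector hsum m ≠ 0 := fun h0 => by
  simpa [h0] using h.inner_defectVec_diag_modelEigenvector hsum m

lemma apply_modelEigenvector (m : ℕ) :
    ((h.simpleSpectrum_left hsum).diag * (1 - rankOne ℂ (h.defectVec hsum) (h.defectVec hsum))
        * (h.simpleSpectrum_left hsum).diag) (h.modelEigenvector hsum m)
      = (b m : ℂ) ^ 2 • h.modelEigenvector hsum m := by
  rw [mul_assoc, mul_apply_eq_comp, mul_apply_eq_comp, one_sub_rankOne_apply,
    inner_defectVec_diag_modelEigenvector, one_smul, map_sub]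
  ext j
  have := h.ofReal_sq_sub_ne_zero j m
  change (a j : ℂ) * (a j * h.modelEigenvector hsum m j) - a j * h.defectVec hsum j
    = (b m : ℂ) ^ 2 * h.modelEigenvector hsum m j
  rw [modelEigenvector_apply]
  field_simp
  ring

lemma hasSum_trace_defect {F : Op} (hF : star F * F = 1) :
    HasSum (fun n => ‖(h.simpleSpectrum_left hsum).diag (basisVec n)‖ ^ 2
      - ‖⟪h.defectVec hsum, (h.simpleSpectrum_left hsum).diag (basisVec n)⟫_ℂ‖ ^ 2
      - ‖(h.simpleSpectrum_right hsum).diag (star F (basisVec n))‖ ^ 2) 0 := by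
  have diff := (hsum.hasSum.sub (h.sq.hasSum_limitWeight hsum)).sub
    ((h.simpleSpectrum_right hsum).hasSum_norm_sq_diag_star_apply hF)
  rw [hsum.tsum_sub (h.sq.summable_right hsum), sub_sub_cancel, sub_self] at diff
  refine diff.congr_fun fun n => ?_
  congr 2
  · rw [SimpleSpectrum.diag_basisVec, norm_smul, norm_basisVec]
    simp
  · rw [SimpleSpectrum.diag_basisVec, inner_smul_right, inner_basisVec_right,
      ← h.ofReal_mul_norm_defectVec_sq hsum, norm_mul, norm_mul, RCLike.norm_conj]

theorem nonempty_spectralModel :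
    Nonempty (SpectralModel (h.simpleSpectrum_left hsum) (h.simpleSpectrum_right hsum)) := by
  have star_D := (h.simpleSpectrum_left hsum).star_diag
  set D := (h.simpleSpectrum_left hsum).diag
  set v := h.defectVec hsum
  obtain ⟨F, star_F_mul_F, F_basisVec⟩ := exists_isometry_of_eigenvectors
    (T := D * (1 - rankOne ℂ v v) * D)
    (by simp only [star_mul, star_one_sub_rankOne, star_D, mul_assoc])
    (h.simpleSpectrum_right hsum).ofReal_sq_injective (h.modelEigenvector_ne_zero hsum)
    (h.apply_modelEigenvector hsum)
  have intertwines : star D * (1 - rankOne ℂ v v) * D * F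
      = F * (h.simpleSpectrum_right hsum).diag ^ 2 := Op.ext_basisVec fun m => by
    rw [star_D, mul_apply_eq_comp, mul_apply_eq_comp F, SimpleSpectrum.diag_sq_basisVec, map_smul,
      F_basisVec, map_smul, h.apply_modelEigenvector hsum, smul_comm]
  have conjOp_F : conjOp F = F := conjOp_eq_self_of_star_basisVec fun n => by
    rw [F_basisVec, star_smul, star_modelEigenvector, RCLike.star_def, map_inv₀,
      Complex.conj_ofReal]
  have diagonalized := star_mul_one_sub_rankOne_mul_eq (h.norm_defectVec_le_one hsum)
    star_F_mul_F intertwines <| by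
      simpa only [SimpleSpectrum.inner_mul_diag_sq_mul_star_apply, Complex.ofReal_re]
        using h.hasSum_trace_defect hsum star_F_mul_F
  rw [star_D] at diagonalized
  exact ⟨⟨_, fun j => Real.sqrt_pos.2 (div_pos (h.sq.limitWeight_pos hsum j)
    (pow_pos (h.left_pos j) 2)), v, fun j => rfl, h.norm_defectVec_le_one hsum, F, star_F_mul_F,
    conjOp_F, diagonalized⟩⟩

end Interlacing

/-! ### Contractions with a rank-one defect -/

lemma isCompactOperator_of_summable_norm_sq {X : Op}
    (h : Summable fun n => ‖X (basisVec n)‖ ^ 2) : IsCompactOperator X := by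
  have rows := (hasSum_norm_sq_star_apply_basisVec h.hasSum).summable
  refine ⟨_, isCompact_hilbertCube rows, mem_of_superset
    (Metric.closedBall_mem_nhds 0 one_pos) fun x hx n => ?_⟩
  calc ‖X x n‖ = ‖⟪star X (basisVec n), x⟫_ℂ‖ := by
        rw [ContinuousLinearMap.star_eq_adjoint, ContinuousLinearMap.adjoint_inner_left,
          inner_basisVec_left]
    _ ≤ ‖star X (basisVec n)‖ * ‖x‖ := norm_inner_le_norm _ _
    _ ≤ ‖star X (basisVec n)‖ := mul_le_of_le_one_right (norm_nonneg _) (by simpa using hx)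

section Contraction

variable {X : Op} (hX : ‖X‖ ≤ 1)

include hX

lemma norm_apply_le_of_contraction (x : L2) : ‖X x‖ ≤ ‖x‖ := by
  simpa using X.le_of_opNorm_le hX x

lemma pow_contraction (n : ℕ) : ‖X ^ n‖ ≤ 1 :=
  have : Nontrivial L2 := ⟨_, _, basisVec_ne_zero 0⟩
  (norm_pow_le X n).trans (pow_le_one₀ (norm_nonneg X) hX)

lemma star_contraction : ‖star X‖ ≤ 1 := (norm_star X).trans_le hX

lemma star_apply_apply_of_norm_eq {x : L2} (hx : ‖X x‖ = ‖x‖) : star X (X x) = x := by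
  have inner_eq : RCLike.re ⟪star X (X x), x⟫_ℂ = ‖x‖ ^ 2 := by
    rw [ContinuousLinearMap.star_eq_adjoint, ContinuousLinearMap.adjoint_inner_left,
      inner_self_eq_norm_sq, hx]
  have norm_le : ‖star X (X x)‖ ≤ ‖x‖ :=
    hx ▸ norm_apply_le_of_contraction (star_contraction hX) (X x)
  have expand := @norm_sub_sq ℂ L2 _ _ _ (star X (X x)) x
  rw [inner_eq] at expand
  have : ‖star X (X x) - x‖ = 0 := by
    nlinarith [norm_nonneg (star X (X x)), norm_nonneg (star X (X x) - x), norm_nonneg x]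
  exact sub_eq_zero.1 (norm_eq_zero.1 this)

lemma antitone_norm_pow_apply (x : L2) : Antitone fun n => ‖(X ^ n) x‖ :=
  antitone_nat_of_succ_le fun n => by
    rw [pow_succ', mul_apply_eq_comp]
    exact norm_apply_le_of_contraction hX _

/-- The orbit returns close to its origin since the isometries `X ^ i` carry two nearby points
`X ^ i x`, `X ^ (i + n) x` of the orbit back to `x` and `X ^ n x`. -/
lemma frequently_norm_pow_apply_sub_lt {x : L2} (hx : ∀ n, ‖(X ^ n) x‖ = ‖x‖) {K : Set L2}
    (hK : IsCompact K) (mem : ∀ n, (X ^ n) x ∈ K) {ε : ℝ} (hε : 0 < ε) :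
    ∃ᶠ n in atTop, ‖(X ^ n) x - x‖ < ε := by
  obtain ⟨y, -, φ, φ_mono, tends⟩ := hK.tendsto_subseq mem
  obtain ⟨N, close⟩ := Metric.cauchySeq_iff.1 tends.cauchySeq ε hε
  refine frequently_atTop.2 fun m => ⟨φ (N + (φ N + m)) - φ N, ?_, ?_⟩
  · have := φ_mono.le_apply (x := N + (φ N + m))
    omega
  · set i := φ N
    set n := φ (N + (φ N + m)) - i with _
    have split : φ (N + (φ N + m)) = i + n := by
      have := φ_mono.monotone (Nat.le_add_right N (φ N + m))
      omega
    have recover : ∀ k, star (X ^ i) ((X ^ (i + k)) x) = (X ^ k) x := fun k => by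
      rw [pow_add, mul_apply_eq_comp]
      refine star_apply_apply_of_norm_eq (pow_contraction hX i) ?_
      rw [← mul_apply_eq_comp, ← pow_add, hx, hx]
    calc ‖(X ^ n) x - x‖ = ‖star (X ^ i) ((X ^ (i + n)) x - (X ^ i) x)‖ := by
          rw [map_sub, recover, show star (X ^ i) ((X ^ i) x) = x from recover 0]
      _ ≤ ‖(X ^ (i + n)) x - (X ^ i) x‖ :=
          norm_apply_le_of_contraction (star_contraction (pow_contraction hX i)) _
      _ < ε := by
          rw [← split, ← dist_eq_norm]
          exact close _ (Nat.le_add_right _ _) _ le_rfl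

end Contraction

/-- A contraction `A` with rank-one defect `1 - A⋆ A = w ⊗ w` that is intertwined by `P` with its
transpose. Such pairs `(A, w)` generate Hankel operators by the coefficients
`⟪w, A ^ n (P w̄)⟫`. -/
structure TransferOperator (P : Op) where
  A : Op
  w : L2
  star_A_mul_A : star A * A = 1 - rankOne ℂ w w
  A_mul : A * P = P * conjOp (star A)

namespace TransferOperator

variable {P : Op} (T : TransferOperator P)

lemma norm_A_apply_sq (x : L2) : ‖T.A x‖ ^ 2 = ‖x‖ ^ 2 - ‖⟪T.w, x⟫_ℂ‖ ^ 2 := by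
  have h := re_inner_star_mul_one_sub_rankOne_mul 1 T.w x
  rw [star_one, one_mul, mul_one, ← T.star_A_mul_A, mul_apply_eq_comp,
    ContinuousLinearMap.star_eq_adjoint, ContinuousLinearMap.adjoint_inner_right,
    inner_self_eq_ofReal_norm_sq] at h
  exact h

lemma norm_A_le : ‖T.A‖ ≤ 1 :=
  T.A.opNorm_le_bound zero_le_one fun x => by
    have sq_le : ‖T.A x‖ ^ 2 ≤ ‖x‖ ^ 2 :=
      (T.norm_A_apply_sq x).trans_le (sub_le_self _ (sq_nonneg _))
    rw [one_mul]
    exact le_of_sq_le_sq sq_le (norm_nonneg x)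

lemma norm_pow_A_apply_le (n : ℕ) (x : L2) : ‖(T.A ^ n) x‖ ≤ ‖x‖ :=
  norm_apply_le_of_contraction (pow_contraction T.norm_A_le n) x

lemma pow_A_apply_apply_star (n : ℕ) (x : L2) :
    (T.A ^ n) (P (star x)) = P (star (star (T.A ^ n) x)) := by
  have h : SemiconjBy P (conjOp (star T.A)) T.A := T.A_mul.symm
  rw [← mul_apply_eq_comp, ← (h.pow_right n).eq, mul_apply_eq_comp, ← map_pow, ← star_pow,
    conjOp_apply, star_star]

lemma exists_isCompact_orbit (hP : IsCompactOperator P) (x : L2) :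
    ∃ K, IsCompact K ∧ ∀ n, (T.A ^ n) (P x) ∈ K := by
  obtain ⟨K, hK, image_subset⟩ := hP.image_closedBall_subset_compact (f := P.toLinearMap) ‖x‖
  refine ⟨K, hK, fun n => image_subset ⟨star (star (T.A ^ n) (star x)), ?_, ?_⟩⟩
  · rw [mem_closedBall_zero_iff, norm_star, ← norm_star x]
    exact norm_apply_le_of_contraction (star_contraction (pow_contraction T.norm_A_le n)) _
  · exact (T.pow_A_apply_apply_star n (star x)).symm.trans (by rw [star_star])

/-- The vectors of the isometric part of `A` having a relatively compact orbit. -/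
def IsPersistent (x : L2) : Prop :=
  (∀ n, ‖(T.A ^ n) x‖ = ‖x‖) ∧ ∃ K, IsCompact K ∧ ∀ n, (T.A ^ n) x ∈ K

variable {T}

lemma IsPersistent.inner_eq_zero {x : L2} (hx : T.IsPersistent x) : ⟪T.w, x⟫_ℂ = 0 := by
  have h := T.norm_A_apply_sq x
  rw [← pow_one T.A, hx.1 1] at h
  exact norm_eq_zero.1 (pow_eq_zero_iff two_ne_zero |>.1 (by linarith))

/-- Along a sequence of returns `A ^ n x → x` one has `A⋆ ^ n x → x` too, hence
`A ^ n (P x̄) = P (A⋆ ^ n x)⁻ → P x̄`, so that no norm is lost along the orbit of `P x̄`. -/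
lemma IsPersistent.apply_star (hP : IsCompactOperator P) {x : L2} (hx : T.IsPersistent x) :
    T.IsPersistent (P (star x)) := by
  obtain ⟨isometric, K, hK, mem⟩ := hx
  refine ⟨fun n => (T.norm_pow_A_apply_le n _).antisymm (le_of_forall_pos_sub_le fun ε hε => ?_),
    T.exists_isCompact_orbit hP (star x)⟩
  have return_le (m : ℕ) :
      ‖(T.A ^ m) (P (star x)) - P (star x)‖ ≤ ‖P‖ * ‖(T.A ^ m) x - x‖ := by
    have backward : ‖star (T.A ^ m) x - x‖ ≤ ‖(T.A ^ m) x - x‖ := by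
      have contr := pow_contraction T.norm_A_le m
      rw [norm_sub_rev]
      nth_rw 1 [← star_apply_apply_of_norm_eq contr (isometric m)]
      rw [← map_sub]
      exact norm_apply_le_of_contraction (star_contraction contr) _
    calc ‖(T.A ^ m) (P (star x)) - P (star x)‖ = ‖P (star (star (T.A ^ m) x - x))‖ := by
          rw [pow_A_apply_apply_star, ← map_sub, ← star_sub]
      _ ≤ ‖P‖ * ‖star (T.A ^ m) x - x‖ := by
          rw [← norm_star (star (T.A ^ m) x - x)]
          exact P.le_opNorm _
      _ ≤ ‖P‖ * ‖(T.A ^ m) x - x‖ := by gcongr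
  obtain ⟨m, hnm, close⟩ := frequently_atTop.1 (frequently_norm_pow_apply_sub_lt T.norm_A_le
    isometric hK mem (div_pos hε (add_pos_of_nonneg_of_pos (norm_nonneg P) one_pos))) n
  rw [lt_div_iff₀ (by positivity)] at close
  have loss := norm_sub_norm_le (P (star x)) ((T.A ^ m) (P (star x)))
  have mono : ‖(T.A ^ m) (P (star x))‖ ≤ ‖(T.A ^ n) (P (star x))‖ :=
    antitone_norm_pow_apply T.norm_A_le (P (star x)) hnm
  rw [norm_sub_rev] at loss
  nlinarith [return_le m, norm_nonneg ((T.A ^ m) x - x)]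

lemma IsPersistent.eq_zero (hP : IsCompactOperator P) (hsymm : conjOp P = star P)
    (cyclic : ∀ z, (∀ k, ⟪T.w, ((P * star P) ^ k) z⟫_ℂ = 0) → z = 0) {x : L2}
    (hx : T.IsPersistent x) : x = 0 := by
  refine cyclic x fun k => IsPersistent.inner_eq_zero ?_
  induction k with
  | zero => exact hx
  | succ k ih =>
    have square : ∀ z, (P * star P) z = P (star (P (star z))) := fun z => by
      rw [← hsymm, mul_apply_eq_comp, conjOp_apply]
    rw [pow_succ', mul_apply_eq_comp, square]
    exact (ih.apply_star hP).apply_star hP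

lemma tendsto_pow_A_apply_apply (hP : IsCompactOperator P) (hsymm : conjOp P = star P)
    (cyclic : ∀ z, (∀ k, ⟪T.w, ((P * star P) ^ k) z⟫_ℂ = 0) → z = 0) (x : L2) :
    Tendsto (fun n => (T.A ^ n) (P x)) atTop (𝓝 0) := by
  obtain ⟨K, hK, mem⟩ := T.exists_isCompact_orbit hP x
  obtain ⟨z, -, φ, φ_mono, tends⟩ := hK.tendsto_subseq mem
  have norm_tendsto := tendsto_atTop_ciInf (antitone_norm_pow_apply T.norm_A_le (P x))
    ⟨0, Set.forall_mem_range.2 fun n => norm_nonneg _⟩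
  set L := ⨅ n, ‖(T.A ^ n) (P x)‖
  have shifted (n : ℕ) :
      Tendsto (fun m => (T.A ^ (n + φ m)) (P x)) atTop (𝓝 ((T.A ^ n) z)) := by
    simp only [pow_add, mul_apply_eq_comp]
    exact ((T.A ^ n).continuous.tendsto z).comp tends
  have norm_eq : ∀ n, ‖(T.A ^ n) z‖ = L := fun n =>
    tendsto_nhds_unique (shifted n).norm
      (norm_tendsto.comp (tendsto_atTop_mono (fun m => Nat.le_add_left _ n) φ_mono.tendsto_atTop))
  have persistent : T.IsPersistent z :=
    ⟨fun n => (norm_eq n).trans (norm_eq 0).symm, K, hK,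
      fun n => hK.isClosed.mem_of_tendsto (shifted n) (Eventually.of_forall fun m => mem _)⟩
  have L_eq_zero : L = 0 := by
    rw [← norm_eq 0, persistent.eq_zero hP hsymm cyclic, map_zero, norm_zero]
  exact tendsto_zero_iff_norm_tendsto_zero.2 (L_eq_zero ▸ norm_tendsto)

theorem tendsto_pow_A_apply (hP : IsCompactOperator P) (hsymm : conjOp P = star P)
    (cyclic : ∀ z, (∀ k, ⟪T.w, ((P * star P) ^ k) z⟫_ℂ = 0) → z = 0) (dense : DenseRange P)
    (x : L2) : Tendsto (fun n => (T.A ^ n) x) atTop (𝓝 0) := by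
  have equicontinuous : Equicontinuous fun n x => (T.A ^ n) x :=
    (LipschitzWith.uniformEquicontinuous _ 1 fun n =>
      LipschitzWith.of_dist_le_mul fun x y => by
        rw [NNReal.coe_one, one_mul, dist_eq_norm, dist_eq_norm, ← map_sub]
        exact T.norm_pow_A_apply_le n _).equicontinuous
  refine dense.induction_on (p := fun x => Tendsto (fun n => (T.A ^ n) x) atTop (𝓝 0)) x
    (equicontinuous.isClosed_setOfPred_tendsto continuous_const) fun x =>
      tendsto_pow_A_apply_apply hP hsymm cyclic x

end TransferOperator

/-- Dividing by `x j ^ k` and letting `k → ∞` isolates the first nonvanishing coefficient. -/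
lemma eq_zero_of_forall_tsum_mul_pow_eq_zero {a : ℕ → ℂ} (ha : Summable fun j => ‖a j‖)
    {x : ℕ → ℝ} (hx : StrictAnti x) (hx0 : ∀ j, 0 < x j)
    (h : ∀ k : ℕ, ∑' j, a j * (x j : ℂ) ^ k = 0) (j : ℕ) : a j = 0 := by
  induction j using Nat.strong_induction_on with
  | _ j ih =>
  have ratio_norm : ∀ i, ‖((x i / x j : ℝ) : ℂ)‖ = x i / x j := fun i => by
    rw [Complex.norm_real, Real.norm_of_nonneg (div_pos (hx0 i) (hx0 j)).le]
  have isolate : Tendsto (fun k : ℕ => ∑' i, a i * ((x i / x j : ℝ) : ℂ) ^ k) atTop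
      (𝓝 (∑' i, if i = j then a j else 0)) := by
    refine tendsto_tsum_of_dominated_convergence ha (fun i => ?_)
      (Eventually.of_forall fun k i => ?_)
    · rcases lt_trichotomy i j with hij | rfl | hij
      · simp [ih i hij, hij.ne]
      · simp [div_self (hx0 i).ne']
      · rw [if_neg hij.ne']
        have := tendsto_pow_atTop_nhds_zero_of_norm_lt_one
          ((ratio_norm i).trans_lt ((div_lt_one (hx0 j)).2 (hx hij)))
        simpa only [mul_zero] using this.const_mul (a i)
    · rcases lt_or_ge i j with hij | hij
      · simp [ih i hij]
      · rw [norm_mul, norm_pow, ratio_norm]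
        exact mul_le_of_le_one_right (norm_nonneg _) (pow_le_one₀ (div_pos (hx0 i) (hx0 j)).le
          ((div_le_one (hx0 j)).2 (hx.antitone hij)))
  have vanish : ∀ k, ∑' i, a i * ((x i / x j : ℝ) : ℂ) ^ k = 0 := fun k => by
    simp only [Complex.ofReal_div, div_pow, ← mul_div_assoc, tsum_div_const, h k, zero_div]
  simp only [vanish, tsum_ite_eq] at isolate
  exact tendsto_nhds_unique isolate tendsto_const_nhds

namespace SimpleSpectrum

variable {a : ℕ → ℝ} (ha : SimpleSpectrum a)

lemma diag_sq_pow_apply (k : ℕ) (x : L2) (n : ℕ) :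
    ((ha.diag ^ 2) ^ k) x n = (a n : ℂ) ^ (2 * k) * x n := by
  induction k with
  | zero => simp
  | succ k ih =>
    rw [pow_succ', mul_apply_eq_comp, diag_sq_apply, ih]
    ring

lemma eq_zero_of_inner_diag_sq_pow_eq_zero {w : L2} (hw : ∀ n, w n ≠ 0) {z : L2}
    (h : ∀ k, ⟪w, ((ha.diag ^ 2) ^ k) z⟫_ℂ = 0) : z = 0 := by
  have summable : Summable fun n => ‖conj (w n) * z n‖ :=
    (lp.summable_inner (𝕜 := ℂ) w z).norm.congr fun n => by rw [RCLike.inner_apply']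
  have moments : ∀ k : ℕ, ∑' n, conj (w n) * z n * ((a n ^ 2 : ℝ) : ℂ) ^ k = 0 := fun k => by
    rw [← h k, inner_eq_tsum_conj_mul]
    refine tsum_congr fun n => ?_
    rw [diag_sq_pow_apply]
    push_cast
    ring
  ext n
  exact (mul_eq_zero.1 (eq_zero_of_forall_tsum_mul_pow_eq_zero summable ha.sq_strictAnti
    (fun n => pow_pos (ha.pos n) 2) moments n)).resolve_left ((map_ne_zero _).2 (hw n))

end SimpleSpectrum

lemma exists_isometry_of_hasSum {f : ℕ → L2 →ₗ[ℂ] ℂ}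
    (h : ∀ x, HasSum (fun n => ‖f n x‖ ^ 2) (‖x‖ ^ 2)) :
    ∃ W : Op, star W * W = 1 ∧ ∀ x n, W x n = f n x := by
  let toFun (x : L2) : L2 :=
    ⟨fun n => f n x, memℓp_two_of_norm_sq_le (h x).summable fun n => le_rfl⟩
  have norm_eq : ∀ x, ‖toFun x‖ = ‖x‖ := fun x => by
    have := (hasSum_norm_sq (toFun x)).unique (h x)
    rwa [sq_eq_sq₀ (norm_nonneg _) (norm_nonneg _)] at this
  let W : L2 →ₗᵢ[ℂ] L2 :=
    { toFun := toFun
      map_add' := fun x y => lp.ext (funext fun n => map_add (f n) x y)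
      map_smul' := fun c x => lp.ext (funext fun n => map_smul (f n) c x)
      norm_map' := norm_eq }
  exact ⟨W.toContinuousLinearMap,
    (ContinuousLinearMap.norm_map_iff_adjoint_comp_self _).1 norm_eq, fun x n => rfl⟩

namespace TransferOperator

variable {P : Op} (T : TransferOperator P)

/-- The coefficients of the Hankel operator generated by a transfer operator. -/
def hankelSymbol (n : ℕ) : ℂ := ⟪T.w, (T.A ^ n) (P (star T.w))⟫_ℂ

lemma hasSum_norm_sq_inner (stable : ∀ x, Tendsto (fun n => (T.A ^ n) x) atTop (𝓝 0)) (x : L2) :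
    HasSum (fun n => ‖⟪T.w, (T.A ^ n) x⟫_ℂ‖ ^ 2) (‖x‖ ^ 2) := by
  have telescope : ∀ N, ∑ n ∈ Finset.range N, ‖⟪T.w, (T.A ^ n) x⟫_ℂ‖ ^ 2
      = ‖x‖ ^ 2 - ‖(T.A ^ N) x‖ ^ 2 := fun N => by
    induction N with
    | zero => simp
    | succ N ih =>
      rw [Finset.sum_range_succ, ih, pow_succ' T.A, mul_apply_eq_comp, norm_A_apply_sq]
      ring
  rw [hasSum_iff_tendsto_nat_of_nonneg fun n => sq_nonneg _]
  simp only [telescope]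
  simpa using ((stable x).norm.pow 2).const_sub (‖x‖ ^ 2)

lemma exists_observation (stable : ∀ x, Tendsto (fun n => (T.A ^ n) x) atTop (𝓝 0)) :
    ∃ W : Op, star W * W = 1 ∧ ∀ x n, W x n = ⟪T.w, (T.A ^ n) x⟫_ℂ :=
  exists_isometry_of_hasSum (f := fun n => (innerSL ℂ T.w ∘L T.A ^ n).toLinearMap)
    (T.hasSum_norm_sq_inner stable)

variable {W : Op} (hW : ∀ x n, W x n = ⟪T.w, (T.A ^ n) x⟫_ℂ)

include hW

lemma star_observation_basisVec (n : ℕ) : star W (basisVec n) = star (T.A ^ n) T.w :=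
  ext_inner_right ℂ fun x => by
    rw [ContinuousLinearMap.star_eq_adjoint, ContinuousLinearMap.adjoint_inner_left,
      inner_basisVec_left, hW, ContinuousLinearMap.star_eq_adjoint,
      ContinuousLinearMap.adjoint_inner_left]

lemma apply_star_conjOp_observation_basisVec (n : ℕ) :
    P (star (conjOp W) (basisVec n)) = (T.A ^ n) (P (star T.w)) := by
  rw [pow_A_apply_apply_star, ← T.star_observation_basisVec hW, ← map_star, conjOp_apply,
    star_basisVec]

end TransferOperator

lemma isHankelOp_of_entries {c : ℕ → ℂ} {Γ : Op} (h : ∀ k n, Γ (basisVec k) n = c (n + k)) :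
    IsHankelOp c Γ := fun x n => by
  rw [← inner_basisVec_left, ← ContinuousLinearMap.adjoint_inner_left,
    ← ContinuousLinearMap.star_eq_adjoint, inner_eq_tsum_conj_mul]
  exact tsum_congr fun k => by rw [star_apply_basisVec_apply, Complex.conj_conj, h]

namespace TransferOperator

variable {P : Op} (T : TransferOperator P) {W : Op} (hW : ∀ x n, W x n = ⟪T.w, (T.A ^ n) x⟫_ℂ)

include hW

lemma isHankelOp_hankelSymbol : IsHankelOp T.hankelSymbol (W * P * star (conjOp W)) :=
  isHankelOp_of_entries fun k n => by
    rw [mul_apply_eq_comp, mul_apply_eq_comp W, T.apply_star_conjOp_observation_basisVec hW, hW,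
      ← mul_apply_eq_comp, ← pow_add]
    rfl

lemma isHankelOp_shiftSeq_hankelSymbol :
    IsHankelOp (shiftSeq T.hankelSymbol) (W * (T.A * P) * star (conjOp W)) :=
  isHankelOp_of_entries fun k n => by
    rw [mul_apply_eq_comp, mul_apply_eq_comp W, mul_apply_eq_comp T.A,
      T.apply_star_conjOp_observation_basisVec hW, hW, ← mul_apply_eq_comp, ← mul_apply_eq_comp,
      ← pow_succ, ← pow_add, add_right_comm]
    rfl

end TransferOperator

lemma continuous_apply_of_contraction {Z : Type*} [TopologicalSpace Z] {X : Z → Op}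
    (hX : ∀ t, ‖X t‖ ≤ 1) (cont : ∀ x, Continuous fun t => X t x) {y : Z → L2}
    (hy : Continuous y) : Continuous fun t => X t (y t) := by
  refine continuous_iff_continuousAt.2 fun s => ?_
  have vanish : Tendsto (fun t => X t (y t - y s)) (𝓝 s) (𝓝 0) := by
    refine squeeze_zero_norm (fun t => norm_apply_le_of_contraction (hX t) _) ?_
    simpa using (hy.sub (continuous_const (y := y s))).norm.tendsto s
  have split := vanish.add ((cont (y s)).tendsto s)
  simp only [map_sub, sub_add_cancel, zero_add] at split
  exact split

lemma norm_phaseOp_le (p : ℕ → Circle) : ‖phaseOp p‖ ≤ 1 :=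
  (phaseOp p).opNorm_le_bound zero_le_one fun x => by
    rw [norm_apply_of_isometry (star_phaseOp_mul_phaseOp p), one_mul]

lemma continuous_phaseOp_apply (x : L2) : Continuous fun p => phaseOp p x :=
  continuous_diagOp_apply (C := 1)
    (fun p => lp.norm_le_of_forall_le zero_le_one fun n => (Circle.norm_coe (p n)).le)
    (fun n => continuous_subtype_val.comp (continuous_apply n)) x

namespace SimpleSpectrum

variable {a : ℕ → ℝ} (ha : SimpleSpectrum a) (p : ℕ → Circle)

lemma isCompactOperator_phasedDiag : IsCompactOperator (ha.phasedDiag p) :=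
  isCompactOperator_of_summable_norm_sq <| ha.summable_sq.congr fun n => by
    rw [phasedDiag, ha.commute_diag_phaseOp, mul_apply_eq_comp,
      norm_apply_of_isometry (star_phaseOp_mul_phaseOp p), ha.diag_basisVec, norm_smul,
      norm_basisVec, mul_one, Complex.norm_real, Real.norm_of_nonneg (ha.pos n).le]

end SimpleSpectrum

lemma inner_star_mul_mul_apply (P X : Op) (x y : L2) :
    ⟪y, (star P * X * P) x⟫_ℂ = ⟪P y, X (P x)⟫_ℂ := by
  rw [mul_assoc, mul_apply_eq_comp, ContinuousLinearMap.star_eq_adjoint,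
    ContinuousLinearMap.adjoint_inner_right, mul_apply_eq_comp]

lemma eq_of_star_mul_mul_eq {P X Y : Op} (hP : DenseRange P)
    (h : star P * X * P = star P * Y * P) : X = Y := by
  have apply_eq (x : L2) : X (P x) = Y (P x) := hP.eq_of_inner_right ℂ fun y => by
    rw [← inner_star_mul_mul_apply, h, inner_star_mul_mul_apply]
  exact DFunLike.coe_injective
    (hP.equalizer X.continuous Y.continuous (funext apply_eq))

lemma rankOne_apply_self (X : Op) (v : L2) :
    rankOne ℂ (X v) (X v) = X * rankOne ℂ v v * star X := by
  change _ = (X ∘L rankOne ℂ v v) ∘L ContinuousLinearMap.adjoint X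
  rw [comp_rankOne, rankOne_comp, ContinuousLinearMap.adjoint_adjoint]

lemma star_mul_one_sub_rankOne_mul_of_isometry {W : Op} (hW : star W * W = 1) (v : L2) :
    star W * (1 - rankOne ℂ (W v) (W v)) * W = 1 - rankOne ℂ v v := by
  calc star W * (1 - rankOne ℂ (W v) (W v)) * W
      = star W * W - star W * W * rankOne ℂ v v * (star W * W) := by
        rw [rankOne_apply_self]
        noncomm_ring
    _ = 1 - rankOne ℂ v v := by rw [hW, one_mul, mul_one]

namespace SpectralModel

variable {a b : ℕ → ℝ} {ha : SimpleSpectrum a} {hb : SimpleSpectrum b} (M : SpectralModel ha hb)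

/-- The square root `F diag (b m) F⋆` of `D (1 - v ⊗ v) D`. -/
def root : Op := M.F * hb.diag * star M.F

lemma star_root : star M.root = M.root := by
  rw [root, star_mul, star_mul, star_star, hb.star_diag, mul_assoc]

lemma root_sq : M.root * M.root = M.F * hb.diag ^ 2 * star M.F := by
  calc M.root * M.root = M.F * hb.diag * (star M.F * M.F) * hb.diag * star M.F := by
        simp only [root, mul_assoc]
    _ = M.F * hb.diag ^ 2 * star M.F := by
        rw [M.star_F_mul_F, mul_one, mul_assoc M.F, pow_two]

lemma norm_root_apply_le (x : L2) : ‖M.root x‖ ≤ 1 * ‖ha.diag x‖ := by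
  have gram := re_inner_star_mul_one_sub_rankOne_mul ha.diag M.v x
  rw [ha.star_diag, M.diag_mul_mul_diag, ← M.root_sq, mul_apply_eq_comp] at gram
  nth_rw 1 [← M.star_root] at gram
  rw [ContinuousLinearMap.star_eq_adjoint, ContinuousLinearMap.adjoint_inner_right,
    inner_self_eq_ofReal_norm_sq, Complex.ofReal_re] at gram
  rw [one_mul]
  exact le_of_sq_le_sq (gram.trans_le (sub_le_self _ (sq_nonneg _))) (norm_nonneg _)

/-- The contraction `R` with `R * D = root`. -/
def rootQuotient : Op := M.root.toLinearMap.extendOfNorm ha.diag.toLinearMap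

lemma rootQuotient_mul_diag : M.rootQuotient * ha.diag = M.root :=
  ContinuousLinearMap.ext fun x =>
    LinearMap.extendOfNorm_eq ha.denseRange_diag ⟨1, M.norm_root_apply_le⟩ x

variable (p q : ℕ → Circle)

/-- The counterpart `F diag (b m * q m) Fᵀ` of `phasedDiag` for the shifted Hankel operator. -/
def phasedRoot : Op := M.F * hb.phasedDiag q * star M.F

lemma conjOp_phasedRoot : conjOp (M.phasedRoot q) = star (M.phasedRoot q) := by
  simp only [phasedRoot, map_mul, map_star, M.conjOp_F, hb.conjOp_phasedDiag, star_mul, star_star,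
    mul_assoc]

lemma star_phasedRoot_mul_phasedRoot :
    star (M.phasedRoot q) * M.phasedRoot q = M.F * hb.diag ^ 2 * star M.F := by
  calc star (M.phasedRoot q) * M.phasedRoot q
      = M.F * star (hb.phasedDiag q) * (star M.F * M.F) * hb.phasedDiag q * star M.F := by
        simp only [phasedRoot, star_mul, star_star, mul_assoc]
    _ = M.F * hb.diag ^ 2 * star M.F := by
        rw [M.star_F_mul_F, mul_one, mul_assoc M.F, hb.star_phasedDiag_mul_phasedDiag]

/-- The contraction carrying `phasedDiag p` to `phasedRoot q`. -/
def transferOp : Op := M.F * phaseOp q * star M.F * M.rootQuotient * star (phaseOp p)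

lemma transferOp_mul_phasedDiag : M.transferOp p q * ha.phasedDiag p = M.phasedRoot q := by
  calc M.transferOp p q * ha.phasedDiag p
      = M.F * phaseOp q * star M.F * M.rootQuotient
          * (star (phaseOp p) * phaseOp p) * ha.diag := by
        rw [transferOp, SimpleSpectrum.phasedDiag, ha.commute_diag_phaseOp]
        simp only [mul_assoc]
    _ = M.F * phaseOp q * (star M.F * M.F) * hb.diag * star M.F := by
        rw [star_phaseOp_mul_phaseOp, mul_one, mul_assoc, M.rootQuotient_mul_diag, root]
        simp only [mul_assoc]
    _ = M.phasedRoot q := by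
        rw [M.star_F_mul_F, mul_one, mul_assoc M.F, ← hb.commute_diag_phaseOp]
        rfl

lemma star_phasedDiag_mul_one_sub_rankOne_mul :
    star (ha.phasedDiag p) * (1 - rankOne ℂ (phaseOp p M.v) (phaseOp p M.v)) * ha.phasedDiag p
      = M.F * hb.diag ^ 2 * star M.F := by
  rw [ha.star_phasedDiag, SimpleSpectrum.phasedDiag, ha.commute_diag_phaseOp, ← M.diag_mul_mul_diag,
    ← star_mul_one_sub_rankOne_mul_of_isometry (star_phaseOp_mul_phaseOp p) M.v]
  simp only [mul_assoc]

/-- The transfer operator attached to the phases `p` and `q`. -/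
def transfer : TransferOperator (ha.phasedDiag p) where
  A := M.transferOp p q
  w := phaseOp p M.v
  star_A_mul_A := eq_of_star_mul_mul_eq (ha.denseRange_phasedDiag p) <| by
    rw [M.star_phasedDiag_mul_one_sub_rankOne_mul, ← M.star_phasedRoot_mul_phasedRoot q,
      ← M.transferOp_mul_phasedDiag p q, star_mul]
    simp only [mul_assoc]
  A_mul := by
    have transpose : star (conjOp (M.phasedRoot q)) = M.phasedRoot q := by
      rw [conjOp_phasedRoot, star_star]
    rw [M.transferOp_mul_phasedDiag, ← transpose, ← M.transferOp_mul_phasedDiag p, map_mul,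
      star_mul, ha.conjOp_phasedDiag, star_star, map_star]

lemma transfer_stable (x : L2) : Tendsto (fun n => ((M.transfer p q).A ^ n) x) atTop (𝓝 0) :=
  TransferOperator.tendsto_pow_A_apply (ha.isCompactOperator_phasedDiag p) (ha.conjOp_phasedDiag p)
    (fun z hz => ha.eq_zero_of_inner_diag_sq_pow_eq_zero (w := phaseOp p M.v)
      (fun n => by
        rw [phaseOp_apply, M.v_apply]
        exact mul_ne_zero (Circle.coe_ne_zero _) (Complex.ofReal_ne_zero.2 (M.weight_pos n).ne'))
      fun k => by
        rw [← ha.phasedDiag_mul_star_phasedDiag p]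
        exact hz k)
    (ha.denseRange_phasedDiag p) x

lemma continuous_transferOp_apply (x : L2) :
    Continuous fun t : (ℕ → Circle) × (ℕ → Circle) => M.transferOp t.1 t.2 x := by
  have inner_part : Continuous fun t : (ℕ → Circle) × (ℕ → Circle) =>
      star M.F (M.rootQuotient (star (phaseOp t.1) x)) := by
    simp only [star_phaseOp]
    exact (star M.F).continuous.comp (M.rootQuotient.continuous.comp
      ((continuous_phaseOp_apply x).comp (continuous_inv.comp continuous_fst)))
  exact M.F.continuous.comp (continuous_apply_of_contraction
    (X := fun t : (ℕ → Circle) × (ℕ → Circle) => phaseOp t.2) (fun t => norm_phaseOp_le t.2)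
    (fun y => (continuous_phaseOp_apply y).comp continuous_snd) inner_part)

lemma continuous_pow_transferOp_apply {y : (ℕ → Circle) × (ℕ → Circle) → L2} (hy : Continuous y)
    (n : ℕ) : Continuous fun t : (ℕ → Circle) × (ℕ → Circle) =>
      (M.transferOp t.1 t.2 ^ n) (y t) := by
  induction n with
  | zero => exact hy
  | succ n ih =>
    simp only [pow_succ', mul_apply_eq_comp]
    exact continuous_apply_of_contraction
      (X := fun t : (ℕ → Circle) × (ℕ → Circle) => M.transferOp t.1 t.2)
      (y := fun t => (M.transferOp t.1 t.2 ^ n) (y t))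
      (fun t => (M.transfer t.1 t.2).norm_A_le) M.continuous_transferOp_apply ih

lemma continuous_hankelSymbol_transfer (n : ℕ) :
    Continuous fun t : (ℕ → Circle) × (ℕ → Circle) => (M.transfer t.1 t.2).hankelSymbol n := by
  have phased (x : L2) : Continuous fun t : (ℕ → Circle) × (ℕ → Circle) => phaseOp t.1 x :=
    (continuous_phaseOp_apply x).comp continuous_fst
  have start : Continuous fun t : (ℕ → Circle) × (ℕ → Circle) =>
      ha.phasedDiag t.1 (star (phaseOp t.1 M.v)) :=
    ha.diag.continuous.comp (continuous_apply_of_contraction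
      (X := fun t : (ℕ → Circle) × (ℕ → Circle) => phaseOp t.1)
      (fun t => norm_phaseOp_le t.1) phased (continuous_star.comp (phased M.v)))
  exact (phased M.v).inner (M.continuous_pow_transferOp_apply start n)

end SpectralModel

lemma isometry_mul {W F : Op} (hW : star W * W = 1) (hF : star F * F = 1) :
    star (W * F) * (W * F) = 1 := by
  rw [star_mul, mul_assoc, ← mul_assoc (star W), hW, one_mul, hF]

lemma conj_conj_isometry (W F Y : Op) :
    W * (F * Y * star F) * star W = W * F * Y * star (W * F) := by
  simp only [star_mul, mul_assoc]

lemma opT_mul_mul_star_conjOp {W : Op} (hW : star W * W = 1) (X : Op) :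
    opT (W * X * star (conjOp W)) = W * (X * star X) * star W := by
  calc opT (W * X * star (conjOp W))
      = W * X * (star (conjOp W) * conjOp W) * star X * star W := by
        simp only [opT_eq, star_mul, star_star, mul_assoc]
    _ = W * (X * star X) * star W := by rw [conjOp_isometry hW, mul_one, mul_assoc W X]

namespace SpectralModel

variable {a b : ℕ → ℝ} {ha : SimpleSpectrum a} {hb : SimpleSpectrum b} (M : SpectralModel ha hb)
  (p q : ℕ → Circle)

lemma star_v : star M.v = M.v := lp.ext <| funext fun n => by
  rw [lp.star_apply, M.v_apply]
  exact Complex.conj_ofReal _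

lemma phasedDiag_apply_star_phaseOp_v :
    ha.phasedDiag p (star (phaseOp p M.v)) = ha.diag M.v := by
  rw [← conjOp_conjOp (phaseOp p), conjOp_apply, star_star, M.star_v, conjOp_phaseOp,
    SimpleSpectrum.phasedDiag, mul_apply_eq_comp, ← mul_apply_eq_comp (phaseOp p),
    phaseOp_mul_star_phaseOp]
  rfl

lemma phasedRoot_mul_star_phasedRoot :
    M.phasedRoot q * star (M.phasedRoot q) = M.F * hb.diag ^ 2 * star M.F := by
  calc M.phasedRoot q * star (M.phasedRoot q)
      = M.F * hb.phasedDiag q * (star M.F * M.F) * star (hb.phasedDiag q) * star M.F := by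
        simp only [phasedRoot, star_mul, star_star, mul_assoc]
    _ = M.F * hb.diag ^ 2 * star M.F := by
        rw [M.star_F_mul_F, mul_one, mul_assoc M.F, hb.phasedDiag_mul_star_phasedDiag]

/-- The simultaneous factorization of a Hankel operator `Γ` and of its shift `Γt` in the
eigenbasis `W` of `Γ Γ⋆`, exhibiting the phases `p` and `q`. The phases of the eigenvectors are
normalized by `map_diag_v`. -/
structure Factorization (W Γ Γt : Op) : Prop where
  isometry : star W * W = 1
  left_eq : Γ = W * ha.phasedDiag p * star (conjOp W)
  right_eq : Γt = W * M.phasedRoot q * star (conjOp W)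
  map_diag_v : W (ha.diag M.v) = Γ (basisVec 0)

variable {M p q} in
lemma Factorization.opT_left {W Γ Γt : Op} (h : M.Factorization p q W Γ Γt) :
    opT Γ = W * ha.diag ^ 2 * star W := by
  rw [h.left_eq, opT_mul_mul_star_conjOp h.isometry, ha.phasedDiag_mul_star_phasedDiag]

variable {M p q} in
lemma Factorization.opT_right {W Γ Γt : Op} (h : M.Factorization p q W Γ Γt) :
    opT Γt = W * M.F * hb.diag ^ 2 * star (W * M.F) := by
  rw [h.right_eq, opT_mul_mul_star_conjOp h.isometry, M.phasedRoot_mul_star_phasedRoot,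
    conj_conj_isometry]

/-- The element of `h^{1/2}` attached to the phases `p` and `q`, as a bare sequence. -/
def symbol : ℕ → ℂ := (M.transfer p q).hankelSymbol

lemma exists_factorization_symbol : ∃ W Γ Γt : Op, IsHankelOp (M.symbol p q) Γ ∧
    IsHankelOp (shiftSeq (M.symbol p q)) Γt ∧ M.Factorization p q W Γ Γt := by
  obtain ⟨W, hW, observation⟩ := (M.transfer p q).exists_observation (M.transfer_stable p q)
  refine ⟨W, _, _, (M.transfer p q).isHankelOp_hankelSymbol observation,
    (M.transfer p q).isHankelOp_shiftSeq_hankelSymbol observation, hW, rfl, ?_, ?_⟩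
  · rw [← M.transferOp_mul_phasedDiag p q]
    rfl
  · rw [mul_apply_eq_comp, mul_apply_eq_comp W,
      (M.transfer p q).apply_star_conjOp_observation_basisVec observation, pow_zero]
    exact congrArg W (M.phasedDiag_apply_star_phaseOp_v p).symm

end SpectralModel

/-! ### The `h^{1/2}` norm as a Hilbert–Schmidt norm -/

lemma hasSum_antidiagonal_const (g : ℕ → ℝ) (n : ℕ) :
    HasSum (fun t : Finset.HasAntidiagonal.antidiagonal n => g (t.1.1 + t.1.2))
      ((1 + n) * g n) := by
  have sum_eq : ∑ t : Finset.HasAntidiagonal.antidiagonal n, g (t.1.1 + t.1.2)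
      = (1 + n) * g n := by
    rw [Finset.sum_coe_sort (Finset.HasAntidiagonal.antidiagonal n) fun t => g (t.1 + t.2),
      Finset.sum_congr rfl fun t ht => by rw [Finset.HasAntidiagonal.mem_antidiagonal.1 ht],
      Finset.sum_const, Finset.Nat.card_antidiagonal, nsmul_eq_mul, Nat.cast_succ,
      add_comm (1 : ℝ)]
  exact sum_eq ▸ hasSum_fintype _

lemma hasSum_one_add_mul {g : ℕ → ℝ} {s : ℝ} (h : HasSum (fun t : ℕ × ℕ => g (t.1 + t.2)) s) :
    HasSum (fun n : ℕ => (1 + n) * g n) s :=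
  (Finset.HasAntidiagonal.sigmaAntidiagonalEquivProd.hasSum_iff.2 h).sigma
    fun n => by simpa [Function.comp_def] using hasSum_antidiagonal_const g n

lemma summable_comp_add {g : ℕ → ℝ} (hg : ∀ n, 0 ≤ g n)
    (h : Summable fun n : ℕ => (1 + n) * g n) : Summable fun t : ℕ × ℕ => g (t.1 + t.2) := by
  rw [← Finset.HasAntidiagonal.sigmaAntidiagonalEquivProd.summable_iff]
  exact (summable_sigma_of_nonneg fun t => hg _).2
    ⟨fun n => (hasSum_antidiagonal_const g n).summable,
      h.congr fun n => (hasSum_antidiagonal_const g n).tsum_eq.symm⟩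

lemma hasSum_norm_sq_toL2 (c : H12) :
    HasSum (fun n : ℕ => (1 + n) * ‖c.1 n‖ ^ 2) (‖c.toL2‖ ^ 2) := by
  have norm_sq_eq (n : ℕ) : ‖c.toL2 n‖ ^ 2 = (1 + n) * ‖c.1 n‖ ^ 2 := by
    change ‖(Real.sqrt (1 + (n : ℝ)) : ℂ) * c.1 n‖ ^ 2 = _
    rw [norm_mul, mul_pow, Complex.norm_real, Real.norm_of_nonneg (Real.sqrt_nonneg _),
      Real.sq_sqrt (by positivity)]
  simpa only [norm_sq_eq] using hasSum_norm_sq c.toL2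

lemma inH12_of_summable {c : ℕ → ℂ} (h : Summable fun n : ℕ => (1 + n) * ‖c n‖ ^ 2) :
    InH12 c where
  left := memℓp_two_of_norm_sq_le h fun n => le_mul_of_one_le_left (sq_nonneg _) (by simp)
  right := h.of_nonneg_of_le (fun n => by positivity) fun n => by gcongr; simp

namespace IsHankelOp

variable {c : ℕ → ℂ} {Γ : Op} (h : IsHankelOp c Γ)

include h

lemma apply_basisVec (k n : ℕ) : Γ (basisVec k) n = c (n + k) := by
  rw [h, tsum_eq_single k fun m hm => by rw [basisVec_apply, if_neg hm, mul_zero],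
    basisVec_apply, if_pos rfl, mul_one]

lemma conjOp_eq : conjOp Γ = star Γ := Op.ext_entries fun k n => by
  rw [star_apply_basisVec_apply, conjOp_apply, star_basisVec, h.apply_basisVec n k, add_comm,
    ← h.apply_basisVec k n]
  rfl

lemma unique {Δ : Op} (h' : IsHankelOp c Δ) : Γ = Δ := Op.ext_entries fun k n => by
  rw [h.apply_basisVec, h'.apply_basisVec]

lemma hasSum_norm_sq_apply_basisVec (k : ℕ) :
    HasSum (fun n => ‖c (n + k)‖ ^ 2) (‖Γ (basisVec k)‖ ^ 2) := by
  simpa only [h.apply_basisVec] using hasSum_norm_sq (Γ (basisVec k))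

lemma isCompactOperator (hc : InH12 c) : IsCompactOperator Γ := by
  have entries : Summable fun t : ℕ × ℕ => ‖c (t.1 + t.2)‖ ^ 2 :=
    summable_comp_add (fun n => sq_nonneg ‖c n‖) (hasSum_norm_sq_toL2 ⟨c, hc⟩).summable
  refine isCompactOperator_of_summable_norm_sq (entries.prod.congr fun k => ?_)
  simp only [add_comm k, (h.hasSum_norm_sq_apply_basisVec k).tsum_eq]

lemma norm_star_apply_basisVec (k : ℕ) : ‖star Γ (basisVec k)‖ = ‖Γ (basisVec k)‖ := by
  rw [← h.conjOp_eq, conjOp_apply, star_basisVec, norm_star]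

/-- The `h^{1/2}` norm of the symbol is the Hilbert–Schmidt norm of `Γ`, whose entries are constant
along antidiagonals. -/
lemma hasSum_of_diagonalized {a : ℕ → ℝ} (ha : SimpleSpectrum a) {W : Op} (hW : star W * W = 1)
    (diagonalized : opT Γ = W * ha.diag ^ 2 * star W) :
    HasSum (fun n : ℕ => (1 + n) * ‖c n‖ ^ 2) (∑' n, a n ^ 2) := by
  have norm_sq_eq (k : ℕ) : ‖ha.diag (star W (basisVec k))‖ ^ 2 = ‖Γ (basisVec k)‖ ^ 2 := by
    apply Complex.ofReal_injective
    rw [← ha.inner_mul_diag_sq_mul_star_apply, ← diagonalized, opT_eq, inner_mul_star_apply,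
      h.norm_star_apply_basisVec]
  have columns := ha.hasSum_norm_sq_diag_star_apply hW
  simp only [norm_sq_eq] at columns
  have entries : Summable fun t : ℕ × ℕ => ‖c (t.2 + t.1)‖ ^ 2 :=
    (summable_prod_of_nonneg fun t => sq_nonneg _).2
      ⟨fun k => (h.hasSum_norm_sq_apply_basisVec k).summable,
        columns.summable.congr fun k => (h.hasSum_norm_sq_apply_basisVec k).tsum_eq.symm⟩
  have total := entries.hasSum.prod_fiberwise fun k => h.hasSum_norm_sq_apply_basisVec k
  refine hasSum_one_add_mul (g := fun n => ‖c n‖ ^ 2) ?_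
  rw [← total.unique columns]
  simpa only [add_comm] using entries.hasSum

end IsHankelOp

lemma tendsto_inner_of_tendsto_coord {ι : Type*} {l : Filter ι} {g : ι → L2} {y : L2} {C : NNReal}
    (bound : ∀ i, ‖g i‖ ≤ C) (coord : ∀ n, Tendsto (fun i => g i n) l (𝓝 (y n))) (z : L2) :
    Tendsto (fun i => ⟪g i, z⟫_ℂ) l (𝓝 ⟪y, z⟫_ℂ) := by
  have lipschitz (i : ι) : LipschitzWith C fun z => ⟪g i, z⟫_ℂ :=
    LipschitzWith.of_dist_le_mul fun z z' => by
      rw [dist_eq_norm, dist_eq_norm, ← inner_sub_right]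
      exact (norm_inner_le_norm _ _).trans (by gcongr; exact bound i)
  have closed : IsClosed {z : L2 | Tendsto (fun i => ⟪g i, z⟫_ℂ) l (𝓝 ⟪y, z⟫_ℂ)} :=
    (LipschitzWith.uniformEquicontinuous _ C lipschitz).equicontinuous.isClosed_setOfPred_tendsto
      (by fun_prop)
  refine closed.mem_of_tendsto (lp.hasSum_single (by simp) z) (Eventually.of_forall fun s => ?_)
  simp only [Set.mem_ofPred_eq, inner_sum]
  refine tendsto_finsetSum _ fun n _ => ?_
  simp only [lp.inner_single_right]
  simpa using (coord n).star.const_mul (z n)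

lemma tendsto_of_tendsto_coord_of_norm_eq {ι : Type*} {l : Filter ι} {g : ι → L2} {y : L2}
    (norm_eq : ∀ i, ‖g i‖ = ‖y‖) (coord : ∀ n, Tendsto (fun i => g i n) l (𝓝 (y n))) :
    Tendsto g l (𝓝 y) := by
  have weak := tendsto_inner_of_tendsto_coord (C := ‖y‖₊) (fun i => (norm_eq i).le) coord y
  have dist_sq (i : ι) : ‖g i - y‖ ^ 2 = 2 * ‖y‖ ^ 2 - 2 * (⟪g i, y⟫_ℂ).re := by
    rw [@norm_sub_sq ℂ, norm_eq i, RCLike.re_to_complex]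
    ring
  have limit : Tendsto (fun i => ‖g i - y‖ ^ 2) l (𝓝 0) := by
    simp only [dist_sq]
    have expansion := (((Complex.continuous_re.tendsto _).comp weak).const_mul 2).const_sub
      (2 * ‖y‖ ^ 2)
    rwa [inner_self_eq_ofReal_norm_sq, Complex.ofReal_re, sub_self] at expansion
  rw [tendsto_iff_norm_sub_tendsto_zero]
  simpa using limit.sqrt

namespace SpectralModel

variable {a b : ℕ → ℝ} {ha : SimpleSpectrum a} {hb : SimpleSpectrum b} (M : SpectralModel ha hb)

lemma hasSum_symbol (p q : ℕ → Circle) :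
    HasSum (fun n : ℕ => (1 + n) * ‖M.symbol p q n‖ ^ 2) (∑' n, a n ^ 2) := by
  obtain ⟨W, Γ, Γt, hankel, -, factorization⟩ := M.exists_factorization_symbol p q
  exact hankel.hasSum_of_diagonalized ha factorization.isometry factorization.opT_left

/-- The element of `h^{1/2}` attached to a pair of phase sequences: the inverse of the spectral
parametrization. -/
def ofPhases (t : (ℕ → Circle) × (ℕ → Circle)) : H12 :=
  ⟨M.symbol t.1 t.2, inH12_of_summable (M.hasSum_symbol t.1 t.2).summable⟩

lemma norm_toL2_ofPhases (t : (ℕ → Circle) × (ℕ → Circle)) :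
    ‖(M.ofPhases t).toL2‖ = √(∑' n, a n ^ 2) := by
  rw [← (hasSum_norm_sq_toL2 (M.ofPhases t)).unique (M.hasSum_symbol t.1 t.2),
    Real.sqrt_sq (norm_nonneg _)]

/-- Convergence in `h^{1/2}` follows from convergence of the coefficients because the norm is
constant, equal to the Hilbert–Schmidt norm of the Hankel operator. -/
lemma continuous_ofPhases : Continuous M.ofPhases := by
  refine (Topology.IsInducing.mk rfl : Topology.IsInducing H12.toL2).continuous_iff.2 ?_
  refine continuous_iff_continuousAt.2 fun s => tendsto_of_tendsto_coord_of_norm_eq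
    (fun t => by rw [Function.comp_apply, M.norm_toL2_ofPhases, Function.comp_apply,
      M.norm_toL2_ofPhases]) fun n => ?_
  exact ((M.continuous_hankelSymbol_transfer n).const_mul _).tendsto s

end SpectralModel

/-! ### Traces of powers -/

lemma pow_succ_sub_pow_succ {R : Type*} [Ring R] (x y : R) (k : ℕ) :
    x ^ (k + 1) - y ^ (k + 1) = ∑ i ∈ Finset.range (k + 1), x ^ (k - i) * (x - y) * y ^ i := by
  have telescope := Finset.sum_range_sub' (fun i => x ^ (k + 1 - i) * y ^ i) (k + 1)
  rw [Nat.sub_self, Nat.sub_zero, pow_zero, pow_zero, mul_one, one_mul] at telescope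
  refine telescope.symm.trans (Finset.sum_congr rfl fun i hi => ?_)
  rw [Nat.succ_sub (Finset.mem_range_succ_iff.1 hi), Nat.add_sub_add_right, pow_succ x, pow_succ' y]
  noncomm_ring

lemma eq_of_recurrence_of_antidiagonal_sum {R : Type*} [CommRing R] [NoZeroDivisors R] [CharZero R]
    {M M' : ℕ → ℕ → R} (rec : ∀ i l, M (i + 1) l = M i (l + 1) - M i 0 * M 0 l)
    (rec' : ∀ i l, M' (i + 1) l = M' i (l + 1) - M' i 0 * M' 0 l)
    (sum_eq : ∀ k, ∑ i ∈ Finset.range (k + 1), M i (k - i)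
      = ∑ i ∈ Finset.range (k + 1), M' i (k - i)) {n : ℕ} :
    ∀ i l, i + l = n → M i l = M' i l := by
  induction n using Nat.strong_induction_on with
  | _ n ih =>
  have sub_eq (i : ℕ) : ∀ l, i + l = n → M i l - M' i l = M 0 n - M' 0 n := by
    induction i with
    | zero => rintro l rfl; rw [zero_add]
    | succ i ih_i =>
      intro l hl
      rw [rec, rec', ih i (by omega) i 0 rfl, ih l (by omega) 0 l (zero_add l),
        sub_sub_sub_cancel_right, ih_i (l + 1) (by omega)]
  have mul_sub_eq_zero : (n + 1) * (M 0 n - M' 0 n) = 0 := by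
    have := Finset.sum_congr rfl fun i hi =>
      sub_eq i (n - i) (Nat.add_sub_cancel' (Finset.mem_range_succ_iff.1 hi))
    rw [Finset.sum_sub_distrib, sum_eq, sub_self, Finset.sum_const, Finset.card_range,
      nsmul_eq_mul, Nat.cast_succ] at this
    exact this.symm
  intro i l hil
  have n_succ_ne_zero : (n + 1 : R) ≠ 0 := Nat.cast_add_one_ne_zero n
  exact sub_eq_zero.1
    ((sub_eq i l hil).trans ((mul_eq_zero.1 mul_sub_eq_zero).resolve_left n_succ_ne_zero))

lemma mul_mul_star_pow_succ {W : Op} (hW : star W * W = 1) (X : Op) (k : ℕ) :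
    (W * X * star W) ^ (k + 1) = W * X ^ (k + 1) * star W := by
  induction k with
  | zero => simp only [zero_add, pow_one]
  | succ k ih =>
    calc (W * X * star W) ^ (k + 2) = W * X ^ (k + 1) * (star W * W) * X * star W := by
          rw [pow_succ, ih]
          simp only [mul_assoc]
      _ = W * X ^ (k + 2) * star W := by rw [hW, mul_one, mul_assoc W, ← pow_succ]

namespace SimpleSpectrum

variable {a : ℕ → ℝ} (ha : SimpleSpectrum a)

include ha in
lemma pow (k : ℕ) : SimpleSpectrum fun n => a n ^ (k + 1) where
  pos n := pow_pos (ha.pos n) _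
  strictAnti _ _ hij := pow_lt_pow_left₀ (ha.strictAnti hij) (ha.pos _).le k.succ_ne_zero
  summable_sq := by
    refine (ha.summable_sq.mul_left ((a 0 ^ k) ^ 2)).of_nonneg_of_le (fun n => sq_nonneg _)
      fun n => ?_
    rw [pow_succ (a n), mul_pow]
    gcongr
    exacts [pow_nonneg (ha.pos n).le k, (ha.pos n).le, ha.strictAnti.antitone n.zero_le]

lemma diag_pow (k : ℕ) : (ha.pow k).diag = ha.diag ^ (k + 1) := by
  refine Op.ext_basisVec fun n => ?_
  induction k with
  | zero => simp only [diag_basisVec, zero_add, pow_one]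
  | succ k ih =>
    rw [pow_succ', mul_apply_eq_comp, ← ih, diag_basisVec, diag_basisVec, map_smul, diag_basisVec,
      smul_smul, pow_succ (a n), Complex.ofReal_mul]

lemma pow_succ_diagonalized {W : Op} (hW : star W * W = 1) (k : ℕ) :
    (W * ha.diag ^ 2 * star W) ^ (k + 1) = W * (ha.pow k).diag ^ 2 * star W := by
  rw [mul_mul_star_pow_succ hW, ha.diag_pow, pow_right_comm]

lemma hasSum_inner_pow_succ {W : Op} (hW : star W * W = 1) (k : ℕ) :
    HasSum (fun n => ⟪basisVec n, ((W * ha.diag ^ 2 * star W) ^ (k + 1)) (basisVec n)⟫_ℂ)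
      (∑' n, (a n ^ (k + 1)) ^ 2 : ℝ) := by
  simp only [ha.pow_succ_diagonalized hW, inner_mul_diag_sq_mul_star_apply]
  exact Complex.hasSum_ofReal.2 ((ha.pow k).hasSum_norm_sq_diag_star_apply hW)

end SimpleSpectrum

lemma star_diagonalized {a : ℕ → ℝ} (ha : SimpleSpectrum a) (W : Op) :
    star (W * ha.diag ^ 2 * star W) = W * ha.diag ^ 2 * star W := by
  simp only [star_mul, star_star, star_pow, ha.star_diag, mul_assoc]

section

variable {T S : Op} {u : L2} (star_S : star S = S) (h : T - S = rankOne ℂ u u)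

include star_S h

lemma inner_pow_succ_pow_of_sub_eq_rankOne (i l : ℕ) :
    ⟪(S ^ (i + 1)) u, (T ^ l) u⟫_ℂ = ⟪(S ^ i) u, (T ^ (l + 1)) u⟫_ℂ
      - ⟪(S ^ i) u, (T ^ 0) u⟫_ℂ * ⟪(S ^ 0) u, (T ^ l) u⟫_ℂ := by
  have apply_S (x : L2) : S x = T x - ⟪u, x⟫_ℂ • u := by
    rw [← rankOne_apply, ← h]
    exact (sub_sub_cancel (T x) (S x)).symm
  rw [pow_succ' S, mul_apply_eq_comp, ← star_S, ContinuousLinearMap.star_eq_adjoint,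
    ContinuousLinearMap.adjoint_inner_left, ← ContinuousLinearMap.star_eq_adjoint, star_S,
    apply_S, inner_sub_right, inner_smul_right, pow_succ' T, mul_apply_eq_comp, mul_comm]
  rfl

lemma hasSum_inner_pow_succ_sub_pow_succ (k : ℕ) :
    HasSum (fun n => ⟪basisVec n, (T ^ (k + 1) - S ^ (k + 1)) (basisVec n)⟫_ℂ)
      (∑ i ∈ Finset.range (k + 1), ⟪(S ^ i) u, (T ^ (k - i)) u⟫_ℂ) := by
  simp only [pow_succ_sub_pow_succ, h, sum_apply, inner_sum]
  refine hasSum_sum fun i _ => ?_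
  have entry (n : ℕ) : ⟪basisVec n, (T ^ (k - i) * rankOne ℂ u u * S ^ i) (basisVec n)⟫_ℂ
      = conj ((S ^ i) u n) * (T ^ (k - i)) u n := by
    rw [mul_apply_eq_comp, mul_apply_eq_comp (T ^ (k - i)), rankOne_apply, map_smul,
      inner_smul_right, inner_basisVec_left, ← ContinuousLinearMap.adjoint_inner_left,
      ← ContinuousLinearMap.star_eq_adjoint, star_pow, star_S, inner_basisVec_right]
  simp only [entry]
  simpa only [RCLike.inner_apply'] using lp.hasSum_inner (𝕜 := ℂ) ((S ^ i) u) ((T ^ (k - i)) u)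

end

/-- The operators with spectra `a` and `b` diagonalized by `W` and `V` differ by `u ⊗ u`. -/
structure RankOneUpdate {a b : ℕ → ℝ} (ha : SimpleSpectrum a) (hb : SimpleSpectrum b) (W V : Op)
    (u : L2) : Prop where
  isometry_left : star W * W = 1
  isometry_right : star V * V = 1
  sub_eq : W * ha.diag ^ 2 * star W - V * hb.diag ^ 2 * star V = rankOne ℂ u u

namespace RankOneUpdate

variable {a b : ℕ → ℝ} {ha : SimpleSpectrum a} {hb : SimpleSpectrum b} {W V W' V' : Op} {u u' : L2}

lemma sum_inner_pow_pow (h : RankOneUpdate ha hb W V u) (k : ℕ) :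
    ∑ i ∈ Finset.range (k + 1), ⟪((V * hb.diag ^ 2 * star V) ^ i) u,
      ((W * ha.diag ^ 2 * star W) ^ (k - i)) u⟫_ℂ
      = (∑' n, (a n ^ (k + 1)) ^ 2 : ℝ) - (∑' n, (b n ^ (k + 1)) ^ 2 : ℝ) := by
  have traces := (ha.hasSum_inner_pow_succ h.isometry_left k).sub
    (hb.hasSum_inner_pow_succ h.isometry_right k)
  simp only [← inner_sub_right] at traces
  exact (hasSum_inner_pow_succ_sub_pow_succ (star_diagonalized hb V) h.sub_eq k).unique traces

/-- The traces of the powers of both operators recursively determine the moments of `u`. -/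
lemma inner_pow_eq (h : RankOneUpdate ha hb W V u) (h' : RankOneUpdate ha hb W' V' u') (l : ℕ) :
    ⟪u, ((W * ha.diag ^ 2 * star W) ^ l) u⟫_ℂ = ⟪u', ((W' * ha.diag ^ 2 * star W') ^ l) u'⟫_ℂ :=
  eq_of_recurrence_of_antidiagonal_sum
    (M := fun i l => ⟪((V * hb.diag ^ 2 * star V) ^ i) u, ((W * ha.diag ^ 2 * star W) ^ l) u⟫_ℂ)
    (M' := fun i l =>
      ⟪((V' * hb.diag ^ 2 * star V') ^ i) u', ((W' * ha.diag ^ 2 * star W') ^ l) u'⟫_ℂ)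
    (inner_pow_succ_pow_of_sub_eq_rankOne (star_diagonalized hb V) h.sub_eq)
    (inner_pow_succ_pow_of_sub_eq_rankOne (star_diagonalized hb V') h'.sub_eq)
    (fun k => by rw [h.sum_inner_pow_pow, h'.sum_inner_pow_pow]) 0 l (zero_add l)

lemma hasSum_inner_pow_succ (h : RankOneUpdate ha hb W V u) (k : ℕ) :
    HasSum (fun n => (a n ^ 2 * ‖star W u n‖ ^ 2 : ℝ) * ((a n ^ 2 : ℝ) : ℂ) ^ k)
      ⟪u, ((W * ha.diag ^ 2 * star W) ^ (k + 1)) u⟫_ℂ := by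
  rw [ha.pow_succ_diagonalized h.isometry_left, SimpleSpectrum.inner_mul_diag_sq_mul_star_apply]
  convert Complex.hasSum_ofReal.2 (hasSum_norm_sq ((ha.pow k).diag (star W u))) using 2 with n
  rw [SimpleSpectrum.diag_apply, norm_mul, Complex.norm_real, mul_pow, Real.norm_eq_abs, sq_abs]
  push_cast
  ring

lemma norm_star_apply_eq (h : RankOneUpdate ha hb W V u) (h' : RankOneUpdate ha hb W' V' u')
    (n : ℕ) : ‖star W u n‖ = ‖star W' u' n‖ := by
  have moments (k : ℕ) := (h.hasSum_inner_pow_succ k).sub (h'.hasSum_inner_pow_succ k)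
  simp only [h.inner_pow_eq h', sub_self, ← sub_mul] at moments
  have summable : Summable fun n => ‖((a n ^ 2 * ‖star W u n‖ ^ 2 : ℝ) : ℂ)
      - (a n ^ 2 * ‖star W' u' n‖ ^ 2 : ℝ)‖ := by
    simpa only [pow_zero, mul_one] using (moments 0).summable.norm
  have coeff_eq := sub_eq_zero.1 (eq_zero_of_forall_tsum_mul_pow_eq_zero summable ha.sq_strictAnti
    (fun n => pow_pos (ha.pos n) 2) (fun k => (moments k).tsum_eq) n)
  have norm_sq_eq := mul_left_cancel₀ (pow_pos (ha.pos n) 2).ne' (Complex.ofReal_injective coeff_eq)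
  exact (pow_left_inj₀ (norm_nonneg _) (norm_nonneg _) two_ne_zero).1 norm_sq_eq

end RankOneUpdate

/-! ### Recovering the phases -/

lemma exists_phaseOp_apply_eq {x y : L2} (hy : ∀ n, y n ≠ 0) (h : ∀ n, ‖x n‖ = ‖y n‖) :
    ∃ p, phaseOp p y = x := by
  refine ⟨fun n => ⟨x n / y n, mem_sphere_zero_iff_norm.2 ?_⟩,
    lp.ext (funext fun n => div_mul_cancel₀ (x n) (hy n))⟩
  rw [norm_div, h, div_self (norm_ne_zero_iff.2 (hy n))]

lemma surjective_star_of_isometry {W : Op} (hW : star W * W = 1) :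
    Function.Surjective (star W : Op) := fun x => ⟨W x, star_apply_apply_of_isometry hW x⟩

lemma eq_of_isometry_mul_mul_eq {W X Y : Op} (hW : star W * W = 1)
    (h : W * X * star (conjOp W) = W * Y * star (conjOp W)) : X = Y := by
  have strip (Z : Op) : star W * (W * Z * star (conjOp W)) * conjOp W = Z := by
    calc star W * (W * Z * star (conjOp W)) * conjOp W
        = (star W * W) * Z * (star (conjOp W) * conjOp W) := by simp only [mul_assoc]
      _ = Z := by rw [hW, conjOp_isometry hW, one_mul, mul_one]
  rw [← strip X, h, strip]

namespace SimpleSpectrum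

variable {a : ℕ → ℝ} (ha : SimpleSpectrum a)

lemma phasedDiag_injective : Function.Injective ha.phasedDiag := fun p q h => by
  have phaseOp_eq : phaseOp p = phaseOp q := ha.eq_of_diag_mul_eq h
  funext n
  have entry := congrArg (fun X : Op => X (basisVec n) n) phaseOp_eq
  simp only [phaseOp_apply, basisVec_apply, if_pos, mul_one] at entry
  exact Circle.coe_injective entry

/-- `W'⋆ W` commutes with `D²`, hence is diagonal, and it fixes the nowhere vanishing `x`. -/
lemma eq_of_diagonalized_eq {W W' : Op} (hW : star W * W = 1) (hW' : star W' * W' = 1)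
    (h : W * ha.diag ^ 2 * star W = W' * ha.diag ^ 2 * star W') {x : L2} (hx : ∀ n, x n ≠ 0)
    (apply_eq : W x = W' x) : W = W' := by
  have commute : Commute (star W' * W) (ha.diag ^ 2) := by
    calc star W' * W * ha.diag ^ 2 = star W' * (W * ha.diag ^ 2 * star W) * W := by
          simp only [mul_assoc, hW, mul_one]
      _ = star W' * W' * ha.diag ^ 2 * (star W' * W) := by
          rw [h]
          simp only [mul_assoc]
      _ = ha.diag ^ 2 * (star W' * W) := by rw [hW', one_mul]
  have range_eq : W' * star W' * W = W := ha.eq_of_mul_diag_eq <| by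
    rw [mul_assoc]
    refine mul_star_mul_of_diagonalized (Y := ha.diag ^ 2) hW' ?_
    rw [← h, star_mul, ha.star_diag, pow_two]
    simp only [mul_assoc]
  obtain ⟨y, hy⟩ := ha.exists_eq_diagOp_of_commute commute
  have fixed : diagOp y x = x := by
    rw [← hy, mul_apply_eq_comp, apply_eq, star_apply_apply_of_isometry hW']
  have entry_eq_one (n : ℕ) : y n = 1 :=
    mul_right_cancel₀ (hx n) ((congrArg (fun z : L2 => z n) fixed).trans (one_mul _).symm)
  have y_eq_one : diagOp y = 1 := ContinuousLinearMap.ext fun z => lp.ext <| funext fun n => by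
    rw [diagOp_apply, entry_eq_one, one_mul]
    rfl
  rw [← range_eq, mul_assoc, hy, y_eq_one, mul_one]

end SimpleSpectrum

namespace IsHankelOp

variable {c : ℕ → ℂ} {Γ Γt : Op} (h : IsHankelOp c Γ) (ht : IsHankelOp (shiftSeq c) Γt)

include h

lemma hasSum_opT_apply_basisVec (m n : ℕ) :
    HasSum (fun k => c (n + k) * conj (c (m + k))) (opT Γ (basisVec m) n) := by
  rw [opT_eq, mul_apply_eq_comp, ← inner_basisVec_left, ← ContinuousLinearMap.adjoint_inner_left,
    ← ContinuousLinearMap.star_eq_adjoint]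
  simpa only [RCLike.inner_apply', star_apply_basisVec_apply, h.apply_basisVec,
    Complex.conj_conj] using lp.hasSum_inner (𝕜 := ℂ) (star Γ (basisVec n)) (star Γ (basisVec m))

include ht

lemma apply_succ (x : L2) (n : ℕ) : Γ x (n + 1) = Γt x n := by
  rw [h, ht]
  exact tsum_congr fun k => by rw [shiftSeq, add_right_comm]

lemma opT_sub_opT : opT Γ - opT Γt = rankOne ℂ (Γ (basisVec 0)) (Γ (basisVec 0)) := by
  refine Op.ext_entries fun m n => ?_
  have tail : HasSum (fun k => c (n + (k + 1)) * conj (c (m + (k + 1))))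
      (opT Γt (basisVec m) n) := by
    simpa only [shiftSeq, add_assoc] using ht.hasSum_opT_apply_basisVec m n
  have entry_eq := (h.hasSum_opT_apply_basisVec m n).unique
    (HasSum.zero_add (f := fun k => c (n + k) * conj (c (m + k))) tail)
  change opT Γ (basisVec m) n - opT Γt (basisVec m) n = _
  rw [entry_eq, add_sub_cancel_right, rankOne_apply, inner_basisVec_right]
  change _ = conj (Γ (basisVec 0) m) * Γ (basisVec 0) n
  rw [h.apply_basisVec, h.apply_basisVec, mul_comm]

end IsHankelOp

namespace SimpleSpectrum

variable {a : ℕ → ℝ} (ha : SimpleSpectrum a) (p : ℕ → Circle)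

lemma phasedDiag_apply_injective : Function.Injective (ha.phasedDiag p) := fun x y h =>
  lp.ext <| funext fun n => by
    have entry : (a n : ℂ) * (p n * x n) = a n * (p n * y n) := congrArg (fun z : L2 => z n) h
    exact mul_left_cancel₀ (Circle.coe_ne_zero _) (mul_left_cancel₀ (ha.ofReal_ne_zero n) entry)

lemma phaseOp_mul_diag_sq_mul_star_phaseOp :
    phaseOp p * ha.diag ^ 2 * star (phaseOp p) = ha.diag ^ 2 := by
  rw [← ((ha.commute_diag_phaseOp p).pow_left 2), mul_assoc, phaseOp_mul_star_phaseOp, mul_one]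

end SimpleSpectrum

namespace SpectralModel

variable {a b : ℕ → ℝ} {ha : SimpleSpectrum a} {hb : SimpleSpectrum b} (M : SpectralModel ha hb)

lemma diag_v_apply_ne_zero (n : ℕ) : ha.diag M.v n ≠ 0 := by
  rw [ha.diag_apply, M.v_apply]
  exact mul_ne_zero (ha.ofReal_ne_zero n) (Complex.ofReal_ne_zero.2 (M.weight_pos n).ne')

lemma diag_sq_sub_rankOne :
    ha.diag ^ 2 - rankOne ℂ (ha.diag M.v) (ha.diag M.v) = M.F * hb.diag ^ 2 * star M.F := by
  rw [← M.diag_mul_mul_diag, rankOne_apply_self, ha.star_diag]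
  noncomm_ring

lemma rankOneUpdate : RankOneUpdate ha hb 1 M.F (ha.diag M.v) where
  isometry_left := by rw [star_one, one_mul]
  isometry_right := M.star_F_mul_F
  sub_eq := by rw [← M.diag_sq_sub_rankOne, star_one, one_mul, mul_one, sub_sub_cancel]

/-- The moduli of the coefficients of `u` in the eigenbasis `W₀` are those of `D v`; the phases
are absorbed into `W₀`. -/
lemma exists_normalized_diagonalization {W₀ V : Op} {u : L2} (h : RankOneUpdate ha hb W₀ V u)
    (hu : W₀ (star W₀ u) = u) :
    ∃ W : Op, star W * W = 1 ∧ W * ha.diag ^ 2 * star W = W₀ * ha.diag ^ 2 * star W₀ ∧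
      W (ha.diag M.v) = u := by
  obtain ⟨θ, hθ⟩ := exists_phaseOp_apply_eq (x := star W₀ u) M.diag_v_apply_ne_zero fun n => by
    rw [h.norm_star_apply_eq M.rankOneUpdate, star_one]
    rfl
  refine ⟨W₀ * phaseOp θ, isometry_mul h.isometry_left (star_phaseOp_mul_phaseOp θ), ?_, ?_⟩
  · rw [← conj_conj_isometry, ha.phaseOp_mul_diag_sq_mul_star_phaseOp]
  · rw [mul_apply_eq_comp, hθ, hu]

lemma exists_factorization {c : ℕ → ℂ} {Γ Γt W₀ V : Op} (h : IsHankelOp c Γ)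
    (ht : IsHankelOp (shiftSeq c) Γt) (hW₀ : star W₀ * W₀ = 1) (hV : star V * V = 1)
    (left : opT Γ = W₀ * ha.diag ^ 2 * star W₀) (right : opT Γt = V * hb.diag ^ 2 * star V) :
    ∃ p q W, M.Factorization p q W Γ Γt := by
  have update : RankOneUpdate ha hb W₀ V (Γ (basisVec 0)) :=
    ⟨hW₀, hV, by rw [← left, ← right, h.opT_sub_opT ht]⟩
  have range_eq := congrArg (fun X : Op => X (basisVec 0)) (mul_star_mul_of_diagonalized hW₀ left)
  obtain ⟨W, hW, diagonalized, map_diag_v⟩ := M.exists_normalized_diagonalization update range_eq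
  rw [← left] at diagonalized
  have diagonalized_right : opT Γt = W * M.F * hb.diag ^ 2 * star (W * M.F) := by
    rw [← conj_conj_isometry, ← M.diag_sq_sub_rankOne, mul_sub, sub_mul, diagonalized,
      ← rankOne_apply_self, map_diag_v, ← h.opT_sub_opT ht, sub_sub_cancel]
  obtain ⟨p, left_eq⟩ := exists_phasedDiag_of_diagonalized ha hW h.conjOp_eq diagonalized.symm
  obtain ⟨q, right_eq⟩ := exists_phasedDiag_of_diagonalized hb (isometry_mul hW M.star_F_mul_F)
    ht.conjOp_eq diagonalized_right
  refine ⟨p, q, W, hW, left_eq, ?_, map_diag_v⟩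
  rw [right_eq, phasedRoot, map_mul, M.conjOp_F, star_mul]
  simp only [mul_assoc]

namespace Factorization

variable {M} {p q p' q' : ℕ → Circle} {W W' Γ Γt : Op} (f : M.Factorization p q W Γ Γt)

include f

lemma star_apply_basisVec_zero : star W (basisVec 0) = phaseOp p M.v := by
  refine star_injective (ha.phasedDiag_apply_injective p ?_)
  rw [M.phasedDiag_apply_star_phaseOp_v, ← star_apply_apply_of_isometry f.isometry (ha.diag M.v),
    f.map_diag_v, f.left_eq, mul_apply_eq_comp, mul_apply_eq_comp W,
    star_apply_apply_of_isometry f.isometry, ← map_star conjOp,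
    conjOp_apply, star_basisVec]

lemma apply_zero (y : L2) : W y 0 = ⟪phaseOp p M.v, y⟫_ℂ := by
  rw [← f.star_apply_basisVec_zero, ContinuousLinearMap.star_eq_adjoint,
    ContinuousLinearMap.adjoint_inner_left, inner_basisVec_left]

section

variable {c : ℕ → ℂ} (h : IsHankelOp c Γ) (ht : IsHankelOp (shiftSeq c) Γt)

include h ht

lemma apply_succ (y : L2) (n : ℕ) : W y (n + 1) = W (M.transferOp p q y) n := by
  have on_range (z : L2) :
      W (ha.phasedDiag p z) (n + 1) = W (M.transferOp p q (ha.phasedDiag p z)) n := by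
    obtain ⟨x, rfl⟩ := surjective_star_of_isometry (conjOp_isometry f.isometry) z
    have shift := h.apply_succ ht x n
    rw [f.left_eq, f.right_eq, ← M.transferOp_mul_phasedDiag p q] at shift
    exact shift
  have coord (m : ℕ) : Continuous fun x : L2 => W x m := by
    simp only [← inner_basisVec_left]
    fun_prop
  exact congrFun ((ha.denseRange_phasedDiag p).equalizer (coord (n + 1))
    ((coord n).comp (M.transferOp p q).continuous) (funext on_range)) y

lemma apply_eq_inner (n : ℕ) (y : L2) :
    W y n = ⟪phaseOp p M.v, (M.transferOp p q ^ n) y⟫_ℂ := by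
  induction n generalizing y with
  | zero => exact f.apply_zero y
  | succ n ih => rw [f.apply_succ h ht, ih, pow_succ, mul_apply_eq_comp]

lemma eq_symbol : c = M.symbol p q := funext fun n => by
  have first_column := h.apply_basisVec 0 n
  rw [← f.map_diag_v, f.apply_eq_inner h ht, ← M.phasedDiag_apply_star_phaseOp_v p] at first_column
  exact first_column.symm

end

lemma phases_eq (f' : M.Factorization p' q' W' Γ Γt) : p = p' ∧ q = q' := by
  obtain rfl : W = W' := ha.eq_of_diagonalized_eq f.isometry f'.isometry
    (f.opT_left.symm.trans f'.opT_left) M.diag_v_apply_ne_zero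
    (f.map_diag_v.trans f'.map_diag_v.symm)
  have phasedRoot_eq : M.phasedRoot q = M.phasedRoot q' :=
    eq_of_isometry_mul_mul_eq f.isometry (f.right_eq.symm.trans f'.right_eq)
  refine ⟨ha.phasedDiag_injective
    (eq_of_isometry_mul_mul_eq f.isometry (f.left_eq.symm.trans f'.left_eq)),
    hb.phasedDiag_injective (eq_of_isometry_mul_mul_eq M.star_F_mul_F ?_)⟩
  rw [M.conjOp_F]
  exact phasedRoot_eq

end Factorization

lemma ofPhases_injective : Function.Injective M.ofPhases := fun t t' h => by
  obtain ⟨W, Γ, Γt, hankel, hankel_shift, f⟩ := M.exists_factorization_symbol t.1 t.2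
  obtain ⟨W', Γ', Γt', hankel', hankel_shift', f'⟩ := M.exists_factorization_symbol t'.1 t'.2
  have symbol_eq : M.symbol t.1 t.2 = M.symbol t'.1 t'.2 := congrArg Subtype.val h
  rw [← symbol_eq] at hankel' hankel_shift'
  obtain rfl := hankel.unique hankel'
  obtain rfl := hankel_shift.unique hankel_shift'
  exact Prod.ext_iff.2 (f.phases_eq f')

end SpectralModel

lemma inH12_shiftSeq {c : ℕ → ℂ} (hc : InH12 c) : InH12 (shiftSeq c) :=
  inH12_of_summable <| (((summable_nat_add_iff 1).2
    (hasSum_norm_sq_toL2 ⟨c, hc⟩).summable).of_nonneg_of_le (fun n => by positivity)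
      fun n => by
        rw [Nat.cast_succ, shiftSeq]
        gcongr
        simp)

/-- The isospectral condition on `c`: the positive singular values of the Hankel operator of `c` and
of its shift are the prescribed sequences, all simple. -/
def HasSVals (a b : ℕ → ℝ) (c : H12) : Prop :=
  ∃ Γ Γt : L2 →L[ℂ] L2, IsHankelOp c.1 Γ ∧ IsHankelOp (shiftSeq c.1) Γt ∧
    HasSimpleSValsSeq Γ a ∧ HasSimpleSValsSeq Γt b

namespace SpectralModel

variable {a b : ℕ → ℝ} {ha : SimpleSpectrum a} {hb : SimpleSpectrum b} (M : SpectralModel ha hb)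

lemma hasSVals_ofPhases (t : (ℕ → Circle) × (ℕ → Circle)) : HasSVals a b (M.ofPhases t) := by
  obtain ⟨W, Γ, Γt, hankel, hankel_shift, f⟩ := M.exists_factorization_symbol t.1 t.2
  exact ⟨Γ, Γt, hankel, hankel_shift, hasSimpleSValsSeq_of_diagonalized ha f.isometry f.opT_left,
    hasSimpleSValsSeq_of_diagonalized hb (isometry_mul f.isometry M.star_F_mul_F) f.opT_right⟩

lemma exists_ofPhases_eq {c : H12} (hc : HasSVals a b c) : ∃ t, M.ofPhases t = c := by
  obtain ⟨Γ, Γt, hankel, hankel_shift, svals, svals_shift⟩ := hc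
  obtain ⟨W₀, hW₀, left⟩ := exists_diagonalization ha
    ((hankel.isCompactOperator c.2).comp_clm _) svals
  obtain ⟨V, hV, right⟩ := exists_diagonalization hb
    ((hankel_shift.isCompactOperator (inH12_shiftSeq c.2)).comp_clm _) svals_shift
  obtain ⟨p, q, W, f⟩ := M.exists_factorization hankel hankel_shift hW₀ hV left right
  exact ⟨(p, q), Subtype.ext (f.eq_symbol hankel hankel_shift).symm⟩

/-- The spectral parametrization of the isospectral set by the phases `(p, q)`; the inverse map is
continuous because the space of phases is compact. -/
def phasesHomeomorph : (ℕ → Circle) × (ℕ → Circle) ≃ₜ {c : H12 // HasSVals a b c} :=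
  Continuous.homeoOfEquivCompactToT2
    (f := Equiv.ofBijective (fun t => ⟨M.ofPhases t, M.hasSVals_ofPhases t⟩)
      ⟨fun _ _ h => M.ofPhases_injective (congrArg Subtype.val h),
        fun c => (M.exists_ofPhases_eq c.2).imp fun _ h => Subtype.ext h⟩)
    (M.continuous_ofPhases.subtype_mk _)

end SpectralModel

/-- The identification of the space of phases with the torus, interleaving `p` and `q`. -/
def phasesHomeomorphTorus :
    (ℕ → Circle) × (ℕ → Circle) ≃ₜ (ℕ → AddCircle (2 * Real.pi)) :=
  (Homeomorph.sumArrowHomeomorphProdArrow.symm.trans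
    (Homeomorph.piCongrLeft (Y := fun _ => Circle) Equiv.natSumNatEquivNat)).trans
      (Homeomorph.piCongrRight fun _ => AddCircle.homeomorphCircle'.symm)

/-- Given `λ_1 > μ_1 > λ_2 > μ_2 > … > 0` with `Σ λ_j² < ∞`, the set of `c ∈ h^{1/2}` whose
Hankel operator `Γ_c` has simple positive singular values exactly the `λ_j` and whose shifted
Hankel operator `Γ̃_c` has simple positive singular values exactly the `μ_m`, endowed with
the `h^{1/2}` topology, is homeomorphic to the infinite-dimensional torus `𝕋^ℕ`. -/
theorem statement3 (lam mu : ℕ → ℝ)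
    (h1 : ∀ j : ℕ, mu j < lam j)
    (h2 : ∀ j : ℕ, lam (j + 1) < mu j)
    (h3 : ∀ j : ℕ, 0 < mu j)
    (hsum : Summable fun j : ℕ => lam j ^ 2) :
    Nonempty (
      {c : H12 // ∃ Γ Γt : L2 →L[ℂ] L2,
          IsHankelOp c.1 Γ ∧ IsHankelOp (shiftSeq c.1) Γt ∧
          HasSimpleSValsSeq Γ lam ∧ HasSimpleSValsSeq Γt mu}
        ≃ₜ (ℕ → AddCircle (2 * Real.pi))) := by
  have interlacing : Interlacing lam mu := ⟨h1, h2, h3⟩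
  obtain ⟨M⟩ := interlacing.nonempty_spectralModel hsum
  exact ⟨M.phasesHomeomorph.symm.trans phasesHomeomorphTorus⟩

end
end

section
/- Let N ≥ 1 and let c ∈ h^{1/2} be N-generic, with simple positive eigenvalues λ_1² > … > λ_N² of Γ_cΓ_c* and normalization constants ν_1, …, ν_N. Then Γ̃_cΓ̃_c* has exactly N positive eigenvalues, all simple, say μ_1² > … > μ_N²; these are precisely the N real solutions σ of the equation Σ_{j=1}^N λ_j²ν_j²/(λ_j² − σ) = 1, and they satisfy the strict interlacing λ_1² > μ_1² > λ_2² > μ_2² > … > λ_N² > μ_N² > 0. -/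
open scoped InnerProductSpace ComplexConjugate ENNReal

noncomputable section

/-- `c` is `N`-generic, witnessed by its Hankel operator `Γ`: `Γ` has rank `N`, `Γ Γ*` has `N`
simple positive eigenvalues `λ_1² > … > λ_N²`, the norms `ν_j` of the orthogonal projections
of `e₀` onto the corresponding (one-dimensional) eigenspaces are positive, and `Σ ν_j² < 1`.
(For a simple eigenvalue, the norm of the projection of `e₀` on the eigenspace equals
`|⟨v, e₀⟩|` for any unit eigenvector `v`.) -/
def NGenericData (Γ : L2 →L[ℂ] L2) (N : ℕ) (lam nu : Fin N → ℝ) : Prop :=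
  LinearMap.rank Γ.toLinearMap = N ∧
  (∀ j k : Fin N, j < k → lam k < lam j) ∧
  (∀ j : Fin N, 0 < lam j) ∧
  {z : ℂ | z ≠ 0 ∧ Module.End.HasEigenvalue (opT Γ).toLinearMap z}
    = Set.range (fun j : Fin N => ((lam j : ℂ)) ^ 2) ∧
  (∀ j : Fin N,
    Module.finrank ℂ (Module.End.eigenspace (opT Γ).toLinearMap ((lam j : ℂ) ^ 2)) = 1) ∧
  (∀ j : Fin N, ∃ v : L2, ‖v‖ = 1 ∧ (opT Γ) v = ((lam j : ℂ) ^ 2) • v ∧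
    nu j = ‖(⟪v, e0⟫_ℂ)‖) ∧
  (∀ j : Fin N, 0 < nu j) ∧
  (∑ j : Fin N, (nu j) ^ 2) < 1

/-!
Since `Γt` is `Γ` precomposed with the forward shift, `Γt Γt* = Γ Γ* - ⟪Γ e₀, ·⟫ Γ e₀` is a
rank-one perturbation of `Γ Γ*`. In an orthonormal basis `v_j` of eigenvectors of `Γ Γ*` on the
range of `Γ`, its nonzero eigenvalues `σ` are the solutions of the secular equation
`Σ |⟪v_j, Γ e₀⟫|² / (λ_j² - σ) = 1`, and the eigenvector is determined up to scaling. Complex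
conjugation intertwines `Γ` and `Γ*`, which together with the simplicity of `λ_j²` gives
`|⟪v_j, Γ e₀⟫|² = λ_j² ν_j²`. Between consecutive poles the secular function increases strictly from
`-∞` to `+∞`, and at `0` it equals `Σ ν_j² < 1`, so each pole `λ_j²` has exactly one root between
itself and the next lower pole, or between itself and `0` for the lowest pole.
-/

section Secular

open Set Filter Topology

variable {ι : Type*} [Fintype ι] {a β : ι → ℝ} {b t : ℝ}

/-- The secular function `σ ↦ ∑ β_j / (a_j - σ)` with poles `a_j` and residues `-β_j`. At a pole,
the corresponding summand takes the junk value `0`. -/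
def secular (a β : ι → ℝ) (σ : ℝ) : ℝ := ∑ j, β j / (a j - σ)

lemma secular_neg (a β : ι → ℝ) (σ : ℝ) : secular (-a) β (-σ) = -secular a β σ := by
  simp only [secular, ← Finset.sum_neg_distrib, ← div_neg, Pi.neg_apply]
  congr! 2
  ring

lemma continuousOn_secular {s : Set ℝ} (hs : ∀ j, a j ∉ s) : ContinuousOn (secular a β) s := by
  refine continuousOn_finsetSum _ fun j _ => continuousOn_const.div (by fun_prop) fun σ hσ => ?_
  exact sub_ne_zero.mpr fun h => hs j (h ▸ hσ)

lemma strictMonoOn_secular [Nonempty ι] (hβ : ∀ j, 0 < β j) {s : Set ℝ} (hs : s.OrdConnected)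
    (has : ∀ j, a j ∉ s) : StrictMonoOn (secular a β) s := by
  intro x hx y hy hxy
  refine Finset.sum_lt_sum_of_nonempty Finset.univ_nonempty fun j _ => ?_
  have same_side : 0 < (a j - x) * (a j - y) := by
    by_contra! h
    exact has j (hs.out hx hy ⟨by nlinarith, by nlinarith⟩)
  have hx0 : a j - x ≠ 0 := left_ne_zero_of_mul same_side.ne'
  have hy0 : a j - y ≠ 0 := right_ne_zero_of_mul same_side.ne'
  have hdiff : β j / (a j - y) - β j / (a j - x) = β j * (y - x) / ((a j - x) * (a j - y)) := by
    field_simp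
    ring
  exact sub_pos.mp (hdiff ▸ div_pos (mul_pos (hβ j) (sub_pos.mpr hxy)) same_side)

lemma tendsto_secular_nhdsLT (ha : a.Injective) {m : ι} (hβ : 0 < β m) :
    Tendsto (secular a β) (𝓝[<] a m) atTop := by
  classical
  have hsingular : Tendsto (fun σ => β m / (a m - σ)) (𝓝[<] a m) atTop := by
    have hsub : Tendsto (fun σ => a m - σ) (𝓝[<] a m) (𝓝[>] 0) := by
      refine tendsto_nhdsWithin_iff.mpr ⟨?_, ?_⟩
      · exact ((by fun_prop : Continuous fun σ => a m - σ).tendsto' _ _ (sub_self _)).mono_left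
          nhdsWithin_le_nhds
      · filter_upwards [self_mem_nhdsWithin] with σ hσ using sub_pos.mpr (mem_Iio.mp hσ)
    exact (hsub.inv_tendsto_nhdsGT_zero.const_mul_atTop hβ).congr fun σ => by
      rw [Pi.inv_apply, div_eq_mul_inv]
  have hregular : ContinuousAt (fun σ => ∑ j ∈ Finset.univ.erase m, β j / (a j - σ)) (a m) := by
    refine tendsto_finsetSum _ fun j hj => ContinuousAt.div continuousAt_const (by fun_prop) ?_
    exact sub_ne_zero.mpr (ha.ne (Finset.ne_of_mem_erase hj))
  refine (hsingular.atTop_add (hregular.tendsto.mono_left nhdsWithin_le_nhds)).congr fun σ => ?_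
  exact Finset.add_sum_erase _ (fun j => β j / (a j - σ)) (Finset.mem_univ m)

lemma tendsto_secular_nhdsGT (ha : a.Injective) {m : ι} (hβ : 0 < β m) :
    Tendsto (secular a β) (𝓝[>] a m) atBot := by
  have hreflect := (tendsto_secular_nhdsLT (neg_injective.comp ha) hβ).comp
    (tendsto_neg_nhdsGT (a := a m))
  exact tendsto_neg_atTop_iff.mp (hreflect.congr fun σ => secular_neg a β σ)

lemma exists_secular_eq_of_gap (ha : a.Injective) {m : ι} (hβ : 0 < β m) (hbm : b < a m)
    (hgap : ∀ k, a k < a m → a k < b) (hbt : secular a β b < t) :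
    ∃ σ ∈ Ioo b (a m), secular a β σ = t := by
  obtain ⟨x, htx, hbx, hxm⟩ : ∃ x, t < secular a β x ∧ b < x ∧ x < a m :=
    ((tendsto_secular_nhdsLT ha hβ).eventually_gt_atTop t |>.and (Ioo_mem_nhdsLT hbm)).exists
  have hcont : ContinuousOn (secular a β) (Icc b x) :=
    continuousOn_secular fun j hj => (hgap j (hj.2.trans_lt hxm)).not_ge hj.1
  obtain ⟨σ, hσ, rfl⟩ := intermediate_value_Ioo hbx.le hcont ⟨hbt, htx⟩
  exact ⟨σ, ⟨hσ.1, hσ.2.trans hxm⟩, rfl⟩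

lemma exists_secular_eq_below_pole (ha : a.Injective) (hβ : ∀ j, 0 < β j) {m : ι} (hbm : b < a m)
    (hbt : secular a β b < t) :
    ∃ σ, b < σ ∧ σ < a m ∧ (∀ k, a k < a m → a k < σ) ∧ secular a β σ = t := by
  suffices ∃ y, b ≤ y ∧ y < a m ∧ (∀ k, a k < a m → a k < y) ∧ secular a β y < t by
    obtain ⟨y, hby, hym, hgap, hyt⟩ := this
    obtain ⟨σ, ⟨hyσ, hσm⟩, hσ⟩ := exists_secular_eq_of_gap ha (hβ m) hym hgap hyt
    exact ⟨σ, hby.trans_lt hyσ, hσm, fun k hk => (hgap k hk).trans hyσ, hσ⟩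
  by_cases hpole : ∃ k, b ≤ a k ∧ a k < a m
  · obtain ⟨k, ⟨hbk, hkm⟩, hmax⟩ :=
      {k | b ≤ a k ∧ a k < a m}.toFinite.exists_maximalFor a _ hpole
    obtain ⟨y, hyt, hky, hym⟩ : ∃ y, secular a β y < t ∧ a k < y ∧ y < a m :=
      ((tendsto_secular_nhdsGT ha (hβ k)).eventually_lt_atBot t |>.and (Ioo_mem_nhdsGT hkm)).exists
    refine ⟨y, hbk.trans hky.le, hym, fun l hlm => ?_, hyt⟩
    by_contra! hyl
    have hkl : a k < a l := hky.trans_le hyl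
    exact hkl.not_ge (hmax ⟨hbk.trans hkl.le, hlm⟩ hkl.le)
  · push Not at hpole
    exact ⟨b, le_rfl, hbm, fun k hkm => not_le.mp fun hbk => (hpole k hbk).not_gt hkm, hbt⟩

lemma exists_pole_gt_of_secular_pos (hβ : ∀ j, 0 ≤ β j) {σ : ℝ} (hσ : 0 < secular a β σ) :
    ∃ m, σ < a m := by
  by_contra! h
  exact hσ.not_ge (Finset.sum_nonpos fun j _ =>
    div_nonpos_of_nonneg_of_nonpos (hβ j) (sub_nonpos.mpr (h j)))

theorem exists_interlacing_secular_roots (ha : a.Injective) (hβ : ∀ j, 0 < β j)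
    (hba : ∀ j, b < a j) (hbt : secular a β b < t) (ht : 0 < t) :
    ∃ r : ι → ℝ, (∀ m, b < r m) ∧ (∀ m, r m < a m) ∧ (∀ m k, a k < a m → a k < r m) ∧
      ∀ σ, ((∀ j, σ ≠ a j) ∧ secular a β σ = t) ↔ σ ∈ range r := by
  choose r hbr hra hgap hr using fun m => exists_secular_eq_below_pole ha hβ (hba m) hbt
  refine ⟨r, hbr, hra, hgap, fun σ => ⟨fun ⟨hσa, hσ⟩ => ?_, ?_⟩⟩
  · obtain ⟨m, hσm, hmin⟩ := {m | σ < a m}.toFinite.exists_minimalFor a _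
      (exists_pole_gt_of_secular_pos (fun j => (hβ j).le) (hσ ▸ ht))
    have : Nonempty ι := ⟨m⟩
    have hno_pole : ∀ j, a j ∉ uIcc (r m) σ := by
      intro j hj
      rcases lt_or_ge (a j) (a m) with hjm | hmj
      · have hjσ : a j < σ := (not_lt.mp fun h => hjm.not_ge (hmin h hjm.le)).lt_of_ne' (hσa j)
        exact (lt_min (hgap m j hjm) hjσ).not_ge hj.1
      · exact ((max_lt (hra m) hσm).trans_le hmj).not_ge hj.2
    exact ⟨m, (strictMonoOn_secular hβ ordConnected_uIcc hno_pole).injOn left_mem_uIcc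
      right_mem_uIcc ((hr m).trans hσ.symm)⟩
  · rintro ⟨m, rfl⟩
    refine ⟨fun j => ?_, hr m⟩
    rcases lt_or_ge (a j) (a m) with hjm | hmj
    · exact (hgap m j hjm).ne'
    · exact ((hra m).trans_le hmj).ne

end Secular

section RankOnePerturbation

open InnerProductSpace Module Submodule

variable {𝕜 E ι : Type*} [RCLike 𝕜] [NormedAddCommGroup E] [InnerProductSpace 𝕜 E]
  {T : End 𝕜 E} {v : ι → E} {a : ι → ℝ} {c x : E} {σ : ℝ}

lemma orthonormal_of_apply_eq_smul (hT : T.IsSymmetric) (ha : a.Injective)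
    (hnorm : ∀ j, ‖v j‖ = 1) (hTv : ∀ j, T (v j) = (a j : 𝕜) • v j) : Orthonormal 𝕜 v :=
  ⟨hnorm, fun j k hjk => hT.orthogonalFamily_eigenspaces
    ((RCLike.ofReal_injective.comp ha).ne hjk)
    ⟨v j, End.mem_eigenspace_iff.mpr (hTv j)⟩ ⟨v k, End.mem_eigenspace_iff.mpr (hTv k)⟩⟩

lemma inner_eigenvector_of_sub_rankOne (hT : T.IsSymmetric) {j : ι}
    (hTv : T (v j) = (a j : 𝕜) • v j) (hx : (T - rankOne 𝕜 c c) x = (σ : 𝕜) • x) :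
    ((a j - σ : ℝ) : 𝕜) * ⟪v j, x⟫_𝕜 = ⟪c, x⟫_𝕜 * ⟪v j, c⟫_𝕜 := by
  have hTx : ⟪v j, T x⟫_𝕜 = a j * ⟪v j, x⟫_𝕜 := by
    rw [← hT, hTv, inner_smul_left, RCLike.conj_ofReal]
  have hinner := congrArg (inner 𝕜 (v j)) hx
  simp only [LinearMap.sub_apply, ContinuousLinearMap.coe_coe, rankOne_apply, inner_sub_right,
    inner_smul_right, hTx] at hinner
  push_cast
  linear_combination hinner

lemma mem_of_sub_rankOne_apply_eq_smul {S : Submodule 𝕜 E} (hrange : T.range ≤ S) (hc : c ∈ S)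
    (hσ : σ ≠ 0) (hx : (T - rankOne 𝕜 c c) x = (σ : 𝕜) • x) : x ∈ S := by
  rw [← S.smul_mem_iff (RCLike.ofReal_ne_zero.mpr hσ : (σ : 𝕜) ≠ 0), ← hx]
  exact S.sub_mem (hrange ⟨x, rfl⟩) (S.smul_mem _ hc)

lemma sum_inner_smul_eq_of_mem_span [Fintype ι] (hv : Orthonormal 𝕜 v)
    (hx : x ∈ span 𝕜 (Set.range v)) :
    ∑ j, ⟪v j, x⟫_𝕜 • v j = x := by
  obtain ⟨l, rfl⟩ := (mem_span_range_iff_exists_fun 𝕜).mp hx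
  simp only [hv.inner_right_fintype]

lemma eigenvalue_sub_rankOne_ne [Finite ι] (hT : T.IsSymmetric) (ha : a.Injective)
    (hv : Orthonormal 𝕜 v) (hTv : ∀ j, T (v j) = (a j : 𝕜) • v j) (hcv : ∀ j, ⟪v j, c⟫_𝕜 ≠ 0)
    (hxv : x ∈ span 𝕜 (Set.range v)) (hx0 : x ≠ 0)
    (hx : (T - rankOne 𝕜 c c) x = (σ : 𝕜) • x) (j : ι) : σ ≠ a j := by
  have := Fintype.ofFinite ι
  rintro rfl
  have hcoord k := inner_eigenvector_of_sub_rankOne hT (hTv k) hx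
  have hcx : ⟪c, x⟫_𝕜 = 0 := by simpa [hcv j] using hcoord j
  have hother : ∀ k ≠ j, ⟪v k, x⟫_𝕜 = 0 := fun k hkj => by
    simpa [hcx, sub_eq_zero, ha.ne hkj] using hcoord k
  have hxj : ⟪v j, x⟫_𝕜 • v j = x := by
    rw [← Fintype.sum_eq_single (f := fun k => ⟪v k, x⟫_𝕜 • v k) j
      fun k hkj => by rw [hother k hkj, zero_smul]]
    exact sum_inner_smul_eq_of_mem_span hv hxv
  rw [← hxj, inner_smul_right, mul_eq_zero, inner_eq_zero_symm (x := c)] at hcx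
  exact hx0 (by rw [← hxj, hcx.resolve_right (hcv j), zero_smul])

variable [Fintype ι]

variable (𝕜) in
/-- The vector `∑ ⟪v_j, c⟫ / (a_j - σ) • v_j`. When `v` is an orthonormal family of eigenvectors of
`T` with eigenvalues `a` and `c` lies in its span, this is `(T - σ)⁻¹ c`, and it is the only
candidate, up to scaling, for an eigenvector of `T - ⟪c, ·⟫ c` with eigenvalue `σ`. -/
def secularVec (v : ι → E) (a : ι → ℝ) (c : E) (σ : ℝ) : E :=
  ∑ j, (⟪v j, c⟫_𝕜 / ((a j - σ : ℝ) : 𝕜)) • v j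

lemma inner_secularVec :
    ⟪c, secularVec 𝕜 v a c σ⟫_𝕜 = secular a (fun j => ‖⟪v j, c⟫_𝕜‖ ^ 2) σ := by
  simp only [secularVec, secular, inner_sum, inner_smul_right, RCLike.ofReal_sum,
    RCLike.ofReal_div, RCLike.ofReal_pow]
  refine Finset.sum_congr rfl fun j _ => ?_
  rw [div_mul_eq_mul_div, ← inner_conj_symm c (v j), RCLike.mul_conj]

lemma apply_secularVec_sub_smul (hv : Orthonormal 𝕜 v) (hTv : ∀ j, T (v j) = (a j : 𝕜) • v j)
    (hc : c ∈ span 𝕜 (Set.range v)) (hσ : ∀ j, σ ≠ a j) :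
    T (secularVec 𝕜 v a c σ) - (σ : 𝕜) • secularVec 𝕜 v a c σ = c := by
  conv_rhs => rw [← sum_inner_smul_eq_of_mem_span hv hc]
  simp only [secularVec, map_sum, map_smul, hTv, Finset.smul_sum, smul_smul,
    ← Finset.sum_sub_distrib, ← sub_smul]
  refine Finset.sum_congr rfl fun j _ => congrArg (· • v j) ?_
  have hne : ((a j - σ : ℝ) : 𝕜) ≠ 0 := RCLike.ofReal_ne_zero.mpr (sub_ne_zero.mpr (hσ j).symm)
  field_simp
  push_cast
  ring

lemma eq_smul_secularVec (hT : T.IsSymmetric) (hv : Orthonormal 𝕜 v)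
    (hTv : ∀ j, T (v j) = (a j : 𝕜) • v j) (hσ : ∀ j, σ ≠ a j)
    (hxv : x ∈ span 𝕜 (Set.range v)) (hx : (T - rankOne 𝕜 c c) x = (σ : 𝕜) • x) :
    x = ⟪c, x⟫_𝕜 • secularVec 𝕜 v a c σ := by
  conv_lhs => rw [← sum_inner_smul_eq_of_mem_span hv hxv]
  rw [secularVec, Finset.smul_sum]
  refine Finset.sum_congr rfl fun j _ => ?_
  have hne : ((a j - σ : ℝ) : 𝕜) ≠ 0 := RCLike.ofReal_ne_zero.mpr (sub_ne_zero.mpr (hσ j).symm)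
  rw [smul_smul, mul_div_assoc', ← inner_eigenvector_of_sub_rankOne hT (hTv j) hx,
    mul_div_cancel_left₀ _ hne]

lemma sub_rankOne_apply_secularVec (hv : Orthonormal 𝕜 v)
    (hTv : ∀ j, T (v j) = (a j : 𝕜) • v j) (hc : c ∈ span 𝕜 (Set.range v)) (hσ : ∀ j, σ ≠ a j)
    (hsec : secular a (fun j => ‖⟪v j, c⟫_𝕜‖ ^ 2) σ = 1) :
    (T - rankOne 𝕜 c c) (secularVec 𝕜 v a c σ) = (σ : 𝕜) • secularVec 𝕜 v a c σ := by
  rw [LinearMap.sub_apply, ContinuousLinearMap.coe_coe, rankOne_apply, inner_secularVec, hsec,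
    RCLike.ofReal_one, one_smul, sub_eq_iff_eq_add, ← sub_eq_iff_eq_add',
    apply_secularVec_sub_smul hv hTv hc hσ]

lemma secularVec_ne_zero (hsec : secular a (fun j => ‖⟪v j, c⟫_𝕜‖ ^ 2) σ = 1) :
    secularVec 𝕜 v a c σ ≠ 0 := by
  intro h
  have hinner := inner_secularVec (𝕜 := 𝕜) (v := v) (a := a) (c := c) (σ := σ)
  simp [h, hsec] at hinner

theorem hasEigenvalue_sub_rankOne_iff (hT : T.IsSymmetric) (ha : a.Injective)
    (hv : Orthonormal 𝕜 v) (hTv : ∀ j, T (v j) = (a j : 𝕜) • v j)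
    (hrange : T.range ≤ span 𝕜 (Set.range v)) (hc : c ∈ span 𝕜 (Set.range v))
    (hcv : ∀ j, ⟪v j, c⟫_𝕜 ≠ 0) (hσ : σ ≠ 0) :
    End.HasEigenvalue (T - (rankOne 𝕜 c c).toLinearMap) (σ : 𝕜) ↔
      (∀ j, σ ≠ a j) ∧ secular a (fun j => ‖⟪v j, c⟫_𝕜‖ ^ 2) σ = 1 := by
  constructor
  · intro hev
    obtain ⟨x, hmem, hx0⟩ := hev.exists_hasEigenvector
    have hx := End.mem_eigenspace_iff.mp hmem
    have hxv := mem_of_sub_rankOne_apply_eq_smul hrange hc hσ hx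
    have hpole := eigenvalue_sub_rankOne_ne hT ha hv hTv hcv hxv hx0 hx
    have hxw := eq_smul_secularVec hT hv hTv hpole hxv hx
    have hcx : ⟪c, x⟫_𝕜 ≠ 0 := fun h => hx0 (by rw [hxw, h, zero_smul])
    have hfix := congrArg (inner 𝕜 c) hxw
    rw [inner_smul_right, inner_secularVec, eq_comm, mul_eq_left₀ hcx] at hfix
    exact ⟨hpole, by exact_mod_cast hfix⟩
  · rintro ⟨hpole, hsec⟩
    exact End.hasEigenvalue_of_hasEigenvector ⟨End.mem_eigenspace_iff.mpr
      (sub_rankOne_apply_secularVec hv hTv hc hpole hsec), secularVec_ne_zero hsec⟩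

theorem finrank_eigenspace_sub_rankOne (hT : T.IsSymmetric)
    (hv : Orthonormal 𝕜 v) (hTv : ∀ j, T (v j) = (a j : 𝕜) • v j)
    (hrange : T.range ≤ span 𝕜 (Set.range v)) (hc : c ∈ span 𝕜 (Set.range v))
    (hσ : σ ≠ 0) (hpole : ∀ j, σ ≠ a j) (hsec : secular a (fun j => ‖⟪v j, c⟫_𝕜‖ ^ 2) σ = 1) :
    finrank 𝕜 (End.eigenspace (T - (rankOne 𝕜 c c).toLinearMap) (σ : 𝕜)) = 1 := by
  suffices End.eigenspace (T - (rankOne 𝕜 c c).toLinearMap) (σ : 𝕜) = 𝕜 ∙ secularVec 𝕜 v a c σ by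
    rw [this, finrank_span_singleton (secularVec_ne_zero hsec)]
  refine le_antisymm (fun x hmem => mem_span_singleton.mpr ?_) ?_
  · have hx := End.mem_eigenspace_iff.mp hmem
    have hxv := mem_of_sub_rankOne_apply_eq_smul hrange hc hσ hx
    exact ⟨⟪c, x⟫_𝕜, (eq_smul_secularVec hT hv hTv hpole hxv hx).symm⟩
  · rw [span_singleton_le_iff_mem, End.mem_eigenspace_iff]
    exact sub_rankOne_apply_secularVec hv hTv hc hpole hsec

end RankOnePerturbation

lemma span_range_eq_range_of_rank_eq {K V W ι : Type*} [DivisionRing K] [AddCommGroup V]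
    [Module K V] [AddCommGroup W] [Module K W] [Fintype ι] {f : V →ₗ[K] W} {v : ι → W}
    (hf : f.rank = Fintype.card ι) (hv : LinearIndependent K v) (hmem : ∀ j, v j ∈ f.range) :
    Submodule.span K (Set.range v) = f.range := by
  have : FiniteDimensional K f.range :=
    Module.rank_lt_aleph0_iff.mp (hf.trans_lt Cardinal.natCast_lt_aleph0)
  refine Submodule.eq_of_le_of_finrank_eq (Submodule.span_le.mpr (Set.range_subset_iff.mpr hmem)) ?_
  rw [finrank_span_eq_card hv, Module.finrank_eq_of_rank_eq hf]

lemma inner_lp_single_one (n : ℕ) (x : L2) : ⟪(lp.single 2 n 1 : L2), x⟫_ℂ = x n := by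
  simp [lp.inner_single_left]

lemma adjoint_apply_coord (Γ : L2 →L[ℂ] L2) (x : L2) (n : ℕ) :
    (ContinuousLinearMap.adjoint Γ x : L2) n = ⟪Γ (lp.single 2 n 1), x⟫_ℂ := by
  rw [← inner_lp_single_one, ContinuousLinearMap.adjoint_inner_right]

lemma opT_isSymmetric (Γ : L2 →L[ℂ] L2) : (opT Γ).toLinearMap.IsSymmetric :=
  (ContinuousLinearMap.isPositive_self_comp_adjoint Γ).isSymmetric

namespace IsHankelOp

variable {c : ℕ → ℂ} {Γ Γt : L2 →L[ℂ] L2}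

lemma apply_single (hΓ : IsHankelOp c Γ) (n k : ℕ) : (Γ (lp.single 2 n 1) : L2) k = c (k + n) := by
  rw [hΓ, tsum_eq_single n fun p hp => by rw [lp.single_apply_ne _ _ _ hp, mul_zero],
    lp.single_apply_self, mul_one]

lemma hasSum_inner_apply_single (hΓ : IsHankelOp c Γ) (n : ℕ) (x : L2) :
    HasSum (fun p => conj (c (n + p)) * x p) ⟪Γ (lp.single 2 n 1), x⟫_ℂ := by
  refine (lp.hasSum_inner (𝕜 := ℂ) (Γ (lp.single 2 n 1)) x).congr_fun fun p => ?_
  rw [hΓ.apply_single, RCLike.inner_apply', add_comm]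

/-- The matrix `(c_{n+p})` is symmetric, so complex conjugation intertwines `Γ` and `Γ*`. -/
lemma adjoint_apply (hΓ : IsHankelOp c Γ) (x : L2) :
    ContinuousLinearMap.adjoint Γ x = star (Γ (star x)) := by
  ext n
  rw [adjoint_apply_coord, lp.star_apply, hΓ, tsum_star,
    ← (hΓ.hasSum_inner_apply_single n x).tsum_eq]
  simp

lemma summable (hΓ : IsHankelOp c Γ) (n : ℕ) (x : L2) : Summable fun p => c (n + p) * x p := by
  simpa using (hΓ.hasSum_inner_apply_single n (star x)).summable.star

lemma shift_apply_single (hΓ : IsHankelOp c Γ) (hΓt : IsHankelOp (shiftSeq c) Γt) (n : ℕ) :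
    Γt (lp.single 2 n 1) = Γ (lp.single 2 (n + 1) 1) := by
  ext k
  rw [hΓt.apply_single, hΓ.apply_single, shiftSeq, add_assoc]

lemma apply_eq_head_add_tail (hΓ : IsHankelOp c Γ) (hΓt : IsHankelOp (shiftSeq c) Γt) {x y : L2}
    (hxy : ∀ n, y n = x (n + 1)) : Γ x = x 0 • Γ e0 + Γt y := by
  ext n
  rw [lp.coeFn_add, Pi.add_apply, lp.coeFn_smul, Pi.smul_apply, hΓ, hΓt,
    (hΓ.summable n x).tsum_eq_zero_add, e0, hΓ.apply_single, smul_eq_mul, mul_comm]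
  simp only [shiftSeq, hxy, add_assoc]

theorem opT_shift (hΓ : IsHankelOp c Γ) (hΓt : IsHankelOp (shiftSeq c) Γt) :
    opT Γt = opT Γ - InnerProductSpace.rankOne ℂ (Γ e0) (Γ e0) := by
  ext1 x
  have hadj n : (ContinuousLinearMap.adjoint Γt x : L2) n =
      (ContinuousLinearMap.adjoint Γ x : L2) (n + 1) := by
    rw [adjoint_apply_coord, adjoint_apply_coord, hΓ.shift_apply_single hΓt]
  have hsplit := hΓ.apply_eq_head_add_tail hΓt hadj
  rw [adjoint_apply_coord] at hsplit
  exact eq_sub_of_add_eq' hsplit.symm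

lemma opT_apply (hΓ : IsHankelOp c Γ) (x : L2) : opT Γ x = Γ (star (Γ (star x))) :=
  congrArg Γ (hΓ.adjoint_apply x)

lemma opT_apply_apply_star (hΓ : IsHankelOp c Γ) {s : ℝ} {v : L2}
    (hv : opT Γ v = (s : ℂ) • v) : opT Γ (Γ (star v)) = (s : ℂ) • Γ (star v) := by
  rw [hΓ.opT_apply (Γ (star v)), ← hΓ.opT_apply v, hv, star_smul, map_smul]
  simp

lemma norm_apply_star_sq (hΓ : IsHankelOp c Γ) {s : ℝ} {v : L2}
    (hv : opT Γ v = (s : ℂ) • v) : ‖Γ (star v)‖ ^ 2 = s * ‖v‖ ^ 2 := by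
  have hinner := ContinuousLinearMap.apply_norm_sq_eq_inner_adjoint_right
    (ContinuousLinearMap.adjoint Γ) v
  rw [ContinuousLinearMap.adjoint_adjoint, hΓ.adjoint_apply, norm_star] at hinner
  change _ = RCLike.re ⟪v, opT Γ v⟫_ℂ at hinner
  rw [hinner, hv, inner_smul_right, RCLike.re_eq_complex_re, Complex.re_ofReal_mul,
    ← RCLike.re_eq_complex_re, inner_self_eq_norm_sq]

/-- On a simple eigenspace the antilinear map `v ↦ Γ (star v)`, whose square is `Γ Γ*`, acts as
`v ↦ α • v` with `|α|² = s`. -/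
theorem norm_inner_apply_e0_sq (hΓ : IsHankelOp c Γ) {s : ℝ} {v : L2}
    (hv : opT Γ v = (s : ℂ) • v)
    (hsimple : Module.finrank ℂ (Module.End.eigenspace (opT Γ).toLinearMap (s : ℂ)) = 1) :
    ‖⟪v, Γ e0⟫_ℂ‖ ^ 2 = s * ‖⟪v, e0⟫_ℂ‖ ^ 2 := by
  rcases eq_or_ne v 0 with rfl | hv0
  · simp
  obtain ⟨α, hα⟩ : ∃ α : ℂ, α • v = Γ (star v) := by
    have hmem : v ∈ Module.End.eigenspace (opT Γ).toLinearMap (s : ℂ) :=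
      Module.End.mem_eigenspace_iff.mpr hv
    obtain ⟨α, hα⟩ := (finrank_eq_one_iff_of_nonzero' ⟨v, hmem⟩ (Subtype.coe_ne_coe.mp hv0)).mp
      hsimple ⟨Γ (star v), Module.End.mem_eigenspace_iff.mpr (hΓ.opT_apply_apply_star hv)⟩
    exact ⟨α, congrArg Subtype.val hα⟩
  have hα_norm : ‖α‖ ^ 2 = s := by
    have hnorm := hΓ.norm_apply_star_sq hv
    rwa [← hα, norm_smul, mul_pow, mul_left_inj' (by simpa using hv0)] at hnorm
  have hΓe0 : ‖⟪v, Γ e0⟫_ℂ‖ = ‖Γ (star v) 0‖ := by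
    rw [← ContinuousLinearMap.adjoint_inner_left, norm_inner_symm, e0, inner_lp_single_one,
      hΓ.adjoint_apply, lp.star_apply, norm_star]
  have he0 : ‖⟪v, e0⟫_ℂ‖ = ‖v 0‖ := by rw [norm_inner_symm, e0, inner_lp_single_one]
  rw [hΓe0, he0, ← hα, lp.coeFn_smul, Pi.smul_apply, norm_smul, mul_pow, hα_norm]

end IsHankelOp

namespace NGenericData

variable {c : ℕ → ℂ} {Γ Γt : L2 →L[ℂ] L2} {N : ℕ} {lam nu : Fin N → ℝ} {σ : ℝ}

lemma lam_sq_strictAnti (h : NGenericData Γ N lam nu) : StrictAnti fun j => lam j ^ 2 :=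
  fun j k hjk => pow_lt_pow_left₀ (h.2.1 j k hjk) (h.2.2.1 k).le two_ne_zero

lemma lam_sq_pos (h : NGenericData Γ N lam nu) (j : Fin N) : 0 < lam j ^ 2 :=
  pow_pos (h.2.2.1 j) 2

lemma residue_pos (h : NGenericData Γ N lam nu) (j : Fin N) : 0 < lam j ^ 2 * nu j ^ 2 := by
  obtain ⟨-, -, -, -, -, -, hnu, -⟩ := id h
  exact mul_pos (h.lam_sq_pos j) (pow_pos (hnu j) 2)

lemma secular_zero_lt_one (h : NGenericData Γ N lam nu) :
    secular (fun j => lam j ^ 2) (fun j => lam j ^ 2 * nu j ^ 2) 0 < 1 := by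
  obtain ⟨-, -, -, -, -, -, -, hsum⟩ := id h
  simpa only [secular, sub_zero, mul_div_cancel_left₀ _ (h.lam_sq_pos _).ne'] using hsum

lemma exists_orthonormal_eigenvectors (h : NGenericData Γ N lam nu) (hΓ : IsHankelOp c Γ) :
    ∃ v : Fin N → L2, Orthonormal ℂ v ∧ (∀ j, opT Γ (v j) = ((lam j ^ 2 : ℝ) : ℂ) • v j) ∧
      Submodule.span ℂ (Set.range v) = Γ.toLinearMap.range ∧
      ∀ j, ‖⟪v j, Γ e0⟫_ℂ‖ ^ 2 = lam j ^ 2 * nu j ^ 2 := by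
  obtain ⟨hrank, -, -, -, hsimple, hvec, -⟩ := id h
  choose v hnorm hTv hnu using hvec
  simp only [← Complex.ofReal_pow] at hTv
  have hv : Orthonormal ℂ v := orthonormal_of_apply_eq_smul (opT_isSymmetric Γ)
    h.lam_sq_strictAnti.injective hnorm hTv
  have hmem j : v j ∈ Γ.toLinearMap.range := by
    have hne : ((lam j ^ 2 : ℝ) : ℂ) ≠ 0 := Complex.ofReal_ne_zero.mpr (h.lam_sq_pos j).ne'
    exact (Submodule.smul_mem_iff _ hne).mp ⟨ContinuousLinearMap.adjoint Γ (v j), hTv j⟩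
  refine ⟨v, hv, hTv, span_range_eq_range_of_rank_eq (by simpa using hrank)
    hv.linearIndependent hmem, fun j => ?_⟩
  have hfinrank := hsimple j
  rw [← Complex.ofReal_pow] at hfinrank
  rw [hΓ.norm_inner_apply_e0_sq (hTv j) hfinrank, ← hnu j]

theorem hasEigenvalue_shift_iff (h : NGenericData Γ N lam nu) (hΓ : IsHankelOp c Γ)
    (hΓt : IsHankelOp (shiftSeq c) Γt) (hσ : σ ≠ 0) :
    Module.End.HasEigenvalue (opT Γt).toLinearMap (σ : ℂ) ↔ (∀ j, σ ≠ lam j ^ 2) ∧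
      secular (fun j => lam j ^ 2) (fun j => lam j ^ 2 * nu j ^ 2) σ = 1 := by
  obtain ⟨v, hv, hTv, hspan, hcoeff⟩ := h.exists_orthonormal_eigenvectors hΓ
  have hcv j : ⟪v j, Γ e0⟫_ℂ ≠ 0 := fun h0 => by
    simpa [h0] using (h.residue_pos j).trans_eq (hcoeff j).symm
  simp only [hΓ.opT_shift hΓt, ← hcoeff]
  exact hasEigenvalue_sub_rankOne_iff (opT_isSymmetric Γ) h.lam_sq_strictAnti.injective hv hTv
    (hspan ▸ LinearMap.range_comp_le_range _ _) (hspan ▸ ⟨e0, rfl⟩) hcv hσ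

theorem finrank_eigenspace_shift (h : NGenericData Γ N lam nu) (hΓ : IsHankelOp c Γ)
    (hΓt : IsHankelOp (shiftSeq c) Γt) (hσ : σ ≠ 0) (hpole : ∀ j, σ ≠ lam j ^ 2)
    (hsec : secular (fun j => lam j ^ 2) (fun j => lam j ^ 2 * nu j ^ 2) σ = 1) :
    Module.finrank ℂ (Module.End.eigenspace (opT Γt).toLinearMap (σ : ℂ)) = 1 := by
  obtain ⟨v, hv, hTv, hspan, hcoeff⟩ := h.exists_orthonormal_eigenvectors hΓ
  simp only [← hcoeff] at hsec
  rw [hΓ.opT_shift hΓt]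
  exact finrank_eigenspace_sub_rankOne (opT_isSymmetric Γ) hv hTv
    (hspan ▸ LinearMap.range_comp_le_range _ _) (hspan ▸ ⟨e0, rfl⟩) hσ hpole hsec

end NGenericData

lemma exists_ofReal_eq_of_hasEigenvalue_opT {Γ : L2 →L[ℂ] L2} {z : ℂ}
    (hz : Module.End.HasEigenvalue (opT Γ).toLinearMap z) : ∃ σ : ℝ, z = σ :=
  Complex.conj_eq_iff_real.mp ((opT_isSymmetric Γ).conj_eigenvalue_eq_self hz)

/-- For `N`-generic `c`, the operator `Γ̃_c Γ̃_c*` has exactly `N` positive eigenvalues, all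
simple, say `μ_1² > … > μ_N²`; they are precisely the real solutions `σ` of
`Σ_j λ_j² ν_j²/(λ_j² - σ) = 1` and they strictly interlace: `λ_1² > μ_1² > λ_2² > … > μ_N² > 0`. -/
theorem statement9 (N : ℕ) (hN : 1 ≤ N) (c : ℕ → ℂ) (hc : InH12 c)
    (Γ Γt : L2 →L[ℂ] L2) (hΓ : IsHankelOp c Γ) (hΓt : IsHankelOp (shiftSeq c) Γt)
    (lam nu : Fin N → ℝ) (hgen : NGenericData Γ N lam nu) :
    ∃ mu : Fin N → ℝ,
      (∀ j : Fin N, 0 < mu j) ∧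
      (∀ j : Fin N, mu j ^ 2 < lam j ^ 2) ∧
      (∀ j k : Fin N, (j : ℕ) + 1 = (k : ℕ) → lam k ^ 2 < mu j ^ 2) ∧
      {z : ℂ | z ≠ 0 ∧ Module.End.HasEigenvalue (opT Γt).toLinearMap z}
        = Set.range (fun m : Fin N => ((mu m : ℂ)) ^ 2) ∧
      (∀ m : Fin N,
        Module.finrank ℂ
          (Module.End.eigenspace (opT Γt).toLinearMap ((mu m : ℂ) ^ 2)) = 1) ∧
      (∀ σ : ℝ, (∀ j : Fin N, σ ≠ lam j ^ 2) →
        ((∑ j : Fin N, lam j ^ 2 * nu j ^ 2 / (lam j ^ 2 - σ)) = 1 ↔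
          ∃ m : Fin N, σ = mu m ^ 2)) := by
  obtain ⟨r, hr0, hra, hgap, hr⟩ := exists_interlacing_secular_roots
    hgen.lam_sq_strictAnti.injective hgen.residue_pos hgen.lam_sq_pos hgen.secular_zero_lt_one
    one_pos
  have hsqrt m : √(r m) ^ 2 = r m := Real.sq_sqrt (hr0 m).le
  refine ⟨fun m => √(r m), fun m => Real.sqrt_pos.mpr (hr0 m), ?_⟩
  simp only [← Complex.ofReal_pow, hsqrt]
  refine ⟨hra, fun j k hjk => hgap j k (hgen.lam_sq_strictAnti (Fin.lt_def.mpr (by omega))), ?_,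
    fun m => ?_, fun σ hσ => ?_⟩
  · ext z
    constructor
    · rintro ⟨hz, hev⟩
      obtain ⟨σ, rfl⟩ := exists_ofReal_eq_of_hasEigenvalue_opT hev
      obtain ⟨m, rfl⟩ := (hr σ).mp
        ((hgen.hasEigenvalue_shift_iff hΓ hΓt (Complex.ofReal_ne_zero.mp hz)).mp hev)
      exact ⟨m, rfl⟩
    · rintro ⟨m, rfl⟩
      exact ⟨Complex.ofReal_ne_zero.mpr (hr0 m).ne',
        (hgen.hasEigenvalue_shift_iff hΓ hΓt (hr0 m).ne').mpr ((hr _).mpr ⟨m, rfl⟩)⟩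
  · beta_reduce
    rw [← Complex.ofReal_pow, hsqrt]
    obtain ⟨hpole, hsec⟩ := (hr (r m)).mpr ⟨m, rfl⟩
    exact hgen.finrank_eigenspace_shift hΓ hΓt (hr0 m).ne' hpole hsec
  · simpa only [and_iff_right hσ, secular, Set.mem_range, eq_comm (b := σ)] using hr σ

end
end
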